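/- Let q ≥ 4 be a power of 2. Then every irreducible complex character χ of SU_3(q) of even degree whose character field ℚ(χ) is not contained in ℝ has degree χ(1) = q(q²−q+1) and unitary discriminant q+1. -/

import Mathlib

open Matrix

noncomputable section

namespace Paper

/-- The character of a matrix representation. -/
def charOf {G : Type} [Group G] {n : ℕ} (ρ : G →* GL (Fin n) ℂ) : G → ℂ :=
  fun g => Matrix.trace ((ρ g : Matrix (Fin n) (Fin n) ℂ))

/-- Irreducibility of a complex matrix representation. -/
def IsIrredRep {G : Type} [Group G] {n : ℕ} (ρ : G →* GL (Fin n) ℂ) : Prop :=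
  0 < n ∧ ∀ W : Submodule ℂ (Fin n → ℂ),
    (∀ (g : G), ∀ v ∈ W, (ρ g : Matrix (Fin n) (Fin n) ℂ).mulVec v ∈ W) → W = ⊥ ∨ W = ⊤

/-- `χ` is an irreducible complex character of `G`. -/
def IsIrrChar {G : Type} [Group G] (χ : G → ℂ) : Prop :=
  ∃ (n : ℕ) (ρ : G →* GL (Fin n) ℂ), IsIrredRep ρ ∧ χ = charOf ρ

/-- The character field `ℚ(χ)`, as a subfield of `ℂ`. -/
def charField {G : Type} [Group G] (χ : G → ℂ) : Subfield ℂ :=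
  Subfield.closure (Set.range χ)

/-- The subfield of real numbers inside `ℂ`. -/
def realsIn : Subfield ℂ := Subfield.closure (Set.range ((↑) : ℝ → ℂ))

/-- The character field of `χ` is not contained in `ℝ`. -/
def NotReal {G : Type} [Group G] (χ : G → ℂ) : Prop := ¬ charField χ ≤ realsIn

/-- `χ` has unitary discriminant `d`. -/
def HasUnitaryDisc {G : Type} [Group G] (χ : G → ℂ) (d : ℂ) : Prop :=
  ∀ (n : ℕ) (ρ : G →* GL (Fin n) ℂ),
    χ = charOf ρ →
    (∀ g i j, ((ρ g : Matrix (Fin n) (Fin n) ℂ)) i j ∈ charField χ) →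
    ∀ H : Matrix (Fin n) (Fin n) ℂ,
      (∀ i j, H i j ∈ charField χ) →
      IsUnit H.det →
      H.conjTranspose = H →
      (∀ g, ((ρ g : Matrix (Fin n) (Fin n) ℂ)).conjTranspose * H *
        (ρ g : Matrix (Fin n) (Fin n) ℂ) = H) →
      ∃ z ∈ charField χ, z ≠ 0 ∧
        (-1 : ℂ) ^ (n * (n - 1) / 2) * H.det = d * (z * (starRingEnd ℂ) z)

/-- `χ` has orthogonal discriminant `d`. -/
def HasOrthDisc {G : Type} [Group G] (χ : G → ℂ) (d : ℂ) : Prop :=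
  ∀ (n : ℕ) (ρ : G →* GL (Fin n) ℂ),
    χ = charOf ρ →
    (∀ g i j, ((ρ g : Matrix (Fin n) (Fin n) ℂ)) i j ∈ charField χ) →
    ∀ H : Matrix (Fin n) (Fin n) ℂ,
      (∀ i j, H i j ∈ charField χ) →
      IsUnit H.det →
      H.transpose = H →
      (∀ g, ((ρ g : Matrix (Fin n) (Fin n) ℂ)).transpose * H *
        (ρ g : Matrix (Fin n) (Fin n) ℂ) = H) →
      ∃ z ∈ charField χ, z ≠ 0 ∧
        (-1 : ℂ) ^ (n * (n - 1) / 2) * H.det = d * z ^ 2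

/-- `χ` is a rational character. -/
def IsRationalChar {G : Type} [Group G] (χ : G → ℂ) : Prop :=
  ∀ g, ∃ r : ℚ, χ g = (r : ℂ)

/-- `χ` is the character of a representation over `ℚ`. -/
def RealizableOverQ {G : Type} [Group G] (χ : G → ℂ) : Prop :=
  ∃ (n : ℕ) (ρ : G →* GL (Fin n) ℂ), χ = charOf ρ ∧
    ∀ g i j, ∃ r : ℚ, ((ρ g : Matrix (Fin n) (Fin n) ℂ)) i j = (r : ℂ)

end Paper

namespace Paper

variable (p k : ℕ) (F : Type) [Field F] [Fintype F] [ExpChar F p]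

/-- The Gram matrix `Ω` (anti-diagonal ones). -/
def Om : Matrix (Fin 3) (Fin 3) F :=
  Matrix.of fun i j => if (i : ℕ) + (j : ℕ) = 2 then 1 else 0

/-- Entrywise `q`-power Frobenius `Φ` on `3×3` matrices, where `q = p^k`. -/
def Phi : Matrix (Fin 3) (Fin 3) F →+* Matrix (Fin 3) (Fin 3) F :=
  (iterateFrobenius F p k).mapMatrix

/-- The special unitary group `SU₃(q) = {g ∈ SL₃(F_{q²}) : Φ(g)ᵀ·Ω·g = Ω}`. -/
def SU3 : Subgroup (Matrix.SpecialLinearGroup (Fin 3) F) where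
  carrier := {g | (Phi p k F g.val)ᵀ * Om F * g.val = Om F}
  one_mem' := by
    show (Phi p k F (1 : Matrix.SpecialLinearGroup (Fin 3) F).val)ᵀ * Om F *
        (1 : Matrix.SpecialLinearGroup (Fin 3) F).val = Om F
    simp
  mul_mem' := by
    intro a b ha hb
    show (Phi p k F (a.val * b.val))ᵀ * Om F * (a.val * b.val) = Om F
    have ha' : (Phi p k F a.val)ᵀ * Om F * a.val = Om F := ha
    have hb' : (Phi p k F b.val)ᵀ * Om F * b.val = Om F := hb
    calc (Phi p k F (a.val * b.val))ᵀ * Om F * (a.val * b.val)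
        = (Phi p k F b.val)ᵀ * ((Phi p k F a.val)ᵀ * Om F * a.val) * b.val := by
          rw [_root_.map_mul, Matrix.transpose_mul]; simp only [Matrix.mul_assoc]
      _ = (Phi p k F b.val)ᵀ * Om F * b.val := by rw [ha']
      _ = Om F := hb'
  inv_mem' := by
    intro a ha
    show (Phi p k F (a⁻¹).val)ᵀ * Om F * (a⁻¹).val = Om F
    have ha' : (Phi p k F a.val)ᵀ * Om F * a.val = Om F := ha
    have h1 : a.val * (a⁻¹).val = 1 := by
      rw [← Matrix.SpecialLinearGroup.coe_mul, mul_inv_cancel,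
        Matrix.SpecialLinearGroup.coe_one]
    nth_rewrite 1 [← ha']
    calc (Phi p k F (a⁻¹).val)ᵀ * ((Phi p k F a.val)ᵀ * Om F * a.val) * (a⁻¹).val
        = (Phi p k F a.val * Phi p k F (a⁻¹).val)ᵀ * Om F * (a.val * (a⁻¹).val) := by
          rw [Matrix.transpose_mul]; simp only [Matrix.mul_assoc]
      _ = Om F := by rw [← _root_.map_mul, h1, _root_.map_one, Matrix.transpose_one,
            Matrix.one_mul, Matrix.mul_one]

end Paper

set_option linter.all false

namespace Paper

section field
open scoped Classical

/-- Standing assumptions: `|F| = q²`, `q = 2^k ≥ 4`. -/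
class Setup (k : ℕ) (F : Type) [Field F] [Fintype F] : Prop where
  card : Fintype.card F = (2 ^ k) ^ 2
  hk : 2 ≤ k

variable {F : Type} [Field F] [Fintype F] [ExpChar F 2]

theorem charP_two : CharP F 2 := by
  have h : ExpChar F 2 := inferInstance
  cases h with
  | prime _ => assumption

theorem two_eq_zero' : (2 : F) = 0 := by
  haveI : CharP F 2 := charP_two
  exact CharTwo.two_eq_zero

theorem add_self2 (x : F) : x + x = 0 := by
  have := two_eq_zero' (F := F); linear_combination x * this

theorem neg_eq2 (x : F) : -x = x := by
  have := two_eq_zero' (F := F); linear_combination (-x) * this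

theorem sub_eq2 (x y : F) : x - y = x + y := by
  have := two_eq_zero' (F := F); linear_combination (-y) * this

theorem add_eq_zero2 {x y : F} : x + y = 0 ↔ x = y := by
  rw [← sub_eq2, sub_eq_zero]

theorem sq_inj2 {x y : F} (h : x ^ 2 = y ^ 2) : x = y := by
  have : (x + y) ^ 2 = 0 := by
    have h2 := two_eq_zero' (F := F); linear_combination h + (x * y + y ^ 2) * h2
  have := pow_eq_zero_iff (two_ne_zero) |>.1 this
  exact add_eq_zero2.1 this

/-- The `q`-power Frobenius. -/
def sg (k : ℕ) : F →+* F := iterateFrobenius F 2 k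

variable (k : ℕ)

theorem sg_def (x : F) : sg k x = x ^ (2 ^ k) := by
  simp [sg, iterateFrobenius_def]

theorem q_pos : 0 < (2 : ℕ) ^ k := by positivity

variable [hS : Setup k F]

theorem q_ge (F : Type) [Field F] [Fintype F] [Setup k F] : 4 ≤ (2 : ℕ) ^ k := by
  calc 4 = 2 ^ 2 := rfl
    _ ≤ 2 ^ k := Nat.pow_le_pow_right (by norm_num) (Setup.hk (F := F))

@[simp] theorem sg_sg (x : F) : sg k (sg k x) = x := by
  rw [sg_def, sg_def, ← pow_mul, ← sq, ← Setup.card (k := k) (F := F), FiniteField.pow_card]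

theorem sg_inj {x y : F} (h : sg k x = sg k y) : x = y := (sg k).injective h

theorem sg_ne {x : F} (h : x ≠ 0) : sg k x ≠ 0 := by simpa using h

/-- The trace is fixed. -/
theorem sg_tr (x : F) : sg k (x + sg k x) = x + sg k x := by
  simp [add_comm]

theorem sg_nm (x : F) : sg k (x * sg k x) = x * sg k x := by
  simp [mul_comm]

/-- The fixed field. -/
def Fq (k : ℕ) (F : Type) [Field F] [Fintype F] [ExpChar F 2] : Subfield F :=
  RingHom.eqLocusField (sg k) (RingHom.id F)

theorem mem_Fq {x : F} : x ∈ Fq k F ↔ sg k x = x := Iff.rfl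

theorem card_Fq_trace : Fintype.card (Fq k F) = 2 ^ k ∧
    ∀ c : F, sg k c = c → ∃ b, b + sg k b = c := by
  set f : F →+ F := AddMonoidHom.id F + (sg k : F →+* F).toAddMonoidHom with hf
  have hfa : ∀ x, f x = x + sg k x := fun x => rfl
  have hle : Fintype.card (Fq k F) ≤ 2 ^ k := by
    have h1 : (Fq k F : Set F).toFinset ⊆ (Polynomial.X ^ (2 ^ k) - Polynomial.X : Polynomial F).roots.toFinset := by
      intro x hx
      simp only [Set.mem_toFinset, SetLike.mem_coe, mem_Fq, sg_def] at hx
      rw [Multiset.mem_toFinset, Polynomial.mem_roots]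
      · simp [hx]
      · exact FiniteField.X_pow_card_sub_X_ne_zero F (by have := q_ge (F := F) k; omega)
    have h2 := Finset.card_le_card h1
    have h3 := Multiset.toFinset_card_le (Polynomial.X ^ (2 ^ k) - Polynomial.X : Polynomial F).roots
    have h4 := Polynomial.card_roots' (Polynomial.X ^ (2 ^ k) - Polynomial.X : Polynomial F)
    rw [FiniteField.X_pow_card_sub_X_natDegree_eq F (by have := q_ge (F := F) k; omega)] at h4
    rw [Set.toFinset_card] at h2
    calc _ = Fintype.card (Fq k F : Set F) := by rfl
      _ ≤ _ := by omega
  have hker : Nat.card f.ker = Nat.card (Fq k F) := by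
    apply Nat.card_congr
    refine Equiv.subtypeEquivRight fun x => ?_
    rw [AddMonoidHom.mem_ker, hfa, add_eq_zero2]
    exact ⟨fun h => (mem_Fq k).2 h.symm, fun h => ((mem_Fq k).1 h).symm⟩
  have hrle : (f.range : Set F) ⊆ (Fq k F : Set F) := by
    rintro _ ⟨x, rfl⟩
    exact sg_tr k x
  have hcard : Nat.card f.range * Nat.card f.ker = (2 ^ k) ^ 2 := by
    rw [← Setup.card (k := k) (F := F), ← Nat.card_eq_fintype_card]
    rw [← Nat.card_congr (QuotientAddGroup.quotientKerEquivRange f).toEquiv]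
    rw [mul_comm]
    exact (AddSubgroup.card_eq_card_quotient_mul_card_addSubgroup f.ker).symm ▸ (mul_comm _ _)
  have hr : Nat.card f.range ≤ Nat.card (Fq k F) := Nat.card_mono (Set.toFinite _) hrle
  have h0 : Nat.card (Fq k F) = Fintype.card (Fq k F) := Nat.card_eq_fintype_card
  rw [hker, h0] at hcard
  rw [h0] at hr
  have hq := q_pos k
  have e1 : Fintype.card (Fq k F) = 2 ^ k := by nlinarith
  refine ⟨e1, fun c hc => ?_⟩
  rw [e1] at hcard
  have e2 : Nat.card f.range = 2 ^ k := by nlinarith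
  have : (f.range : Set F) = (Fq k F : Set F) := by
    apply Set.eq_of_subset_of_ncard_le hrle
    rw [← Nat.card_coe_set_eq, ← Nat.card_coe_set_eq]
    change Nat.card (Fq k F) ≤ Nat.card f.range
    rw [h0, e1, e2]
  have hc' : c ∈ (f.range : Set F) := by rw [this]; exact hc
  obtain ⟨b, hb⟩ := hc'
  exact ⟨b, hb⟩

theorem card_Fq : Fintype.card (Fq k F) = 2 ^ k := (card_Fq_trace k).1

theorem exists_trace {c : F} (hc : sg k c = c) : ∃ b, b + sg k b = c := (card_Fq_trace k).2 c hc

theorem exists_sqrt {c : F} (hc : sg k c = c) : ∃ s, sg k s = s ∧ s ^ 2 = c := by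
  refine ⟨c ^ (2 ^ (k - 1)), by rw [map_pow, hc], ?_⟩
  rw [← pow_mul, ← pow_succ]
  have : k - 1 + 1 = k := by have := Setup.hk (k := k) (F := F); omega
  rw [this, ← sg_def, hc]

theorem exists_norm {c : F} (hc : sg k c = c) : ∃ s, s * sg k s = c := by
  obtain ⟨s, h1, h2⟩ := exists_sqrt k hc
  exact ⟨s, by rw [h1, ← h2, sq]⟩

/-- a symmetric nontrivial additive character with values `±1` -/
theorem exists_psi : ∃ ψ : AddChar F ℂ, (∃ a, ψ a ≠ 1) ∧ (∀ a, ψ (sg k a) = ψ a) ∧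
    (∀ a, ψ a = 1 ∨ ψ a = -1) := by
  obtain ⟨b, hb⟩ := exists_trace k (F := F) (c := 1) (by simp)
  obtain ⟨φ, hφ⟩ := (AddChar.exists_apply_ne_zero (α := F) (a := 1)).2 one_ne_zero
  let f : F →+ F := AddMonoidHom.id F + (sg k : F →+* F).toAddMonoidHom
  have hfa : ∀ x, f x = x + sg k x := fun x => rfl
  refine ⟨φ.compAddMonoidHom f, ⟨b, ?_⟩, ?_, ?_⟩
  · simpa [hfa, hb] using hφ
  · intro a; simp [hfa, add_comm]
  · intro a
    have : φ (f a) * φ (f a) = 1 := by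
      rw [← AddChar.map_add_eq_mul, add_self2, AddChar.map_zero_eq_one]
    have := mul_self_eq_one_iff.1 this
    simpa using this

end field
end Paper

namespace Paper

section grp
open scoped Classical

variable (k : ℕ) (F : Type) [Field F] [Fintype F] [ExpChar F 2]

/-- The group. -/
abbrev GG := ↥(SU3 2 k F)

variable {k F}

/-- underlying matrix -/
def mt (g : GG k F) : Matrix (Fin 3) (Fin 3) F := g.1.1

theorem mt_mul (g h : GG k F) : mt (g * h) = mt g * mt h := rfl
theorem mt_one : mt (1 : GG k F) = 1 := rfl
theorem mt_inj {g h : GG k F} (e : mt g = mt h) : g = h := Subtype.ext (Subtype.ext e)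
theorem mt_det (g : GG k F) : (mt g).det = 1 := g.1.2
theorem mt_form (g : GG k F) : ((mt g).map (sg k))ᵀ * Om F * mt g = Om F := g.2

/-- constructor -/
def mkG (M : Matrix (Fin 3) (Fin 3) F) (hd : M.det = 1)
    (hf : (M.map (sg k))ᵀ * Om F * M = Om F) : GG k F := ⟨⟨M, hd⟩, hf⟩

theorem mt_mkG (M : Matrix (Fin 3) (Fin 3) F) (hd : M.det = 1)
    (hf : (M.map (sg k))ᵀ * Om F * M = Om F) : mt (mkG M hd hf) = M := rfl

theorem Om_eq : Om F = !![0, 0, 1; 0, 1, 0; 1, 0, 0] := by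
  ext i j; fin_cases i <;> fin_cases j <;> simp [Om]

/-- entries of the form relation -/
theorem mt_form_entry (g : GG k F) (i j : Fin 3) :
    sg k (mt g 0 i) * mt g 2 j + sg k (mt g 1 i) * mt g 1 j + sg k (mt g 2 i) * mt g 0 j
      = Om F i j := by
  have h := congrFun (congrFun (mt_form g) i) j
  rw [← h]
  simp [Om_eq, Matrix.mul_apply, Fin.sum_univ_three, Matrix.transpose_apply]
  ring

theorem Om_mul_Om : Om F * Om F = 1 := by
  rw [Om_eq]; ext i j; fin_cases i <;> fin_cases j <;> simp [Matrix.mul_apply, Fin.sum_univ_three]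

variable (k F) in
/-- `(a,b)` with `b + σ b = a σ a`. -/
def UT := {p : F × F // p.2 + sg k p.2 = p.1 * sg k p.1}

instance : Fintype (UT k F) := by unfold UT; infer_instance
instance : DecidableEq (UT k F) := Classical.decEq _

/-- first coordinate -/
def UT.a (u : UT k F) : F := u.1.1
/-- second coordinate -/
def UT.b (u : UT k F) : F := u.1.2
theorem UT.rel (u : UT k F) : u.b + sg k u.b = u.a * sg k u.a := u.2
theorem UT.ext' {u v : UT k F} (h1 : u.a = v.a) (h2 : u.b = v.b) : u = v :=
  Subtype.ext (Prod.ext h1 h2)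
/-- constructor -/
def UT.mk' (a b : F) (h : b + sg k b = a * sg k a) : UT k F := ⟨(a, b), h⟩
@[simp] theorem UT.mk'_a (a b : F) (h : b + sg k b = a * sg k a) : (UT.mk' a b h).a = a := rfl
@[simp] theorem UT.mk'_b (a b : F) (h : b + sg k b = a * sg k a) : (UT.mk' a b h).b = b := rfl

variable [hS : Setup k F]

instance : Mul (UT k F) := ⟨fun u v => UT.mk' (u.a + v.a) (u.b + v.b + u.a * sg k v.a) (by
  have h1 := u.rel; have h2 := v.rel
  simp only [map_add, map_mul, sg_sg]; linear_combination h1 + h2)⟩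
instance : One (UT k F) := ⟨UT.mk' 0 0 (by simp)⟩
instance : Inv (UT k F) := ⟨fun u => UT.mk' u.a (sg k u.b) (by
  have h1 := u.rel; simp only [sg_sg]; linear_combination h1)⟩

@[simp] theorem UT.mul_a (u v : UT k F) : (u * v).a = u.a + v.a := rfl
@[simp] theorem UT.mul_b (u v : UT k F) : (u * v).b = u.b + v.b + u.a * sg k v.a := rfl
@[simp] theorem UT.one_a : (1 : UT k F).a = 0 := rfl
@[simp] theorem UT.one_b : (1 : UT k F).b = 0 := rfl
@[simp] theorem UT.inv_a (u : UT k F) : (u⁻¹).a = u.a := rfl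
@[simp] theorem UT.inv_b (u : UT k F) : (u⁻¹).b = sg k u.b := rfl

instance : Group (UT k F) where
  mul_assoc u v w := UT.ext' (by simp [add_assoc]) (by simp; ring)
  one_mul u := UT.ext' (by simp) (by simp)
  mul_one u := UT.ext' (by simp) (by simp)
  inv_mul_cancel u := UT.ext' (by simp [add_self2]) (by
    have h1 := u.rel
    have h2 := two_eq_zero' (F := F)
    simp; linear_combination h1 + u.a * sg k u.a * h2)

theorem UT.b_ne {u : UT k F} (hu : u ≠ 1) : u.b ≠ 0 := by
  intro hb
  apply hu
  have h1 := u.rel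
  rw [hb] at h1
  simp at h1
  exact UT.ext' (by simpa using h1) (by simpa using hb)

/-- central elements -/
def zU (c : Fq k F) : UT k F := UT.mk' 0 c (by
  have := (mem_Fq k).1 c.2; simp [this, add_self2])
@[simp] theorem zU_a (c : Fq k F) : (zU c).a = 0 := rfl
@[simp] theorem zU_b (c : Fq k F) : (zU c).b = c := rfl
theorem zU_add (c d : Fq k F) : zU (c + d) = zU c * zU d :=
  UT.ext' (by simp) (by simp)
theorem zU_zero : zU (0 : Fq k F) = 1 := UT.ext' (by simp) (by simp)
theorem zU_comm (c : Fq k F) (u : UT k F) : zU c * u = u * zU c :=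
  UT.ext' (by simp) (by simp; ring)

/-- unipotent matrix -/
def uMat (k : ℕ) (a b : F) : Matrix (Fin 3) (Fin 3) F := !![1, a, b; 0, 1, sg k a; 0, 0, 1]

/-- unipotent elements -/
def uu (u : UT k F) : GG k F := mkG (uMat k u.a u.b) (by simp [uMat, Matrix.det_fin_three]) (by
  have h1 := u.rel
  have h2 := two_eq_zero' (F := F)
  rw [Om_eq]
  ext i j
  fin_cases i <;> fin_cases j <;>
    simp [uMat, Matrix.mul_apply, Fin.sum_univ_three, Matrix.transpose_apply, add_self2]
  linear_combination h1 + u.a * sg k u.a * h2)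

theorem mt_uu (u : UT k F) : mt (uu u) = uMat k u.a u.b := rfl

theorem uu_mul (u v : UT k F) : uu (u * v) = uu u * uu v := by
  apply mt_inj
  rw [mt_mul, mt_uu, mt_uu, mt_uu]
  ext i j
  fin_cases i <;> fin_cases j <;> simp [uMat, Matrix.mul_apply, Fin.sum_univ_three] <;> ring

theorem uu_one : uu (1 : UT k F) = 1 := by
  apply mt_inj
  rw [mt_uu, mt_one]
  ext i j
  fin_cases i <;> fin_cases j <;> simp [uMat]

theorem uu_inv (u : UT k F) : uu u⁻¹ = (uu u)⁻¹ := by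
  rw [eq_inv_iff_mul_eq_one, ← uu_mul, inv_mul_cancel, uu_one]

theorem uu_inj {u v : UT k F} (h : uu u = uu v) : u = v := by
  have h' : mt (uu u) = mt (uu v) := by rw [h]
  rw [mt_uu, mt_uu] at h'
  refine UT.ext' ?_ ?_
  · simpa [uMat] using congrFun (congrFun h' 0) 1
  · simpa [uMat] using congrFun (congrFun h' 0) 2

/-- torus matrix -/
def hMat (k : ℕ) (t : F) : Matrix (Fin 3) (Fin 3) F :=
  !![t, 0, 0; 0, sg k t / t, 0; 0, 0, (sg k t)⁻¹]

/-- torus elements -/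
def hh (t : Fˣ) : GG k F := mkG (hMat k (t : F)) (by
    have := t.ne_zero; have := sg_ne k this
    simp [hMat, Matrix.det_fin_three]; field_simp) (by
  have h0 := t.ne_zero; have h1 := sg_ne k h0
  rw [Om_eq]
  ext i j
  fin_cases i <;> fin_cases j <;>
    simp [hMat, Matrix.mul_apply, Fin.sum_univ_three, Matrix.transpose_apply] <;> (try field_simp))

theorem mt_hh (t : Fˣ) : mt (hh t : GG k F) = hMat k (t : F) := rfl

theorem hh_mul (s t : Fˣ) : (hh (s * t) : GG k F) = hh s * hh t := by
  apply mt_inj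
  rw [mt_mul, mt_hh, mt_hh, mt_hh]
  have := s.ne_zero; have := t.ne_zero
  ext i j
  fin_cases i <;> fin_cases j <;> simp [hMat, Matrix.mul_apply, Fin.sum_univ_three] <;> (try field_simp)

theorem hh_one : (hh 1 : GG k F) = 1 := by
  apply mt_inj
  rw [mt_hh, mt_one]
  ext i j
  fin_cases i <;> fin_cases j <;> simp [hMat]

theorem hh_inv (t : Fˣ) : (hh t⁻¹ : GG k F) = (hh t)⁻¹ := by
  rw [eq_inv_iff_mul_eq_one, ← hh_mul, inv_mul_cancel, hh_one]

/-- Weyl element -/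
def ww : GG k F := mkG (Om F) (by
    have := two_eq_zero' (F := F)
    rw [Om_eq]; simp [Matrix.det_fin_three, neg_eq2]) (by
  rw [Om_eq]
  ext i j
  fin_cases i <;> fin_cases j <;>
    simp [Matrix.mul_apply, Fin.sum_univ_three, Matrix.transpose_apply])

theorem mt_ww : mt (ww : GG k F) = Om F := rfl

theorem ww_ww : (ww : GG k F) * ww = 1 := by
  apply mt_inj; rw [mt_mul, mt_ww, Om_mul_Om, mt_one]

theorem ww_inv : (ww : GG k F)⁻¹ = ww := by
  rw [inv_eq_iff_mul_eq_one, ww_ww]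

/-- `1/σ t` -/
def tbar (k : ℕ) (t : Fˣ) : Fˣ := (Units.map (sg k : F →+* F) t)⁻¹
@[simp] theorem tbar_val (t : Fˣ) : ((tbar k t : Fˣ) : F) = (sg k (t : F))⁻¹ := by
  simp [tbar]
@[simp] theorem tbar_tbar (t : Fˣ) : tbar k (tbar k t) = t := by
  apply Units.ext; simp

theorem ww_hh (t : Fˣ) : (ww : GG k F) * hh t = hh (tbar k t) * ww := by
  apply mt_inj
  rw [mt_mul, mt_mul, mt_hh, mt_hh, mt_ww, Om_eq]
  ext i j
  fin_cases i <;> fin_cases j <;> simp [hMat, Matrix.mul_apply, Fin.sum_univ_three]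
  ring

/-- torus action on `UT` -/
def actU (t : Fˣ) (u : UT k F) : UT k F :=
  UT.mk' ((t : F) ^ 2 / sg k (t : F) * u.a) ((t : F) * sg k (t : F) * u.b) (by
    have h1 := u.rel
    have h0 := t.ne_zero
    simp only [map_mul, sg_sg, map_div₀, map_pow]
    have : (t : F) ^ 2 / sg k (t : F) * u.a * (sg k (t : F) ^ 2 / t * sg k u.a) = t * sg k (t : F) * (u.a * sg k u.a) := by
      field_simp
    rw [this, ← h1]; ring)
@[simp] theorem actU_a (t : Fˣ) (u : UT k F) : (actU t u).a = (t : F) ^ 2 / sg k (t : F) * u.a := rfl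
@[simp] theorem actU_b (t : Fˣ) (u : UT k F) : (actU t u).b = (t : F) * sg k (t : F) * u.b := rfl

theorem hh_uu (t : Fˣ) (u : UT k F) : hh t * uu u = uu (actU t u) * hh t := by
  apply mt_inj
  have h0 := t.ne_zero
  rw [mt_mul, mt_mul, mt_hh, mt_uu, mt_uu]
  ext i j
  fin_cases i <;> fin_cases j <;> simp [hMat, uMat, Matrix.mul_apply, Fin.sum_univ_three] <;> (try field_simp)

/-- left factor of `w u w` -/
def wl (u : UT k F) (hu : u ≠ 1) : UT k F := UT.mk' (u.a / sg k u.b) (1 / u.b) (by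
  have h1 := u.rel
  have h0 := UT.b_ne hu
  have h3 := sg_ne k h0
  simp only [map_div₀, sg_sg, map_one]
  field_simp
  linear_combination h1)
/-- right factor of `w u w` -/
def wr (u : UT k F) (hu : u ≠ 1) : UT k F := UT.mk' (u.a / u.b) (1 / u.b) (by
  have h1 := u.rel
  have h0 := UT.b_ne hu
  have h3 := sg_ne k h0
  simp only [map_div₀, sg_sg, map_one]
  field_simp
  linear_combination h1)
/-- the unit `b` -/
def ub (u : UT k F) (hu : u ≠ 1) : Fˣ := Units.mk0 u.b (UT.b_ne hu)

theorem ww_uu_ww (u : UT k F) (hu : u ≠ 1) :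
    (ww : GG k F) * uu u * ww = uu (wl u hu) * hh (tbar k (ub u hu)) * ww * uu (wr u hu) := by
  apply mt_inj
  have h1 := u.rel
  have h0 := UT.b_ne hu
  have h3 := sg_ne k h0
  have h2 := two_eq_zero' (F := F)
  simp only [mt_mul, mt_hh, mt_uu, mt_ww, Om_eq]
  have e : u.a * sg k u.a = u.b + sg k u.b := h1.symm
  ext i j
  fin_cases i <;> fin_cases j <;> simp [hMat, uMat, Matrix.mul_apply, Fin.sum_univ_three, ub, wl, wr] <;> (try field_simp)
  · linear_combination (-u.a) * h2
  · linear_combination -h1 - u.a * sg k u.a * h2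
  · linear_combination h1 - sg k u.b * h2
  · linear_combination (-sg k u.a) * h2

theorem mt_eq (M : Matrix (Fin 3) (Fin 3) F) : M = !![M 0 0, M 0 1, M 0 2; M 1 0, M 1 1, M 1 2; M 2 0, M 2 1, M 2 2] := by
  ext i j; fin_cases i <;> fin_cases j <;> rfl

theorem mul_sg_eq_zero {x : F} (h : sg k x * x = 0) : x = 0 := by
  rcases mul_eq_zero.1 h with h | h
  · simpa using h
  · exact h

theorem col_isotropic (g : GG k F) (h : mt g 2 0 = 0) : mt g 1 0 = 0 := by
  have h1 := mt_form_entry g 0 0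
  simp [h, Om_eq] at h1
  exact h1

theorem exists_uu_of_col (g : GG k F) (h0 : mt g 0 0 = 1) (h2 : mt g 2 0 = 0) : ∃ u, g = uu u := by
  have h1 := col_isotropic g h2
  have e01 := mt_form_entry g 0 1
  have e02 := mt_form_entry g 0 2
  have e12 := mt_form_entry g 1 2
  have e22 := mt_form_entry g 2 2
  have hd := mt_det g
  rw [Matrix.det_fin_three] at hd
  simp [h0, h1, h2, Om_eq] at e01 e02 hd
  simp [e01, e02] at hd
  simp [e01, e02, hd, Om_eq] at e12 e22
  rw [add_eq_zero2] at e12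
  rw [← e12, sg_sg] at e22
  refine ⟨UT.mk' (mt g 0 1) (mt g 0 2) ?_, ?_⟩
  · have h2 := two_eq_zero' (F := F)
    linear_combination e22 - (mt g 0 1 * sg k (mt g 0 1)) * h2
  · apply mt_inj
    rw [mt_uu]
    ext i j
    fin_cases i <;> fin_cases j <;> simp [uMat, h0, h1, h2, e01, e02, hd, e12]

theorem mul_hh_entry (g : GG k F) (t : Fˣ) (i : Fin 3) : mt (g * hh t) i 0 = mt g i 0 * t := by
  simp [mt_mul, mt_hh, hMat, Matrix.mul_apply, Fin.sum_univ_three]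

theorem bruhat_small (g : GG k F) (h : mt g 2 0 = 0) : ∃ (u : UT k F) (t : Fˣ), g = uu u * hh t := by
  have h1 := col_isotropic g h
  have h0 : mt g 0 0 ≠ 0 := by
    intro h0
    have hd := mt_det g
    rw [Matrix.det_fin_three] at hd
    simp [h, h0, h1] at hd
  obtain ⟨u, hu⟩ := exists_uu_of_col (g * hh (Units.mk0 _ h0)⁻¹)
    (by rw [mul_hh_entry]; simp [h0]) (by rw [mul_hh_entry]; simp [h])
  refine ⟨u, Units.mk0 _ h0, ?_⟩
  rw [← hu, hh_inv, inv_mul_cancel_right]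

/-- an isotropic vector with nonzero last entry -/
theorem exists_big_col (x : Fin 3 → F) (hx : sg k (x 0) * x 2 + sg k (x 1) * x 1 + sg k (x 2) * x 0 = 0)
    (t : Fˣ) (h2 : x 2 = (tbar k t : Fˣ)) :
    ∃ u : UT k F, ∀ i, mt (uu u * hh t * ww) i 0 = x i := by
  have h20 : x 2 ≠ 0 := by rw [h2]; exact Units.ne_zero _
  have h3 := sg_ne k h20
  have ht := t.ne_zero
  have hst := sg_ne k ht
  refine ⟨UT.mk' (sg k (x 1) / sg k (x 2)) (x 0 / x 2) ?_, ?_⟩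
  · simp only [map_div₀, sg_sg]
    field_simp
    have h2 := two_eq_zero' (F := F)
    linear_combination hx - sg k (x 1) * x 1 * h2
  · have h2' : (sg k (t : F))⁻¹ = x 2 := by rw [h2]; simp
    intro i
    fin_cases i <;> simp [mt_mul, mt_uu, mt_hh, mt_ww, Om_eq, uMat, hMat, Matrix.mul_apply, Fin.sum_univ_three, h2'] <;>
      field_simp

theorem bruhat_big (g : GG k F) (t : Fˣ) (h : mt g 2 0 = (tbar k t : Fˣ)) :
    ∃ u v : UT k F, g = uu u * hh t * ww * uu v := by
  have hc := mt_form_entry g 0 0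
  rw [Om_eq] at hc
  obtain ⟨u, hu⟩ := exists_big_col (k := k) (fun i => mt g i 0) (by simpa using hc) t h
  have key : ∀ i, mt ((uu u * hh t * ww)⁻¹ * g) i 0 = (1 : Matrix (Fin 3) (Fin 3) F) i 0 := by
    intro i
    have e : (1 : Matrix (Fin 3) (Fin 3) F) = mt ((uu u * hh t * ww)⁻¹ * (uu u * hh t * ww)) := by
      rw [inv_mul_cancel, mt_one]
    rw [e, mt_mul, mt_mul _ (uu u * hh t * ww), Matrix.mul_apply, Matrix.mul_apply]
    simp only [hu]
  obtain ⟨v, hv⟩ := exists_uu_of_col ((uu u * hh t * ww)⁻¹ * g) (by rw [key]; simp) (by rw [key]; simp)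
  refine ⟨u, v, ?_⟩
  rw [← hv]; group

theorem bruhat_big' (g : GG k F) (h : mt g 2 0 ≠ 0) :
    ∃ (u : UT k F) (t : Fˣ) (v : UT k F), g = uu u * hh t * ww * uu v := by
  obtain ⟨u, v, h⟩ := bruhat_big g (tbar k (Units.mk0 _ h)) (by simp)
  exact ⟨u, _, v, h⟩

theorem isotropic_transitive (x : Fin 3 → F) (hx0 : x ≠ 0)
    (hx : sg k (x 0) * x 2 + sg k (x 1) * x 1 + sg k (x 2) * x 0 = 0) :
    ∃ g : GG k F, ∀ i, mt g i 0 = x i := by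
  by_cases h2 : x 2 = 0
  · have h1 : x 1 = 0 := by
      apply mul_sg_eq_zero (k := k)
      simpa [h2] using hx
    have h0 : x 0 ≠ 0 := by
      intro h0; apply hx0; ext i; fin_cases i <;> simpa
    refine ⟨hh (Units.mk0 _ h0), fun i => ?_⟩
    fin_cases i <;> simp [mt_hh, hMat, h1, h2]
  · obtain ⟨u, hu⟩ := exists_big_col x hx (tbar k (Units.mk0 _ h2)) (by simp)
    exact ⟨_, hu⟩

theorem small_entry (u : UT k F) (t : Fˣ) : mt (uu u * hh t) 2 0 = 0 := by
  simp [mt_mul, mt_uu, mt_hh, uMat, hMat, Matrix.mul_apply, Fin.sum_univ_three]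

theorem small_entry0 (u : UT k F) (t : Fˣ) : mt (uu u * hh t) 0 0 = (t : F) := by
  simp [mt_mul, mt_uu, mt_hh, uMat, hMat, Matrix.mul_apply, Fin.sum_univ_three]

theorem big_entry (u : UT k F) (t : Fˣ) (v : UT k F) :
    mt (uu u * hh t * ww * uu v) 2 0 = (sg k (t : F))⁻¹ ∧
    mt (uu u * hh t * ww * uu v) 1 0 = sg k u.a * (sg k (t : F))⁻¹ ∧
    mt (uu u * hh t * ww * uu v) 0 0 = u.b * (sg k (t : F))⁻¹ := by
  simp [mt_mul, mt_uu, mt_hh, mt_ww, Om_eq, uMat, hMat, Matrix.mul_apply, Fin.sum_univ_three]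

/-- Bruhat parametrisation -/
def brMap : (UT k F × Fˣ) ⊕ (UT k F × Fˣ × UT k F) → GG k F
  | Sum.inl (u, t) => uu u * hh t
  | Sum.inr (u, t, v) => uu u * hh t * ww * uu v

theorem brMap_bij : Function.Bijective (brMap : _ → GG k F) := by
  constructor
  · rintro (⟨u, t⟩ | ⟨u, t, v⟩) (⟨u', t'⟩ | ⟨u', t', v'⟩) h <;> simp only [brMap] at h
    · have h0 := congrArg (fun g => mt g 0 0) h
      simp only [small_entry0] at h0
      have ht : t = t' := Units.ext h0
      subst ht
      rw [mul_left_inj] at h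
      rw [uu_inj h]
    · exfalso
      have h0 := congrArg (fun g => mt g 2 0) h
      simp only [small_entry, (big_entry u' t' v').1] at h0
      exact inv_ne_zero (sg_ne k t'.ne_zero) h0.symm
    · exfalso
      have h0 := congrArg (fun g => mt g 2 0) h
      simp only [small_entry, (big_entry u t v).1] at h0
      exact inv_ne_zero (sg_ne k t.ne_zero) h0
    · have e1 := congrArg (fun g => mt g 2 0) h
      have e2 := congrArg (fun g => mt g 1 0) h
      have e3 := congrArg (fun g => mt g 0 0) h
      simp only [(big_entry u t v).1, (big_entry u' t' v').1] at e1
      simp only [(big_entry u t v).2, (big_entry u' t' v').2] at e2 e3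
      have ht : t = t' := Units.ext (sg_inj k (inv_injective e1))
      subst ht
      have h3 := inv_ne_zero (sg_ne k t.ne_zero)
      have hu : u = u' := UT.ext' (sg_inj k (mul_right_cancel₀ h3 e2)) (mul_right_cancel₀ h3 e3)
      subst hu
      rw [mul_right_inj] at h
      rw [uu_inj h]
  · intro g
    by_cases h : mt g 2 0 = 0
    · obtain ⟨u, t, rfl⟩ := bruhat_small g h
      exact ⟨Sum.inl (u, t), rfl⟩
    · obtain ⟨u, t, v, rfl⟩ := bruhat_big' g h
      exact ⟨Sum.inr (u, t, v), rfl⟩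

instance : Fintype (GG k F) := Fintype.ofFinite _

theorem sum_bruhat {M : Type*} [AddCommMonoid M] (f : GG k F → M) :
    ∑ g, f g = ∑ u, ∑ t : Fˣ, f (uu u * hh t) + ∑ u, ∑ t : Fˣ, ∑ v, f (uu u * hh t * ww * uu v) := by
  rw [← (brMap_bij (k := k) (F := F)).sum_comp f, Fintype.sum_sum_type]
  simp only [Fintype.sum_prod_type, brMap]

end grp
end Paper

namespace Paper

section rep
open scoped Classical ComplexOrder

variable {G : Type} [Group G] [Fintype G] {n : ℕ}

/-- irreducibility for matrix representations -/
def IrrR (R : G →* Matrix (Fin n) (Fin n) ℂ) : Prop :=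
  0 < n ∧ ∀ W : Submodule ℂ (Fin n → ℂ), (∀ g, ∀ v ∈ W, R g *ᵥ v ∈ W) → W = ⊥ ∨ W = ⊤

variable {R : G →* Matrix (Fin n) (Fin n) ℂ}

theorem R_mul_inv (R : G →* Matrix (Fin n) (Fin n) ℂ) (g : G) : R g * R g⁻¹ = 1 := by
  rw [← map_mul, mul_inv_cancel, map_one]
theorem R_inv_mul (R : G →* Matrix (Fin n) (Fin n) ℂ) (g : G) : R g⁻¹ * R g = 1 := by
  rw [← map_mul, inv_mul_cancel, map_one]

theorem irr_cyclic (hR : IrrR R) {m : ℕ} (M : Matrix (Fin m) (Fin n) ℂ) {v : Fin n → ℂ} (hv : v ≠ 0)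
    (h : ∀ g, M *ᵥ (R g *ᵥ v) = 0) : M = 0 := by
  let W : Submodule ℂ (Fin n → ℂ) :=
    { carrier := {x | ∀ g, M *ᵥ (R g *ᵥ x) = 0}
      add_mem' := by
        intro a b ha hb g
        simp only [Set.mem_setOf_eq] at ha hb
        simp [Matrix.mulVec_add, ha, hb]
      zero_mem' := by simp
      smul_mem' := by
        intro c a ha g
        simp only [Set.mem_setOf_eq] at ha
        simp [Matrix.mulVec_smul, ha] }
  have hW : ∀ x, x ∈ W ↔ ∀ g, M *ᵥ (R g *ᵥ x) = 0 := fun x => Iff.rfl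
  rcases hR.2 W (by
    intro g x hx
    rw [hW] at hx ⊢
    intro g'
    rw [Matrix.mulVec_mulVec x (R g') (R g), ← map_mul]
    exact hx _) with h0 | h1
  · exfalso
    have : v ∈ W := h
    rw [h0] at this
    exact hv (by simpa using this)
  · ext i j
    have : (Pi.single j 1 : Fin n → ℂ) ∈ W := by rw [h1]; trivial
    have := (hW _).1 this 1
    rw [map_one, Matrix.one_mulVec, Matrix.mulVec_single_one] at this
    exact congrFun this i

theorem irr_span (hR : IrrR R) {v : Fin n → ℂ} (hv : v ≠ 0) :
    Submodule.span ℂ (Set.range fun g => R g *ᵥ v) = ⊤ := by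
  rcases hR.2 (Submodule.span ℂ (Set.range fun g => R g *ᵥ v)) (by
    intro g x hx
    induction hx using Submodule.span_induction with
    | mem x hx =>
      obtain ⟨g', rfl⟩ := hx
      apply Submodule.subset_span
      exact ⟨g * g', by simp [Matrix.mulVec_mulVec]⟩
    | zero => simp
    | add x y _ _ h1 h2 => rw [Matrix.mulVec_add]; exact Submodule.add_mem _ h1 h2
    | smul c x _ h => rw [Matrix.mulVec_smul]; exact Submodule.smul_mem _ _ h) with h | h
  · exfalso
    have : R 1 *ᵥ v ∈ Submodule.span ℂ (Set.range fun g => R g *ᵥ v) :=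
      Submodule.subset_span ⟨1, rfl⟩
    rw [h] at this
    apply hv
    simpa using this
  · exact h

/-- eigenvector in the range of an idempotent -/
theorem exists_eigen (e X : Matrix (Fin n) (Fin n) ℂ) (he : e ≠ 0) (hee : e * e = e)
    (hX : e * X = X) : ∃ (v : Fin n → ℂ) (c : ℂ), v ≠ 0 ∧ e *ᵥ v = v ∧ X *ᵥ v = c • v := by
  let W := LinearMap.range (Matrix.toLin' e)
  have hmem : ∀ x, x ∈ W → e *ᵥ x = x := by
    rintro _ ⟨y, rfl⟩
    simp [Matrix.mulVec_mulVec, hee]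
  have hWX : ∀ x ∈ W, Matrix.toLin' X x ∈ W := by
    intro x hx
    refine ⟨X *ᵥ x, ?_⟩
    simp [Matrix.mulVec_mulVec, hX]
  haveI : Nontrivial W := by
    rw [Submodule.nontrivial_iff_ne_bot]
    intro h
    apply he
    rw [LinearMap.range_eq_bot] at h
    simpa using h
  obtain ⟨c, hc⟩ := Module.End.exists_eigenvalue ((Matrix.toLin' X).restrict hWX)
  obtain ⟨v, hv⟩ := hc.exists_hasEigenvector
  refine ⟨v, c, ?_, hmem _ v.2, ?_⟩
  · intro h; exact hv.2 (Subtype.ext h)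
  · have := hv.apply_eq_smul
    have := congrArg Subtype.val this
    simpa using this

theorem irr_schur (hR : IrrR R) (X : Matrix (Fin n) (Fin n) ℂ) (hX : ∀ g, X * R g = R g * X) :
    ∃ c : ℂ, X = c • 1 := by
  have h1 : (1 : Matrix (Fin n) (Fin n) ℂ) ≠ 0 := by
    intro h
    have := congrFun (congrFun h ⟨0, hR.1⟩) ⟨0, hR.1⟩
    simp at this
  obtain ⟨v, c, hv, -, hc⟩ := exists_eigen 1 X h1 (by simp) (by simp)
  refine ⟨c, ?_⟩
  rw [← sub_eq_zero]
  apply irr_cyclic hR _ hv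
  intro g
  rw [Matrix.mulVec_mulVec, sub_mul, hX]
  simp [Matrix.sub_mulVec, ← Matrix.mulVec_mulVec, hc, Matrix.mulVec_smul, Matrix.smul_mulVec]

theorem irr_avg (hR : IrrR R) (X : Matrix (Fin n) (Fin n) ℂ) :
    ∑ g, R g * X * R g⁻¹ = ((Fintype.card G : ℂ) * X.trace / n) • 1 := by
  obtain ⟨c, hc⟩ := irr_schur hR (∑ g, R g * X * R g⁻¹) (by
    intro h
    rw [Finset.sum_mul, Finset.mul_sum]
    refine Fintype.sum_equiv (Equiv.mulLeft h⁻¹) _ _ fun g => ?_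
    simp only [Equiv.coe_mulLeft, _root_.mul_inv_rev, inv_inv, map_mul]
    have := R_mul_inv R h
    simp only [← mul_assoc, this, one_mul])
  have ht := congrArg Matrix.trace hc
  rw [Matrix.trace_sum] at ht
  have : ∀ g, (R g * X * R g⁻¹).trace = X.trace := by
    intro g
    rw [Matrix.trace_mul_comm, ← mul_assoc, R_inv_mul, one_mul]
  simp only [this, Finset.sum_const, Finset.card_univ, nsmul_eq_mul, Matrix.trace_smul, Matrix.trace_one, Fintype.card_fin, smul_eq_mul] at ht
  rw [hc, ht]
  have : (n : ℂ) ≠ 0 := by exact_mod_cast hR.1.ne'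
  rw [mul_div_cancel_right₀ _ this]

theorem idem_trace_nat (e : Matrix (Fin n) (Fin n) ℂ) (he : e * e = e) : ∃ m : ℕ, e.trace = m := by
  have h : LinearMap.IsProj (LinearMap.range (Matrix.toLin' e)) (Matrix.toLin' e) := by
    constructor
    · intro x; exact ⟨x, rfl⟩
    · rintro _ ⟨y, rfl⟩
      simp [Matrix.mulVec_mulVec, he]
  exact ⟨_, by rw [← Matrix.trace_toLin'_eq, h.trace]⟩

/-- Hecke algebra lemma -/
theorem hecke (hR : IrrR R) (e : Matrix (Fin n) (Fin n) ℂ) (hee : e * e = e) (he : e ≠ 0)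
    (hcomm : ∀ g h, e * R g * e * (e * R h * e) = e * R h * e * (e * R g * e)) :
    (∀ g, ∃ c : ℂ, e * R g * e = c • e) ∧ e.trace = 1 := by
  have key : ∀ g, ∃ c : ℂ, e * R g * e = c • e := by
    intro g0
    obtain ⟨v, c, hv, hev, hc⟩ := exists_eigen e (e * R g0 * e) he hee (by
      simp only [← mul_assoc, hee])
    refine ⟨c, ?_⟩
    rw [← sub_eq_zero]
    apply irr_cyclic hR _ hv
    intro g
    have h1 : (e * R g0 * e) *ᵥ (R g *ᵥ v) = c • ((e * R g * e) *ᵥ v) := by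
      calc (e * R g0 * e) *ᵥ (R g *ᵥ v) = (e * R g0 * e) *ᵥ (R g *ᵥ (e *ᵥ v)) := by rw [hev]
        _ = (e * R g0 * e * (e * R g * e)) *ᵥ v := by
          simp only [Matrix.mulVec_mulVec]
          congr 1
          have : e * R g0 * e * (e * R g * e) = e * R g0 * (e * e) * R g * e := by
            simp only [mul_assoc]
          rw [this, hee]; simp only [mul_assoc]
        _ = _ := by
          rw [hcomm, ← Matrix.mulVec_mulVec, hc, Matrix.mulVec_smul]
    rw [Matrix.sub_mulVec, h1, Matrix.smul_mulVec]
    have h2 : (e * R g * e) *ᵥ v = e *ᵥ (R g *ᵥ v) := by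
      simp only [← Matrix.mulVec_mulVec, hev]
    rw [h2, sub_self]
  refine ⟨key, ?_⟩
  obtain ⟨v, c, hv, hev, hc⟩ := exists_eigen e e he hee hee
  have hx : ∀ x, ∃ a : ℂ, e *ᵥ x = a • v := by
    intro x
    have hx : x ∈ Submodule.span ℂ (Set.range fun g => R g *ᵥ v) := by
      rw [irr_span hR hv]; trivial
    induction hx using Submodule.span_induction with
    | mem x hx =>
      obtain ⟨g, rfl⟩ := hx
      obtain ⟨a, ha⟩ := key g
      refine ⟨a, ?_⟩
      have : (e * R g * e) *ᵥ v = e *ᵥ (R g *ᵥ v) := by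
        simp only [← Matrix.mulVec_mulVec, hev]
      rw [← this, ha, Matrix.smul_mulVec, hev]
    | zero => exact ⟨0, by simp⟩
    | add x y _ _ h1 h2 =>
      obtain ⟨a, ha⟩ := h1
      obtain ⟨b, hb⟩ := h2
      exact ⟨a + b, by rw [Matrix.mulVec_add, ha, hb, add_smul]⟩
    | smul c x _ h =>
      obtain ⟨a, ha⟩ := h
      exact ⟨c * a, by rw [Matrix.mulVec_smul, ha, smul_smul]⟩
  choose φ hφ using fun j : Fin n => hx (Pi.single j 1)
  have hev' : e = Matrix.vecMulVec v φ := by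
    ext i j
    have := congrFun (hφ j) i
    simp at this
    rw [this, Matrix.vecMulVec_apply, mul_comm]
  have h1 : (φ ⬝ᵥ v) • v = v := by
    conv_rhs => rw [← hev, hev']
    rw [Matrix.vecMulVec_mulVec]
    ext i; simp [mul_comm]
  have h2 : φ ⬝ᵥ v = 1 := by
    have : (φ ⬝ᵥ v - 1) • v = 0 := by rw [sub_smul, h1, one_smul, sub_self]
    rcases smul_eq_zero.1 this with h | h
    · exact sub_eq_zero.1 h
    · exact absurd h hv
  rw [hev', Matrix.trace_vecMulVec, dotProduct_comm, h2]

/-- invariant positive definite form -/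
theorem exists_posform (R : G →* Matrix (Fin n) (Fin n) ℂ) :
    ∃ H : Matrix (Fin n) (Fin n) ℂ, H.PosDef ∧ ∀ g, (R g)ᴴ * H * R g = H := by
  refine ⟨∑ g, (R g)ᴴ * R g, ?_, ?_⟩
  · have h1 : ∑ g, (R g)ᴴ * R g = 1 + ∑ g ∈ Finset.univ.erase (1 : G), (R g)ᴴ * R g := by
      rw [← Finset.add_sum_erase _ _ (Finset.mem_univ (1 : G))]
      simp
    rw [h1]
    refine Matrix.PosDef.one.add_posSemidef ?_
    exact Matrix.posSemidef_sum _ fun g _ => Matrix.posSemidef_conjTranspose_mul_self _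
  · intro h
    rw [Finset.mul_sum, Finset.sum_mul]
    refine Fintype.sum_equiv (Equiv.mulRight h) _ _ fun g => ?_
    simp only [Equiv.coe_mulRight, map_mul, Matrix.conjTranspose_mul, mul_assoc]

theorem char_inv (R : G →* Matrix (Fin n) (Fin n) ℂ) (g : G) :
    (R g⁻¹).trace = (starRingEnd ℂ) (R g).trace := by
  obtain ⟨H, hH, hinv⟩ := exists_posform R
  have hu : IsUnit H.det := (Matrix.isUnit_iff_isUnit_det _).1 hH.isUnit
  have h1 : R g⁻¹ = H⁻¹ * (R g)ᴴ * H := by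
    have h2 : (R g)ᴴ * H = H * R g⁻¹ := by
      calc (R g)ᴴ * H = (R g)ᴴ * H * (R g * R g⁻¹) := by rw [R_mul_inv, mul_one]
        _ = H * R g⁻¹ := by rw [← mul_assoc, hinv]
    rw [mul_assoc, h2, ← mul_assoc, Matrix.nonsing_inv_mul _ hu, one_mul]
  rw [h1, Matrix.trace_mul_comm, ← mul_assoc, Matrix.mul_nonsing_inv _ hu, one_mul,
    Matrix.trace_conjTranspose]
  rfl

/-- nonzero pairing gives an equivalence -/
theorem exists_equiv (R1 : G →* Matrix (Fin n) (Fin n) ℂ) (hR : IrrR R)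
    (hp : ∑ g, (R1 g).trace * (R g⁻¹).trace ≠ 0) :
    ∃ Y : Matrix (Fin n) (Fin n) ℂ, IsUnit Y.det ∧ ∀ g, R1 g * Y = Y * R g := by
  obtain ⟨i, j, hij⟩ : ∃ i j : Fin n, (∑ g, R1 g * Matrix.single i j 1 * R g⁻¹) ≠ 0 := by
    by_contra hcon
    push Not at hcon
    apply hp
    have : ∀ g, (R1 g).trace * (R g⁻¹).trace =
        ∑ i, ∑ j, (R1 g * Matrix.single i j 1 * R g⁻¹ : Matrix (Fin n) (Fin n) ℂ) i j := by
      intro g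
      rw [Matrix.trace, Matrix.trace, Finset.sum_mul_sum]
      refine Finset.sum_congr rfl fun i _ => Finset.sum_congr rfl fun j _ => ?_
      simp [Matrix.mul_apply, Matrix.single_apply, Finset.sum_ite_eq, ite_and]
    simp only [this]
    rw [Finset.sum_comm]
    refine Finset.sum_eq_zero fun i _ => ?_
    rw [Finset.sum_comm]
    refine Finset.sum_eq_zero fun j _ => ?_
    have := congrFun (congrFun (hcon i j) i) j
    rw [Matrix.sum_apply] at this
    simpa using this
  set Y : Matrix (Fin n) (Fin n) ℂ := ∑ g, R1 g * Matrix.single i j 1 * R g⁻¹ with hY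
  have hYtw : ∀ h, R1 h * Y = Y * R h := by
    intro h
    rw [hY, Finset.sum_mul, Finset.mul_sum]
    refine Fintype.sum_equiv (Equiv.mulLeft h) _ _ fun g => ?_
    simp only [Equiv.coe_mulLeft, _root_.mul_inv_rev, map_mul]
    have := R_inv_mul R h
    simp only [mul_assoc, this, mul_one]
  refine ⟨Y, ?_, hYtw⟩
  rw [isUnit_iff_ne_zero]
  intro hdet
  obtain ⟨v, hv, hv0⟩ := Matrix.exists_mulVec_eq_zero_iff.2 hdet
  apply hij
  apply irr_cyclic hR _ hv
  intro g
  rw [Matrix.mulVec_mulVec, ← hYtw, ← Matrix.mulVec_mulVec, hv0, Matrix.mulVec_zero]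

theorem trace_eq_of_equiv {R1 : G →* Matrix (Fin n) (Fin n) ℂ} {Y : Matrix (Fin n) (Fin n) ℂ}
    (hY : IsUnit Y.det) (h : ∀ g, R1 g * Y = Y * R g) (g : G) : (R1 g).trace = (R g).trace := by
  have : R1 g = Y * R g * Y⁻¹ := by
    rw [← h, mul_assoc, Matrix.mul_nonsing_inv _ hY, mul_one]
  rw [this, Matrix.trace_mul_comm, ← mul_assoc, Matrix.nonsing_inv_mul _ hY, one_mul]

theorem irr_of_equiv {R1 : G →* Matrix (Fin n) (Fin n) ℂ} {Y : Matrix (Fin n) (Fin n) ℂ}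
    (hR : IrrR R) (hY : IsUnit Y.det) (h : ∀ g, R1 g * Y = Y * R g) : IrrR R1 := by
  refine ⟨hR.1, fun W hW => ?_⟩
  have hinj : Function.Injective (Matrix.toLin' Y) := by
    rw [← LinearMap.ker_eq_bot, LinearMap.ker_eq_bot']
    intro x hx
    by_contra hx0
    exact hY.ne_zero (Matrix.exists_mulVec_eq_zero_iff.1 ⟨x, hx0, by simpa using hx⟩)
  have hsurj : Function.Surjective (Matrix.toLin' Y) := LinearMap.injective_iff_surjective.1 hinj
  rcases hR.2 (W.comap (Matrix.toLin' Y)) (by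
    intro g v hv
    simp only [Submodule.mem_comap, Matrix.toLin'_apply] at hv ⊢
    rw [Matrix.mulVec_mulVec, ← h, ← Matrix.mulVec_mulVec]
    exact hW g _ hv) with h0 | h0
  · left
    rw [eq_bot_iff]
    intro x hx
    obtain ⟨y, rfl⟩ := hsurj x
    have : y ∈ W.comap (Matrix.toLin' Y) := hx
    rw [h0] at this
    have : y = 0 := by simpa using this
    simp [this]
  · right
    rw [eq_top_iff]
    intro x _
    obtain ⟨y, rfl⟩ := hsurj x
    have : y ∈ W.comap (Matrix.toLin' Y) := by rw [h0]; trivial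
    exact this

theorem pairing_self (hR : 0 < n) :
    ∑ g, (R g).trace * (R g⁻¹).trace ≠ 0 := by
  have h1 : ∀ g, (R g).trace * (R g⁻¹).trace = ((Complex.normSq (R g).trace : ℝ) : ℂ) := by
    intro g; rw [char_inv, Complex.mul_conj]
  simp only [h1]
  rw [← Complex.ofReal_sum]
  have : 0 < ∑ g, Complex.normSq (R g).trace := by
    apply Finset.sum_pos'
    · intro g _; exact Complex.normSq_nonneg _
    · refine ⟨1, Finset.mem_univ _, ?_⟩
      rw [map_one, Matrix.trace_one, Fintype.card_fin, Complex.normSq_pos]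
      exact_mod_cast hR.ne'
  exact_mod_cast this.ne'

end rep
end Paper

namespace Paper

section sums
open scoped Classical ComplexOrder

variable {k : ℕ} {F : Type} [Field F] [Fintype F] [ExpChar F 2] [hS : Setup k F]

theorem qC_ne (k : ℕ) : ((2 : ℂ) ^ k) ≠ 0 := by positivity

theorem sum_by_trace (A : F → ℂ) (hA : ∀ c b, sg k c = c → c ≠ 0 → A (c * b) = A b) :
    ∑ b, A b = ∑ c : Fq k F, A c + ((2 : ℂ) ^ k - 1) * ∑ b : F, if b + sg k b = 1 then A b else 0 := by
  have h1 : ∑ b, A b = ∑ c : Fq k F, ∑ b : F, if b + sg k b = (c : F) then A b else 0 := by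
    rw [Finset.sum_comm]
    refine Finset.sum_congr rfl fun b _ => ?_
    have : ∀ c : Fq k F, (b + sg k b = (c : F)) ↔ ((⟨b + sg k b, sg_tr k b⟩ : Fq k F) = c) := by
      intro c; rw [Subtype.ext_iff]
    simp only [this]
    rw [Finset.sum_ite_eq]; simp
  rw [h1, ← Finset.add_sum_erase _ _ (Finset.mem_univ (0 : Fq k F))]
  congr 1
  · rw [← Finset.sum_filter]
    refine Finset.sum_bij' (fun b hb => (⟨b, ?_⟩ : Fq k F)) (fun c _ => (c : F)) ?_ ?_ ?_ ?_ ?_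
    · simp at hb; rw [add_eq_zero2] at hb; exact hb.symm
    · simp
    · intro c _; have := (mem_Fq k).1 c.2; simp [this, add_self2]
    · simp
    · simp
    · simp
  · have h2 : ∀ c ∈ Finset.univ.erase (0 : Fq k F), (∑ b : F, if b + sg k b = (c : F) then A b else 0)
        = ∑ b : F, if b + sg k b = 1 then A b else 0 := by
      intro c hc
      have hc0 : (c : F) ≠ 0 := by simpa using hc
      have hcs := (mem_Fq k).1 c.2
      refine (Fintype.sum_equiv (Equiv.mulLeft₀ (c : F) hc0) _ _ fun b => ?_).symm
      simp only [Equiv.mulLeft₀_apply, map_mul, hcs, hA c b hcs hc0]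
      have : (c : F) * b + c * sg k b = c ↔ b + sg k b = 1 := by
        rw [← mul_add]
        constructor
        · intro h; exact mul_left_cancel₀ hc0 (by rw [h, mul_one])
        · intro h; rw [h, mul_one]
      simp only [this]
    rw [Finset.sum_congr rfl h2, Finset.sum_const, Finset.card_erase_of_mem (Finset.mem_univ _),
      Finset.card_univ, card_Fq, nsmul_eq_mul, Nat.cast_sub (q_pos k)]
    simp

theorem trace_one_count : (∑ b : F, if b + sg k b = 1 then (1 : ℂ) else 0) = 2 ^ k := by
  have h := sum_by_trace (k := k) (F := F) (fun _ => 1) (by intros; rfl)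
  simp only [Finset.sum_const, Finset.card_univ, card_Fq, Setup.card (k := k) (F := F), nsmul_eq_mul, mul_one] at h
  have hq : (4 : ℝ) ≤ 2 ^ k := by exact_mod_cast q_ge k F
  have hq' : ((2 : ℂ) ^ k - 1) ≠ 0 := by
    have : ((2 : ℝ) ^ k - 1) ≠ 0 := by linarith
    exact_mod_cast this
  push_cast at h
  apply mul_left_cancel₀ hq'
  linear_combination -h

theorem sumUT (f : F → F → ℂ) : ∑ u : UT k F, f u.a u.b =
    ∑ c : Fq k F, f 0 c + ∑ a ∈ Finset.univ.erase (0 : F), ∑ b : F,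
      if b + sg k b = 1 then f a (a * sg k a * b) else 0 := by
  have h1 : ∑ u : UT k F, f u.a u.b = ∑ a : F, ∑ b : F, if b + sg k b = a * sg k a then f a b else 0 := by
    rw [← Fintype.sum_prod_type', ← Finset.sum_filter]
    refine Finset.sum_bij' (fun u _ => u.1) (fun p hp => ⟨p, ?_⟩) ?_ ?_ ?_ ?_ ?_
    · simpa using hp
    · intro u _; simpa using u.2
    · intro p _; exact Finset.mem_univ _
    · intro u _; rfl
    · simp
    · intro u _; rfl
  rw [h1, ← Finset.add_sum_erase _ _ (Finset.mem_univ (0 : F))]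
  congr 1
  · rw [← Finset.sum_filter]
    refine Finset.sum_bij' (fun b hb => (⟨b, ?_⟩ : Fq k F)) (fun c _ => (c : F)) ?_ ?_ ?_ ?_ ?_
    · simp at hb; rw [add_eq_zero2] at hb; exact hb.symm
    · simp
    · intro c _; have := (mem_Fq k).1 c.2; simp [this, add_self2]
    · simp
    · simp
    · simp
  · refine Finset.sum_congr rfl fun a ha => ?_
    have ha0 : a ≠ 0 := by simpa using ha
    have hn : a * sg k a ≠ 0 := mul_ne_zero ha0 (sg_ne k ha0)
    refine (Fintype.sum_equiv (Equiv.mulLeft₀ (a * sg k a) hn) _ _ fun b => ?_).symm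
    have h3 := sg_nm k a
    simp only [Equiv.mulLeft₀_apply]
    rw [map_mul _ (a * sg k a) b, h3]
    have : a * sg k a * b + a * sg k a * sg k b = a * sg k a ↔ b + sg k b = 1 := by
      rw [← mul_add]
      constructor
      · intro h; exact mul_left_cancel₀ hn (by rw [h, mul_one])
      · intro h; rw [h, mul_one]
    simp only [this]

theorem sumUT_a (f : F → ℂ) : ∑ u : UT k F, f u.a = 2 ^ k * ∑ a, f a := by
  rw [sumUT (fun a _ => f a)]
  have h1 : ∀ a, (∑ b : F, if b + sg k b = 1 then f a else 0) = 2 ^ k * f a := by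
    intro a
    rw [← trace_one_count (k := k) (F := F), Finset.sum_mul]
    refine Finset.sum_congr rfl fun b _ => ?_
    split_ifs <;> simp
  simp only [h1]
  rw [← Finset.mul_sum, ← Finset.add_sum_erase Finset.univ f (Finset.mem_univ (0 : F)), mul_add]
  simp [card_Fq]

theorem card_UT : (Fintype.card (UT k F) : ℂ) = (2 ^ k) ^ 3 := by
  have h := sumUT_a (k := k) (F := F) (fun _ => 1)
  simp only [Finset.sum_const, Finset.card_univ, Setup.card (k := k) (F := F), nsmul_eq_mul, mul_one] at h
  rw [h]; push_cast; ring

/-- the sums `S_ψ` -/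
theorem sum_S (A : MulChar F ℂ) (hA : ∀ c : F, sg k c = c → c ≠ 0 → A c = 1) (f : F → ℂ) (hf : f 0 = 1) :
    ∑ u : UT k F, f u.a * A u.b = (2 ^ k - 1) +
      (∑ a, f a - 1) * ∑ b : F, if b + sg k b = 1 then A b else 0 := by
  rw [sumUT (fun a b => f a * A b)]
  have h0 : ∑ c : Fq k F, A c = 2 ^ k - 1 := by
    rw [← Finset.add_sum_erase _ _ (Finset.mem_univ (0 : Fq k F))]
    have : ∀ c ∈ Finset.univ.erase (0 : Fq k F), A (c : F) = 1 := by
      intro c hc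
      exact hA c ((mem_Fq k).1 c.2) (by simpa using hc)
    rw [Finset.sum_congr rfl this]
    simp [card_Fq, Nat.cast_sub (q_pos k), MulChar.map_zero]
  congr 1
  · simp [hf, h0]
  · rw [← Finset.add_sum_erase Finset.univ f (Finset.mem_univ (0 : F)), hf, add_sub_cancel_left, Finset.sum_mul]
    refine Finset.sum_congr rfl fun a ha => ?_
    have ha0 : a ≠ 0 := by simpa using ha
    have hn : a * sg k a ≠ 0 := mul_ne_zero ha0 (sg_ne k ha0)
    rw [Finset.mul_sum]
    refine Finset.sum_congr rfl fun b _ => ?_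
    split_ifs
    · rw [map_mul A, hA _ (sg_nm k a) hn, one_mul]
    · simp

theorem T1_ne (A : MulChar F ℂ) (hA : ∀ c : F, sg k c = c → c ≠ 0 → A c = 1) (hA1 : A ≠ 1) :
    (∑ b : F, if b + sg k b = 1 then A b else 0) = -1 := by
  have h := sum_by_trace (k := k) (F := F) (fun b => A b) (by
    intro c b h1 h2; rw [map_mul, hA c h1 h2, one_mul])
  rw [MulChar.sum_eq_zero_of_ne_one hA1] at h
  have h0 : ∑ c : Fq k F, A c = 2 ^ k - 1 := by
    rw [← Finset.add_sum_erase _ _ (Finset.mem_univ (0 : Fq k F))]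
    have : ∀ c ∈ Finset.univ.erase (0 : Fq k F), A (c : F) = 1 := by
      intro c hc
      exact hA c ((mem_Fq k).1 c.2) (by simpa using hc)
    rw [Finset.sum_congr rfl this]
    simp [card_Fq, Nat.cast_sub (q_pos k), MulChar.map_zero]
  have hq : (4 : ℝ) ≤ 2 ^ k := by exact_mod_cast q_ge k F
  have hq' : ((2 : ℂ) ^ k - 1) ≠ 0 := by
    have : ((2 : ℝ) ^ k - 1) ≠ 0 := by linarith
    exact_mod_cast this
  rw [h0] at h
  apply mul_left_cancel₀ hq'
  linear_combination -h

theorem T1_one : (∑ b : F, if b + sg k b = 1 then (1 : MulChar F ℂ) b else 0) = 2 ^ k := by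
  rw [← trace_one_count (k := k) (F := F)]
  refine Finset.sum_congr rfl fun b _ => ?_
  split_ifs with h
  · have : b ≠ 0 := by rintro rfl; simp at h
    rw [MulChar.one_apply (isUnit_iff_ne_zero.2 this)]
  · rfl

end sums

section ex
open scoped Classical ComplexOrder

variable {k : ℕ} {F : Type} [Field F] [Fintype F] [ExpChar F 2] [hS : Setup k F] {n : ℕ}

/-- a fixed good additive character -/
structure GoodPsi (k : ℕ) (ψ : AddChar F ℂ) : Prop where
  nt : ∃ a, ψ a ≠ 1
  sym : ∀ a, ψ (sg k a) = ψ a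
  pm : ∀ a, ψ a = 1 ∨ ψ a = -1

theorem GoodPsi.sq {ψ : AddChar F ℂ} (h : GoodPsi k ψ) (a : F) : ψ a * ψ a = 1 := by
  rcases h.pm a with h | h <;> rw [h] <;> norm_num

theorem GoodPsi.sum {ψ : AddChar F ℂ} (h : GoodPsi k ψ) (x : F) :
    ∑ a, ψ (x * a) = if x = 0 then (2 ^ k) ^ 2 else 0 := by
  split_ifs with hx
  · subst hx
    simp [Setup.card (k := k) (F := F)]
  · have : ∑ a, ψ (x * a) = ∑ a, ψ a :=
      Fintype.sum_equiv (Equiv.mulLeft₀ x hx) _ _ fun a => by simp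
    rw [this]
    apply AddChar.sum_eq_zero_of_ne_one
    intro h1
    obtain ⟨a, ha⟩ := h.nt
    exact ha (by rw [h1]; rfl)

/-- projections onto the characters of `U/Z` -/
def ex (ψ : AddChar F ℂ) (R : GG k F →* Matrix (Fin n) (Fin n) ℂ) (x : F) : Matrix (Fin n) (Fin n) ℂ :=
  (((2 : ℂ) ^ k) ^ 3)⁻¹ • ∑ u : UT k F, ψ (x * u.a) • R (uu u)

variable {ψ : AddChar F ℂ} (hψ : GoodPsi k ψ) (R : GG k F →* Matrix (Fin n) (Fin n) ℂ)

theorem ex_uu (hψ : GoodPsi k ψ) (x : F) (u : UT k F) : ex ψ R x * R (uu u) = ψ (x * u.a) • ex ψ R x := by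
  rw [ex, Matrix.smul_mul, smul_comm, Finset.sum_mul]
  refine congrArg (fun M : Matrix (Fin n) (Fin n) ℂ => (((2 : ℂ) ^ k) ^ 3)⁻¹ • M) ?_
  rw [Finset.smul_sum]
  refine Fintype.sum_equiv (Equiv.mulRight u) _ _ fun v => ?_
  have : ψ (x * u.a) * ψ (x * v.a + x * u.a) = ψ (x * v.a) := by
    rw [AddChar.map_add_eq_mul]
    have := hψ.sq (x * u.a)
    linear_combination ψ (x * v.a) * this
  simp only [Equiv.coe_mulRight, uu_mul, map_mul, UT.mul_a, mul_add, smul_smul, this, Matrix.smul_mul]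

theorem uu_ex (hψ : GoodPsi k ψ) (x : F) (u : UT k F) : R (uu u) * ex ψ R x = ψ (x * u.a) • ex ψ R x := by
  rw [ex, Matrix.mul_smul, smul_comm, Finset.mul_sum]
  refine congrArg (fun M : Matrix (Fin n) (Fin n) ℂ => (((2 : ℂ) ^ k) ^ 3)⁻¹ • M) ?_
  rw [Finset.smul_sum]
  refine Fintype.sum_equiv (Equiv.mulLeft u) _ _ fun v => ?_
  have : ψ (x * u.a) * ψ (x * u.a + x * v.a) = ψ (x * v.a) := by
    rw [AddChar.map_add_eq_mul]
    have := hψ.sq (x * u.a)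
    linear_combination ψ (x * v.a) * this
  simp only [Equiv.coe_mulLeft, uu_mul, map_mul, UT.mul_a, mul_add, smul_smul, this, Matrix.mul_smul]

theorem ex_mul_ex (hψ : GoodPsi k ψ) (x y : F) : ex ψ R x * ex ψ R y = if x = y then ex ψ R x else 0 := by
  have h1 : ex ψ R x * ex ψ R y = ((((2 : ℂ) ^ k) ^ 3)⁻¹ * ∑ u : UT k F, ψ ((x + y) * u.a)) • ex ψ R x := by
    conv_lhs => rw [ex.eq_1 ψ R y]
    rw [Matrix.mul_smul, Finset.mul_sum, mul_smul, Finset.sum_smul]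
    congr 1
    refine Finset.sum_congr rfl fun u _ => ?_
    rw [Matrix.mul_smul, ex_uu R hψ, smul_smul, add_mul, AddChar.map_add_eq_mul, mul_comm]
  rw [h1, sumUT_a (fun a => ψ ((x + y) * a)), hψ.sum]
  simp only [add_eq_zero2]
  split_ifs
  · have := qC_ne k
    have : (((2 : ℂ) ^ k) ^ 3)⁻¹ * (2 ^ k * (2 ^ k) ^ 2) = 1 := by
      rw [inv_mul_eq_one₀ (by positivity)]; ring
    rw [this, one_smul]
  · simp

theorem ex_idem (hψ : GoodPsi k ψ) (x : F) : ex ψ R x * ex ψ R x = ex ψ R x := by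
  rw [ex_mul_ex R hψ, if_pos rfl]

theorem actU_bij (t : Fˣ) : Function.Bijective (actU t : UT k F → UT k F) := by
  refine (Finite.injective_iff_bijective).1 fun u v h => ?_
  have h1 := congrArg UT.a h
  have h2 := congrArg UT.b h
  have ht := t.ne_zero
  have hst := sg_ne k ht
  simp only [actU_a, actU_b] at h1 h2
  exact UT.ext' (mul_left_cancel₀ (by positivity) h1) (mul_left_cancel₀ (mul_ne_zero ht hst) h2)

theorem hh_ex (x : F) (t : Fˣ) : R (hh t) * ex ψ R (x * ((t : F) ^ 2 / sg k (t : F))) = ex ψ R x * R (hh t) := by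
  rw [ex, ex, Matrix.mul_smul, Matrix.smul_mul, Finset.mul_sum, Finset.sum_mul]
  congr 1
  refine Fintype.sum_bijective _ (actU_bij t) _ _ fun u => ?_
  rw [Matrix.mul_smul, ← map_mul R, hh_uu, map_mul R, Matrix.smul_mul, actU_a, mul_assoc]

theorem hh_ex_zero (t : Fˣ) : R (hh t) * ex ψ R 0 = ex ψ R 0 * R (hh t) := by
  have := hh_ex (ψ := ψ) R 0 t
  rwa [zero_mul] at this

end ex
end Paper

namespace Paper

section case1
open scoped Classical ComplexOrder

variable {k : ℕ} {F : Type} [Field F] [Fintype F] [ExpChar F 2] [hS : Setup k F] {n : ℕ}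
variable {ψ : AddChar F ℂ} {R : GG k F →* Matrix (Fin n) (Fin n) ℂ}

theorem card_units : (Fintype.card Fˣ : ℂ) = (2 ^ k) ^ 2 - 1 := by
  rw [Fintype.card_units, Setup.card (k := k) (F := F), Nat.cast_sub (Nat.one_le_pow _ _ (q_pos k))]
  push_cast; rfl

theorem exists_torus_eigen (hψ : GoodPsi k ψ) (hP : ex ψ R 0 ≠ 0) :
    ∃ (A : MulChar F ℂ) (v : Fin n → ℂ), v ≠ 0 ∧ ex ψ R 0 *ᵥ v = v ∧
      ∀ t : Fˣ, R (hh t) *ᵥ v = A t • v := by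
  obtain ⟨g, hg⟩ := IsCyclic.exists_generator (α := Fˣ)
  obtain ⟨v, c, hv, hPv, hc⟩ := exists_eigen (ex ψ R 0) (ex ψ R 0 * R (hh g)) hP (ex_idem R hψ 0) (by
    rw [← mul_assoc, ex_idem R hψ])
  rw [← hh_ex_zero, ← Matrix.mulVec_mulVec, hPv] at hc
  have hpow : ∀ m : ℕ, R (hh (g ^ m)) *ᵥ v = c ^ m • v := by
    intro m
    induction m with
    | zero => simp [hh_one]
    | succ m ih =>
      rw [pow_succ, hh_mul, map_mul, ← Matrix.mulVec_mulVec, hc, Matrix.mulVec_smul, ih, smul_smul, pow_succ, mul_comm]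
  have hc1 : c ^ (Fintype.card Fˣ) = 1 := by
    have h1 := hpow (Fintype.card Fˣ)
    rw [pow_card_eq_one, hh_one, map_one, Matrix.one_mulVec] at h1
    have : (c ^ (Fintype.card Fˣ) - 1) • v = 0 := by rw [sub_smul, ← h1, one_smul, sub_self]
    rcases smul_eq_zero.1 this with h | h
    · exact sub_eq_zero.1 h
    · exact absurd h hv
  have hc0 : c ≠ 0 := by
    rintro rfl
    rw [zero_pow Fintype.card_ne_zero] at hc1
    exact zero_ne_one hc1
  have hz : Units.mk0 c hc0 ∈ rootsOfUnity (Fintype.card Fˣ) ℂ := by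
    rw [mem_rootsOfUnity]; apply Units.ext; simpa using hc1
  refine ⟨MulChar.ofRootOfUnity hz hg, v, hv, hPv, fun t => ?_⟩
  have ht : t ∈ Submonoid.powers g := by
    rw [mem_powers_iff_mem_zpowers]; exact hg t
  obtain ⟨m, rfl⟩ := ht
  simp only
  rw [hpow, Units.val_pow_eq_pow_val, map_pow, MulChar.ofRootOfUnity_spec]
  rfl

/-- torus projection -/
def eT (A : MulChar F ℂ) (R : GG k F →* Matrix (Fin n) (Fin n) ℂ) : Matrix (Fin n) (Fin n) ℂ :=
  (((2 : ℂ) ^ k) ^ 2 - 1)⁻¹ • ∑ t : Fˣ, (A t)⁻¹ • R (hh t)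

theorem q21_ne (k : ℕ) (F : Type) [Field F] [Fintype F] [ExpChar F 2] [hS : Setup k F] : (((2 : ℂ) ^ k) ^ 2 - 1) ≠ 0 := by
  rw [← card_units (k := k) (F := F)]
  exact_mod_cast Fintype.card_ne_zero

theorem A_ne (A : MulChar F ℂ) (t : Fˣ) : A t ≠ 0 := (t.isUnit.map A).ne_zero

theorem eT_hh (A : MulChar F ℂ) (t : Fˣ) : eT A R * R (hh t) = A t • eT A R := by
  rw [eT, Matrix.smul_mul, smul_comm, Finset.sum_mul]
  refine congrArg (fun M : Matrix (Fin n) (Fin n) ℂ => (((2 : ℂ) ^ k) ^ 2 - 1)⁻¹ • M) ?_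
  rw [Finset.smul_sum]
  refine Fintype.sum_equiv (Equiv.mulRight t) _ _ fun s => ?_
  have h1 := A_ne A t
  have h2 := A_ne A s
  rw [Matrix.smul_mul, ← map_mul R, ← hh_mul, smul_smul]
  simp only [Equiv.coe_mulRight, Units.val_mul, map_mul]
  congr 1
  field_simp

theorem hh_eT (A : MulChar F ℂ) (t : Fˣ) : R (hh t) * eT A R = A t • eT A R := by
  rw [← eT_hh, eT, Matrix.mul_smul, Matrix.smul_mul, Finset.mul_sum, Finset.sum_mul]
  congr 1
  refine Finset.sum_congr rfl fun s _ => ?_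
  rw [Matrix.mul_smul, Matrix.smul_mul, ← map_mul, ← map_mul, ← hh_mul, ← hh_mul, mul_comm]

theorem eT_idem (A : MulChar F ℂ) : eT A R * eT A R = eT A R := by
  conv_lhs => rw [eT.eq_1 A R]
  rw [Matrix.smul_mul, Finset.sum_mul]
  have : ∀ t : Fˣ, ((A t)⁻¹ • R (hh t)) * eT A R = eT A R := by
    intro t
    rw [Matrix.smul_mul, hh_eT, smul_smul, inv_mul_cancel₀ (A_ne A t), one_smul]
  rw [← eT.eq_1 A R]
  simp only [this, Finset.sum_const, Finset.card_univ]
  rw [← Nat.cast_smul_eq_nsmul ℂ, card_units (k := k), smul_smul, inv_mul_cancel₀ (q21_ne k F), one_smul]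

theorem eT_P (A : MulChar F ℂ) : eT A R * ex ψ R 0 = ex ψ R 0 * eT A R := by
  rw [eT, Matrix.mul_smul, Matrix.smul_mul, Finset.mul_sum, Finset.sum_mul]
  congr 1
  refine Finset.sum_congr rfl fun s _ => ?_
  rw [Matrix.mul_smul, Matrix.smul_mul, hh_ex_zero]

/-- Borel projection -/
def eB (ψ : AddChar F ℂ) (A : MulChar F ℂ) (R : GG k F →* Matrix (Fin n) (Fin n) ℂ) : Matrix (Fin n) (Fin n) ℂ :=
  ex ψ R 0 * eT A R

theorem eB_hh (A : MulChar F ℂ) (t : Fˣ) : eB ψ A R * R (hh t) = A t • eB ψ A R := by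
  rw [eB, mul_assoc, eT_hh, Matrix.mul_smul]
theorem hh_eB (A : MulChar F ℂ) (t : Fˣ) : R (hh t) * eB ψ A R = A t • eB ψ A R := by
  rw [eB, ← mul_assoc, hh_ex_zero, mul_assoc, hh_eT, Matrix.mul_smul]
theorem uu_eB (hψ : GoodPsi k ψ) (A : MulChar F ℂ) (u : UT k F) : R (uu u) * eB ψ A R = eB ψ A R := by
  rw [eB, ← mul_assoc, uu_ex R hψ]; simp
theorem eB_uu (hψ : GoodPsi k ψ) (A : MulChar F ℂ) (u : UT k F) : eB ψ A R * R (uu u) = eB ψ A R := by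
  rw [eB, ← eT_P, mul_assoc, ex_uu R hψ]; simp
theorem eB_idem (hψ : GoodPsi k ψ) (A : MulChar F ℂ) : eB ψ A R * eB ψ A R = eB ψ A R := by
  rw [eB, mul_assoc, ← mul_assoc (eT A R), eT_P, mul_assoc (ex ψ R 0) (eT A R), eT_idem, ← mul_assoc, ex_idem R hψ]

theorem eB_small (hψ : GoodPsi k ψ) (A : MulChar F ℂ) (u : UT k F) (t : Fˣ) :
    eB ψ A R * R (uu u * hh t) * eB ψ A R = A t • eB ψ A R := by
  rw [map_mul, ← mul_assoc, eB_uu hψ, eB_hh, Matrix.smul_mul, eB_idem hψ]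

theorem eB_big (hψ : GoodPsi k ψ) (A : MulChar F ℂ) (u : UT k F) (t : Fˣ) (v : UT k F) :
    eB ψ A R * R (uu u * hh t * ww * uu v) * eB ψ A R = A t • (eB ψ A R * R ww * eB ψ A R) := by
  rw [map_mul, map_mul, map_mul, ← mul_assoc, ← mul_assoc, ← mul_assoc, eB_uu hψ, eB_hh, Matrix.smul_mul,
    Matrix.smul_mul, Matrix.smul_mul, mul_assoc (eB ψ A R * R ww), uu_eB hψ]

theorem card_GG : (Fintype.card (GG k F) : ℂ) = (2 ^ k) ^ 3 * ((2 ^ k) ^ 2 - 1) * (1 + (2 ^ k) ^ 3) := by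
  have h := sum_bruhat (k := k) (F := F) (fun _ => (1 : ℂ))
  simp only [Finset.sum_const, Finset.card_univ, nsmul_eq_mul, mul_one, card_UT, card_units (k := k)] at h
  rw [h]; ring

theorem A_inv_units (A : MulChar F ℂ) (t : Fˣ) : A ((t⁻¹ : Fˣ) : F) = (A t)⁻¹ := by
  have : A ((t⁻¹ : Fˣ) : F) * A t = 1 := by rw [← map_mul]; simp
  exact eq_inv_of_mul_eq_one_left this

/-- main case 1 computation -/
theorem case1_core (hψ : GoodPsi k ψ) (hR : IrrR R) (A : MulChar F ℂ) (v : Fin n → ℂ) (hv : v ≠ 0)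
    (hPv : ex ψ R 0 *ᵥ v = v) (hA : ∀ t : Fˣ, R (hh t) *ᵥ v = A t • v) :
    ∃ c : ℂ, eB ψ A R * R ww * eB ψ A R = c • eB ψ A R ∧ (eB ψ A R).trace = 1 ∧ eB ψ A R *ᵥ v = v ∧
      (n : ℂ) * (1 + (2 ^ k) ^ 3 * c ^ 2) = 1 + (2 ^ k) ^ 3 := by
  set e := eB ψ A R with he
  have hev : e *ᵥ v = v := by
    rw [he, eB, ← Matrix.mulVec_mulVec]
    have : eT A R *ᵥ v = v := by
      rw [eT, Matrix.smul_mulVec, Matrix.sum_mulVec]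
      have : ∀ t : Fˣ, ((A t)⁻¹ • R (hh t)) *ᵥ v = v := by
        intro t
        rw [Matrix.smul_mulVec, hA, smul_smul, inv_mul_cancel₀ (A_ne A t), one_smul]
      simp only [this, Finset.sum_const, Finset.card_univ]
      rw [← Nat.cast_smul_eq_nsmul ℂ, card_units (k := k), smul_smul, inv_mul_cancel₀ (q21_ne k F), one_smul]
    rw [this, hPv]
  have hen : e ≠ 0 := by
    intro h; rw [h, Matrix.zero_mulVec] at hev; exact hv hev.symm
  have hee : e * e = e := eB_idem (R := R) hψ A
  have hcases : ∀ g, (∃ a : ℂ, e * R g * e = a • e) ∨ (∃ a : ℂ, e * R g * e = a • (e * R ww * e)) := by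
    intro g
    obtain ⟨x, rfl⟩ := brMap_bij.2 g
    rcases x with ⟨u, t⟩ | ⟨u, t, v⟩
    · left; exact ⟨_, eB_small hψ A u t⟩
    · right; exact ⟨_, eB_big hψ A u t v⟩
  have heW : e * (e * R ww * e) = e * R ww * e := by simp only [← mul_assoc]; rw [hee]
  have hWe : (e * R ww * e) * e = e * R ww * e := by rw [mul_assoc, hee]
  obtain ⟨hk1, htr⟩ := hecke hR e hee hen (by
    intro g h
    rcases hcases g with ⟨a, ha⟩ | ⟨a, ha⟩ <;> rcases hcases h with ⟨b, hb⟩ | ⟨b, hb⟩ <;>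
      rw [ha, hb] <;> simp only [Matrix.smul_mul, Matrix.mul_smul, hee, heW, hWe, smul_smul, mul_comm a b])
  obtain ⟨c, hc⟩ := hk1 ww
  refine ⟨c, hc, htr, hev, ?_⟩
  have havg := irr_avg hR e
  have h2 : ∑ g, (e * R g * e) * (e * R g⁻¹ * e) = ((Fintype.card (GG k F) : ℂ) / n) • e := by
    have := congrArg (fun X => e * X * e) havg
    simp only [Matrix.mul_smul, Matrix.smul_mul, mul_one, hee, htr] at this
    rw [← this, Finset.mul_sum, Finset.sum_mul]
    refine Finset.sum_congr rfl fun g _ => ?_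
    have : e * R g * e * (e * R g⁻¹ * e) = e * R g * (e * e) * R g⁻¹ * e := by simp only [mul_assoc]
    rw [this, hee]; simp only [mul_assoc]
  rw [sum_bruhat] at h2
  have hs : ∀ (u : UT k F) (t : Fˣ), (e * R (uu u * hh t) * e) * (e * R (uu u * hh t)⁻¹ * e) = e := by
    intro u t
    have e1 := eB_small (R := R) hψ A u t
    have e2 : e * R (uu u * hh t)⁻¹ * e = (A t)⁻¹ • e := by
      rw [_root_.mul_inv_rev, ← hh_inv, ← uu_inv, hh_uu, eB_small hψ, A_inv_units]
    rw [e1, e2, Matrix.smul_mul, Matrix.mul_smul, hee, smul_smul, mul_inv_cancel₀ (A_ne A t), one_smul]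
  have hb : ∀ (u : UT k F) (t : Fˣ) (v : UT k F), (e * R (uu u * hh t * ww * uu v) * e) * (e * R (uu u * hh t * ww * uu v)⁻¹ * e) = (c ^ 2) • e := by
    intro u t v
    have e1 := eB_big (R := R) hψ A u t v
    have e2 : e * R (uu u * hh t * ww * uu v)⁻¹ * e = (A t)⁻¹ • (e * R ww * e) := by
      have : (uu u * hh t * ww * uu v)⁻¹ = uu v⁻¹ * hh 1 * ww * (hh t⁻¹ * uu u⁻¹) := by
        rw [hh_one, uu_inv, uu_inv, hh_inv, _root_.mul_inv_rev, _root_.mul_inv_rev, _root_.mul_inv_rev, ww_inv]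
        group
      rw [this, map_mul, map_mul R (hh t⁻¹)]
      calc e * (R (uu v⁻¹ * hh 1 * ww) * (R (hh t⁻¹) * R (uu u⁻¹))) * e
          = e * R (uu v⁻¹ * hh 1 * ww) * (R (hh t⁻¹) * (R (uu u⁻¹) * e)) := by simp only [mul_assoc]
        _ = _ := by
          rw [uu_eB hψ, hh_eB, A_inv_units, Matrix.mul_smul]
          have := eB_big (R := R) hψ A v⁻¹ 1 1
          rw [uu_one, mul_one] at this
          rw [this]; simp only [Units.val_one, map_one, one_smul]; rfl
    rw [e1, e2, hc, Matrix.smul_mul, Matrix.mul_smul, Matrix.smul_mul, Matrix.mul_smul, hee, smul_smul, smul_smul, smul_smul]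
    congr 1
    have := A_ne A t
    field_simp
  simp only [hs, hb, Finset.sum_const, Finset.card_univ, ← Nat.cast_smul_eq_nsmul ℂ, smul_smul, card_UT, card_units (k := k), ← add_smul, card_GG] at h2
  have h3 := congrArg Matrix.trace h2
  simp only [Matrix.trace_smul, htr, smul_eq_mul, mul_one] at h3
  have hn : (n : ℂ) ≠ 0 := by exact_mod_cast hR.1.ne'
  have hq := qC_ne k
  have hq2 := q21_ne k F
  rw [eq_div_iff hn] at h3
  have h4 : ((2 : ℂ) ^ k) ^ 3 * ((2 ^ k) ^ 2 - 1) ≠ 0 := mul_ne_zero (pow_ne_zero _ hq) hq2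
  apply mul_left_cancel₀ h4
  linear_combination h3

end case1
end Paper

namespace Paper

section case1b
open scoped Classical ComplexOrder

variable {k : ℕ} {F : Type} [Field F] [Fintype F] [ExpChar F 2] [hS : Setup k F] {n : ℕ}
variable {ψ : AddChar F ℂ} {R : GG k F →* Matrix (Fin n) (Fin n) ℂ}

theorem ww_eT (A : MulChar F ℂ) (hA : ∀ t : Fˣ, A (tbar k t : Fˣ) = A t) :
    R ww * eT A R = eT A R * R ww := by
  rw [eT, Matrix.mul_smul, Matrix.smul_mul, Finset.mul_sum, Finset.sum_mul]
  congr 1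
  refine Fintype.sum_bijective (tbar k) (Function.Involutive.bijective fun t => tbar_tbar t) _ _ fun t => ?_
  rw [Matrix.mul_smul, Matrix.smul_mul, hA, ← map_mul R, ← map_mul R, ww_hh]

theorem A_triv (A : MulChar F ℂ) (hA : ∀ t : Fˣ, A (tbar k t : Fˣ) = A t) (c : F) (hc : sg k c = c) (hc0 : c ≠ 0) :
    A c = 1 := by
  obtain ⟨x, hx⟩ := exists_norm k hc
  have hx0 : x ≠ 0 := by rintro rfl; simp at hx; exact hc0 hx.symm
  have h := hA (Units.mk0 x hx0)
  rw [tbar_val] at h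
  simp only [Units.val_mk0] at h
  have h2 : A (sg k x) * A (sg k x)⁻¹ = 1 := by
    rw [← map_mul, mul_inv_cancel₀ (sg_ne k hx0), map_one]
  rw [← hx, map_mul, ← h, mul_comm] 
  exact h2

/-- the class of data obtained in case 1 -/
structure Case1 (ψ : AddChar F ℂ) (R : GG k F →* Matrix (Fin n) (Fin n) ℂ) (A : MulChar F ℂ) : Prop where
  tr : (eB ψ A R).trace = 1
  ew : eB ψ A R * R ww * eB ψ A R = (((2 : ℂ) ^ k) ^ 2)⁻¹ • eB ψ A R
  ne : A ≠ 1
  sym : ∀ t : Fˣ, A (tbar k t : Fˣ) = A t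
  triv : ∀ c : F, sg k c = c → c ≠ 0 → A c = 1
  dim : (n : ℂ) = 2 ^ k * ((2 ^ k) ^ 2 - 2 ^ k + 1)

theorem case1_quad (hψ : GoodPsi k ψ) (A : MulChar F ℂ) (hA : ∀ t : Fˣ, A (tbar k t : Fˣ) = A t) (c : ℂ)
    (hc : eB ψ A R * R ww * eB ψ A R = c • eB ψ A R) (htr : (eB ψ A R).trace = 1) :
    (2 ^ k) ^ 3 * c ^ 2 = 1 + (∑ u : UT k F, A u.b) * c := by
  have h1 : eB ψ A R * R ww * ex ψ R 0 * R ww * eB ψ A R = (c ^ 2) • eB ψ A R := by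
    calc eB ψ A R * R ww * ex ψ R 0 * R ww * eB ψ A R
        = eB ψ A R * R ww * ex ψ R 0 * R ww * (eT A R * eB ψ A R) := by
          congr 1
          rw [eB, ← mul_assoc, eT_P, mul_assoc, eT_idem]
      _ = eB ψ A R * R ww * ex ψ R 0 * (R ww * eT A R) * eB ψ A R := by simp only [mul_assoc]
      _ = (eB ψ A R * R ww * eB ψ A R) * R ww * eB ψ A R := by
          rw [ww_eT A hA]; simp only [eB, mul_assoc]
      _ = _ := by rw [hc, Matrix.smul_mul, Matrix.smul_mul, hc, smul_smul, sq]
  have h2 : ∀ u : UT k F, eB ψ A R * R ww * R (uu u) * R ww * eB ψ A R =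
      ((if u = 1 then 1 else 0) + A u.b * c) • eB ψ A R := by
    intro u
    by_cases hu : u = 1
    · subst hu
      rw [uu_one, map_one, mul_one, mul_assoc (eB ψ A R), ← map_mul, ww_ww, map_one, mul_one, eB_idem hψ]
      simp [MulChar.map_zero]
    · have e1 : eB ψ A R * R ww * R (uu u) * R ww * eB ψ A R = eB ψ A R * R (ww * uu u * ww) * eB ψ A R := by
        simp only [map_mul R, mul_assoc]
      rw [e1, ww_uu_ww u hu, eB_big hψ, hA, hc, smul_smul, if_neg hu, zero_add]
      rfl
  have h3 : eB ψ A R * R ww * ex ψ R 0 * R ww * eB ψ A R = ((((2 : ℂ) ^ k) ^ 3)⁻¹ * (1 + (∑ u : UT k F, A u.b) * c)) • eB ψ A R := by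
    rw [ex]
    simp only [Matrix.mul_smul, Matrix.smul_mul, Finset.mul_sum, Finset.sum_mul, zero_mul, AddChar.map_zero_eq_one, one_smul]
    simp only [h2]
    rw [← Finset.sum_smul, smul_smul]
    congr 2
    rw [Finset.sum_add_distrib, Finset.sum_ite_eq', if_pos (Finset.mem_univ _)]
  rw [h1] at h3
  have h4 := congrArg Matrix.trace h3
  simp only [Matrix.trace_smul, htr, smul_eq_mul, mul_one] at h4
  have hq := qC_ne k
  rw [h4]; field_simp

theorem case1 (hψ : GoodPsi k ψ) (hR : IrrR R) (h0 : ex ψ R 0 ≠ 0) (hn : Even n)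
    (hnr : ∃ g, (starRingEnd ℂ) (R g).trace ≠ (R g).trace) : ∃ A : MulChar F ℂ, Case1 ψ R A := by
  obtain ⟨A, v, hv, hPv, hAv⟩ := exists_torus_eigen hψ h0
  obtain ⟨c, hc, htr, hev, hdim⟩ := case1_core hψ hR A v hv hPv hAv
  have hqe : Even (2 ^ k) := by
    have := Setup.hk (k := k) (F := F)
    exact (Nat.even_pow.2 ⟨even_two, by omega⟩)
  have hq := qC_ne k
  have hq1 : ((2 : ℂ) ^ k + 1) ≠ 0 := by
    have : ((2 ^ k + 1 : ℕ) : ℂ) ≠ 0 := Nat.cast_ne_zero.2 (Nat.succ_ne_zero _)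
    push_cast at this; exact this
  have hq3 : (1 + ((2 : ℂ) ^ k) ^ 3) ≠ 0 := by
    have : ((1 + (2 ^ k) ^ 3 : ℕ) : ℂ) ≠ 0 := by exact_mod_cast (by positivity : (1 + (2 ^ k) ^ 3 : ℕ) ≠ 0)
    push_cast at this; exact this
  by_cases hA : ∀ t : Fˣ, A (tbar k t : Fˣ) = A t
  swap
  · exfalso
    push Not at hA
    obtain ⟨t, ht⟩ := hA
    have h1 : A t • (eB ψ A R * R ww * eB ψ A R) = A (tbar k t : Fˣ) • (eB ψ A R * R ww * eB ψ A R) := by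
      rw [← Matrix.mul_smul, ← hh_eB, ← mul_assoc, mul_assoc (eB ψ A R), ← map_mul, ww_hh, map_mul, ← mul_assoc,
        eB_hh, Matrix.smul_mul, Matrix.smul_mul]
    rw [hc, smul_smul, smul_smul] at h1
    have h4 := congrArg Matrix.trace h1
    simp only [Matrix.trace_smul, htr, smul_eq_mul, mul_one] at h4
    have hc0 : c = 0 := by
      by_contra hc0
      exact ht (mul_right_cancel₀ hc0 h4).symm
    rw [hc0] at hdim
    have : n = 1 + (2 ^ k) ^ 3 := by
      have : (n : ℂ) = ((1 + (2 ^ k) ^ 3 : ℕ) : ℂ) := by push_cast; linear_combination hdim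
      exact_mod_cast this
    rw [this, Nat.even_add, Nat.even_pow] at hn
    simp [hqe] at hn
  · have htriv := A_triv (k := k) A hA
    have hquad := case1_quad hψ A hA c hc htr
    have hS := sum_S (k := k) A htriv (fun _ => 1) rfl
    simp only [one_mul, Finset.sum_const, Finset.card_univ, Setup.card (k := k) (F := F), nsmul_eq_mul, mul_one] at hS
    push_cast at hS
    by_cases hA1 : A = 1
    · exfalso
      subst hA1
      rw [T1_one (k := k)] at hS
      rw [hS] at hquad
      have hf : (c - 1) * ((2 ^ k) ^ 3 * c + 1) = 0 := by linear_combination hquad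
      rcases mul_eq_zero.1 hf with h | h
      · have hc1 : c = 1 := by linear_combination h
        rw [hc1] at hdim
        have : n = 1 := by
          have : (n : ℂ) = ((1 : ℕ) : ℂ) := by
            push_cast
            apply mul_right_cancel₀ hq3; linear_combination hdim
          exact_mod_cast this
        subst this
        exact absurd hn (by decide)
      · have hcr : (starRingEnd ℂ) c = c := by
          have : c = -(((2 : ℂ) ^ k) ^ 3)⁻¹ := by field_simp; linear_combination h
          rw [this, map_neg, map_inv₀, map_pow, map_pow, map_ofNat]
        obtain ⟨g, hg⟩ := hnr
        apply hg
        have havg := irr_avg hR (eB ψ 1 R)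
        have h1 := congrArg (fun X => (R g * X).trace) havg
        simp only [htr, Matrix.mul_smul, mul_one, Matrix.trace_smul, smul_eq_mul, Finset.mul_sum, Matrix.trace_sum] at h1
        have hcl : ∀ y : GG k F, (starRingEnd ℂ) (eB ψ 1 R * R y * eB ψ 1 R).trace = (eB ψ 1 R * R y * eB ψ 1 R).trace := by
          intro y
          obtain ⟨x, rfl⟩ := brMap_bij.2 y
          rcases x with ⟨u, t⟩ | ⟨u, t, v⟩
          · simp only [brMap]; rw [eB_small hψ, Matrix.trace_smul, htr, MulChar.one_apply t.isUnit]; simp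
          · simp only [brMap]; rw [eB_big hψ, hc, Matrix.trace_smul, Matrix.trace_smul, htr, MulChar.one_apply t.isUnit]; simp [hcr]
        have h2 : ∀ x, (R g * (R x * eB ψ 1 R * R x⁻¹)).trace = (eB ψ 1 R * R (x⁻¹ * g * x) * eB ψ 1 R).trace := by
          intro x
          rw [Matrix.trace_mul_comm (eB ψ 1 R * _), ← mul_assoc (eB ψ 1 R), eB_idem hψ, ← mul_assoc, Matrix.trace_mul_comm,
            ← mul_assoc, ← mul_assoc, ← map_mul, ← map_mul, Matrix.trace_mul_comm]
        have hn0 : (n : ℂ) ≠ 0 := by exact_mod_cast hR.1.ne'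
        have hG : (Fintype.card (GG k F) : ℂ) ≠ 0 := by exact_mod_cast Fintype.card_ne_zero
        have h3 : (R g).trace = n / (Fintype.card (GG k F)) * ∑ x, (eB ψ 1 R * R (x⁻¹ * g * x) * eB ψ 1 R).trace := by
          simp only [← h2, h1]
          field_simp
        rw [h3, map_mul, map_sum]
        simp only [hcl, map_div₀, map_natCast]
    · rw [T1_ne (k := k) A htriv hA1] at hS
      rw [hS] at hquad
      have hf : ((2 ^ k) ^ 2 * c - 1) * (2 ^ k * c + 1) = 0 := by linear_combination hquad
      rcases mul_eq_zero.1 hf with h | h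
      · have hc1 : c = (((2 : ℂ) ^ k) ^ 2)⁻¹ := by field_simp; linear_combination h
        refine ⟨A, htr, by rw [hc, hc1], hA1, hA, htriv, ?_⟩
        apply mul_right_cancel₀ hq1
        have : ((2:ℂ)^k)^3 * c^2 = (2^k)⁻¹ := by rw [hc1]; field_simp
        rw [this] at hdim
        field_simp at hdim
        linear_combination hdim
      · exfalso
        have : ((2:ℂ)^k)^3 * c^2 = 2^k := by linear_combination ((2:ℂ)^k)^2 * c * h - (2^k) * h
        rw [this] at hdim
        have h5 : n + 2 ^ k = (2 ^ k) ^ 2 + 1 := by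
          have : ((n + 2 ^ k : ℕ) : ℂ) = (((2 ^ k) ^ 2 + 1 : ℕ) : ℂ) := by
            push_cast
            apply mul_right_cancel₀ hq1; linear_combination hdim
          exact_mod_cast this
        have h6 : Even (n + 2 ^ k) := hn.add hqe
        rw [h5, Nat.even_add, Nat.even_pow] at h6
        simp [hqe] at h6

end case1b
end Paper

namespace Paper

section lam
open scoped Classical ComplexOrder

variable {k : ℕ} {F : Type} [Field F] [Fintype F] [ExpChar F 2] [hS : Setup k F] {n : ℕ}

abbrev AC (k : ℕ) (F : Type) [Field F] [Fintype F] [ExpChar F 2] [hS : Setup k F] := AddChar (Fq k F) ℂ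

theorem AC_sq (l : AC k F) (c : Fq k F) : l c * l c = 1 := by
  rw [← AddChar.map_add_eq_mul]
  have : c + c = 0 := Subtype.ext (add_self2 (c : F))
  rw [this, AddChar.map_zero_eq_one]

theorem AC_pm (l : AC k F) (c : Fq k F) : l c = 1 ∨ l c = -1 := by
  have h := AC_sq l c
  have : (l c - 1) * (l c + 1) = 0 := by linear_combination h
  rcases mul_eq_zero.1 this with h | h
  · left; linear_combination h
  · right; linear_combination h

/-- data attached to a nontrivial character of the centre -/
theorem exists_pair (l : AC k F) (hl : l ≠ 0) : ∃ e y : UT k F, ∃ c d : Fq k F,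
    e * e = zU c ∧ l c = 1 ∧ e * y = y * e * zU d ∧ l d = -1 := by
  obtain ⟨c, hc0, hc⟩ : ∃ c : Fq k F, c ≠ 0 ∧ l c = 1 := by
    by_contra hcon
    push Not at hcon
    have h1 : ∀ c : Fq k F, c ≠ 0 → l c = -1 := fun c hc => (AC_pm l c).resolve_left (hcon c hc)
    have h2 : ∀ c : Fq k F, c ≠ 0 → c = 1 := by
      intro c hc
      by_contra hc1
      have h3 : c + 1 ≠ 0 := by
        intro h
        have := congrArg (Subtype.val) h
        exact hc1 (Subtype.ext (add_eq_zero2.1 this))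
      have := h1 _ h3
      rw [AddChar.map_add_eq_mul, h1 c hc, h1 1 one_ne_zero] at this
      norm_num at this
    have h3 : Fintype.card (Fq k F) ≤ 2 := by
      have : (Finset.univ : Finset (Fq k F)) ⊆ {0, 1} := by
        intro c _
        by_cases hc : c = 0
        · simp [hc]
        · simp [h2 c hc]
      exact (Finset.card_le_card this).trans Finset.card_le_two
    have := q_ge k F
    rw [card_Fq] at h3
    omega
  obtain ⟨d, hd⟩ : ∃ d, l d ≠ 1 := by
    by_contra hcon
    push Not at hcon
    exact hl (by ext c; rw [hcon c, AddChar.zero_apply])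
  have hd' := (AC_pm l d).resolve_left hd
  obtain ⟨a, ha⟩ := exists_norm k (F := F) (c := c) ((mem_Fq k).1 c.2)
  have ha0 : a ≠ 0 := by
    rintro rfl
    simp at ha
    exact hc0 (Subtype.ext (by simpa using ha.symm))
  obtain ⟨b, hb⟩ := exists_trace k (F := F) (c := a * sg k a) (by rw [map_mul, sg_sg, mul_comm])
  obtain ⟨x, hx⟩ := exists_trace k (F := F) (c := d) ((mem_Fq k).1 d.2)
  obtain ⟨b', hb'⟩ := exists_trace k (F := F) (c := sg k (x / a) * sg k (sg k (x / a))) (by rw [map_mul, sg_sg, mul_comm])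
  refine ⟨UT.mk' a b hb, UT.mk' (sg k (x / a)) b' hb', c, d, ?_, hc, ?_, hd'⟩
  · apply UT.ext'
    · simp [add_self2]
    · simp [add_self2, ha]
  · apply UT.ext'
    · simp [add_comm]
    · simp only [UT.mul_b, UT.mk'_a, UT.mk'_b, zU_b, zU_a, sg_sg, map_zero, mul_zero, add_zero, ← hx]
      have h2 := two_eq_zero' (F := F)
      have hsa := sg_ne k ha0
      rw [map_div₀]
      field_simp
      linear_combination (-sg k x) * h2

/-- central projections -/
def PL (R : GG k F →* Matrix (Fin n) (Fin n) ℂ) (l : AC k F) : Matrix (Fin n) (Fin n) ℂ :=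
  ((2 : ℂ) ^ k)⁻¹ • ∑ c : Fq k F, l c • R (uu (zU c))

variable (R : GG k F →* Matrix (Fin n) (Fin n) ℂ)

theorem PL_uu (l : AC k F) (u : UT k F) : PL R l * R (uu u) = R (uu u) * PL R l := by
  rw [PL, Matrix.mul_smul, Matrix.smul_mul, Finset.mul_sum, Finset.sum_mul]
  congr 1
  refine Finset.sum_congr rfl fun c _ => ?_
  rw [Matrix.mul_smul, Matrix.smul_mul, ← map_mul R, ← map_mul R, ← uu_mul, ← uu_mul, zU_comm]

theorem zU_PL (l : AC k F) (c : Fq k F) : R (uu (zU c)) * PL R l = l c • PL R l := by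
  rw [PL, Matrix.mul_smul, smul_comm, Finset.mul_sum]
  refine congrArg (fun M : Matrix (Fin n) (Fin n) ℂ => ((2 : ℂ) ^ k)⁻¹ • M) ?_
  rw [Finset.smul_sum]
  refine Fintype.sum_equiv (Equiv.addLeft c) _ _ fun d => ?_
  rw [Matrix.mul_smul, ← map_mul R, ← uu_mul, ← zU_add, smul_smul]
  congr 1
  simp only [Equiv.coe_addLeft, AddChar.map_add_eq_mul]
  rw [← mul_assoc, AC_sq, one_mul]

theorem PL_mul_PL (l m : AC k F) : PL R l * PL R m = if l = m then PL R l else 0 := by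
  have h1 : PL R l * PL R m = ((((2 : ℂ) ^ k))⁻¹ * ∑ c : Fq k F, (l + m) c) • PL R m := by
    conv_lhs => rw [PL.eq_1 R l]
    rw [Matrix.smul_mul, Finset.sum_mul, mul_smul, Finset.sum_smul]
    refine congrArg (fun M : Matrix (Fin n) (Fin n) ℂ => ((2 : ℂ) ^ k)⁻¹ • M) ?_
    refine Finset.sum_congr rfl fun c _ => ?_
    rw [Matrix.smul_mul, zU_PL, smul_smul, AddChar.add_apply]
  rw [h1, AddChar.sum_eq_ite]
  have hz : l + m = 0 ↔ l = m := by
    constructor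
    · intro h
      ext c
      have h2 : l c * m c = 1 := by rw [← AddChar.add_apply, h, AddChar.zero_apply]
      have h3 := AC_sq m c
      have hm : m c ≠ 0 := by intro h0; rw [h0] at h3; simp at h3
      exact mul_right_cancel₀ hm (h2.trans h3.symm)
    · rintro rfl
      ext c
      rw [AddChar.add_apply, AC_sq, AddChar.zero_apply]
  by_cases h : l = m
  · rw [if_pos (hz.2 h), if_pos h, card_Fq]
    push_cast
    rw [inv_mul_cancel₀ (qC_ne k), one_smul, h]
  · rw [if_neg (fun h' => h (hz.1 h')), if_neg h]; simp

theorem PL_sum : ∑ l : AC k F, PL R l = 1 := by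
  simp only [PL]
  rw [← Finset.smul_sum, Finset.sum_comm]
  have : ∀ c : Fq k F, ∑ l : AC k F, l c • R (uu (zU c)) = if c = 0 then ((2 : ℂ) ^ k) • (1 : Matrix (Fin n) (Fin n) ℂ) else 0 := by
    intro c
    rw [← Finset.sum_smul, AddChar.sum_apply_eq_ite]
    split_ifs with h
    · subst h; rw [zU_zero, uu_one, map_one, card_Fq]; push_cast; rfl
    · simp
  simp only [this]
  rw [Finset.sum_ite_eq', if_pos (Finset.mem_univ _), smul_smul, inv_mul_cancel₀ (qC_ne k), one_smul]

theorem PL_idem (l : AC k F) : PL R l * PL R l = PL R l := by rw [PL_mul_PL, if_pos rfl]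

/-- chosen elements -/
def eL (l : AC k F) : UT k F := if h : l ≠ 0 then (exists_pair l h).choose else 1
def yL (l : AC k F) : UT k F := if h : l ≠ 0 then (exists_pair l h).choose_spec.choose else 1

theorem eL_yL (l : AC k F) (hl : l ≠ 0) : ∃ c d : Fq k F,
    eL l * eL l = zU c ∧ l c = 1 ∧ eL l * yL l = yL l * eL l * zU d ∧ l d = -1 := by
  rw [eL, yL, dif_pos hl, dif_pos hl]
  exact (exists_pair l hl).choose_spec.choose_spec

theorem eL_sq (l : AC k F) (hl : l ≠ 0) : R (uu (eL l)) * R (uu (eL l)) * PL R l = PL R l := by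
  obtain ⟨c, d, h1, h2, -⟩ := eL_yL l hl
  rw [← map_mul R, ← uu_mul, h1, zU_PL, h2, one_smul]

theorem eL_yL_anti (l : AC k F) (hl : l ≠ 0) :
    R (uu (eL l)) * R (uu (yL l)) * PL R l = -(R (uu (yL l)) * R (uu (eL l)) * PL R l) := by
  obtain ⟨c, d, -, -, h1, h2⟩ := eL_yL l hl
  rw [← map_mul R, ← uu_mul, h1, uu_mul, uu_mul, map_mul, map_mul, mul_assoc, zU_PL, h2]
  simp

/-- half projections -/
def Pp (l : AC k F) : Matrix (Fin n) (Fin n) ℂ := (2 : ℂ)⁻¹ • ((1 + R (uu (eL l))) * PL R l)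
def Pm (l : AC k F) : Matrix (Fin n) (Fin n) ℂ := (2 : ℂ)⁻¹ • ((1 - R (uu (eL l))) * PL R l)

theorem Pp_add_Pm (l : AC k F) : Pp R l + Pm R l = PL R l := by
  rw [Pp, Pm, ← smul_add, ← add_mul]
  have : (1 + R (uu (eL l)) + (1 - R (uu (eL l)))) = (2 : ℂ) • 1 := by
    rw [two_smul]; abel
  rw [this, Matrix.smul_mul, smul_smul, one_mul]; norm_num

theorem PL_Pp (l : AC k F) : PL R l * Pp R l = Pp R l := by
  rw [Pp, Matrix.mul_smul, ← mul_assoc, mul_add, mul_one, PL_uu, add_mul, add_mul, mul_assoc (R _), PL_idem, one_mul]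
theorem PL_Pm (l : AC k F) : PL R l * Pm R l = Pm R l := by
  rw [Pm, Matrix.mul_smul, ← mul_assoc, mul_sub, mul_one, PL_uu, sub_mul, sub_mul, mul_assoc (R _), PL_idem, one_mul]
theorem Pp_PL (l : AC k F) : Pp R l * PL R l = Pp R l := by
  rw [Pp, Matrix.smul_mul, mul_assoc, PL_idem]
theorem Pm_PL (l : AC k F) : Pm R l * PL R l = Pm R l := by
  rw [Pm, Matrix.smul_mul, mul_assoc, PL_idem]

theorem eL_Pp (l : AC k F) (hl : l ≠ 0) : R (uu (eL l)) * Pp R l = Pp R l := by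
  rw [Pp, Matrix.mul_smul, ← mul_assoc, mul_add, mul_one, add_mul, eL_sq R l hl, add_mul, one_mul, add_comm]
theorem eL_Pm (l : AC k F) (hl : l ≠ 0) : R (uu (eL l)) * Pm R l = -Pm R l := by
  rw [Pm, Matrix.mul_smul, ← mul_assoc, mul_sub, mul_one, sub_mul, eL_sq R l hl, sub_mul, one_mul, ← smul_neg, neg_sub]

theorem Pp_idem (l : AC k F) (hl : l ≠ 0) : Pp R l * Pp R l = Pp R l := by
  have h0 : Pp R l * Pp R l = ((2 : ℂ)⁻¹ • ((1 + R (uu (eL l))) * PL R l)) * Pp R l := rfl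
  rw [h0, Matrix.smul_mul, mul_assoc, PL_Pp, add_mul, one_mul, eL_Pp R l hl, ← two_smul ℂ, smul_smul]; norm_num
theorem Pm_idem (l : AC k F) (hl : l ≠ 0) : Pm R l * Pm R l = Pm R l := by
  have h0 : Pm R l * Pm R l = ((2 : ℂ)⁻¹ • ((1 - R (uu (eL l))) * PL R l)) * Pm R l := rfl
  rw [h0, Matrix.smul_mul, mul_assoc, PL_Pm, sub_mul, one_mul, eL_Pm R l hl, sub_neg_eq_add, ← two_smul ℂ, smul_smul]; norm_num

theorem yL_Pp (l : AC k F) (hl : l ≠ 0) : R (uu (yL l)) * Pp R l = Pm R l * R (uu (yL l)) := by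
  rw [Pp, Pm, Matrix.mul_smul, Matrix.smul_mul, mul_assoc _ (PL R l), PL_uu, ← mul_assoc, ← mul_assoc]
  congr 1
  rw [sub_mul, sub_mul, mul_add, add_mul, one_mul, mul_one, eL_yL_anti R l hl, sub_neg_eq_add]

theorem PL_trace_even (l : AC k F) (hl : l ≠ 0) : ∃ m : ℕ, (PL R l).trace = 2 * m := by
  obtain ⟨m, hm⟩ := idem_trace_nat _ (Pp_idem R l hl)
  refine ⟨m, ?_⟩
  have h1 : Pm R l = R (uu (yL l)) * Pp R l * R (uu (yL l))⁻¹ := by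
    rw [yL_Pp R l hl, mul_assoc, R_mul_inv, mul_one]
  have h2 : (Pm R l).trace = m := by
    rw [h1, Matrix.trace_mul_comm, ← mul_assoc, R_inv_mul, one_mul, hm]
  rw [← Pp_add_Pm, Matrix.trace_add, hm, h2]; ring

theorem PL_zero {ψ : AddChar F ℂ} (hψ : GoodPsi k ψ) : PL R 0 = ∑ x, ex ψ R x := by
  simp only [ex]
  rw [← Finset.smul_sum, Finset.sum_comm]
  have h1 : ∀ u : UT k F, ∑ x, ψ (x * u.a) • R (uu u) = if u.a = 0 then ((2 : ℂ) ^ k) ^ 2 • R (uu u) else 0 := by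
    intro u
    rw [← Finset.sum_smul]
    simp only [mul_comm _ u.a]
    rw [hψ.sum]
    split_ifs <;> simp
  simp only [h1]
  rw [← Finset.sum_filter, ← Finset.smul_sum, smul_smul, PL]
  have hq := qC_ne k
  congr 1
  · field_simp
  · simp only [AddChar.zero_apply, one_smul]
    refine Finset.sum_bij' (fun c _ => zU c) (fun u hu => ⟨u.b, ?_⟩) ?_ ?_ ?_ ?_ ?_
    · have h := u.rel
      rw [Finset.mem_filter] at hu
      rw [hu.2, zero_mul, add_eq_zero2] at h
      exact h.symm
    · intro c _; simp
    · intro c _; simp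
    · intro c _; rfl
    · intro u hu; rw [Finset.mem_filter] at hu; exact UT.ext' (by simp [hu.2]) rfl
    · intro c _; rfl

end lam
end Paper

namespace Paper

section autos
open scoped Classical ComplexOrder

variable {k : ℕ} {F : Type} [Field F] [Fintype F] [ExpChar F 2] [hS : Setup k F] {n : ℕ}

/-- norm one elements -/
def Mu (k : ℕ) (F : Type) [Field F] [Fintype F] [ExpChar F 2] := {y : F // y * sg k y = 1}

instance : Fintype (Mu k F) := by unfold Mu; infer_instance

theorem Mu.ne (y : Mu k F) : y.1 ≠ 0 := by
  intro h; have := y.2; rw [h, zero_mul] at this; exact zero_ne_one this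

theorem mkG_of_entries {M : Matrix (Fin 3) (Fin 3) F}
    (h : ∀ i j, sg k (M 0 i) * M 2 j + sg k (M 1 i) * M 1 j + sg k (M 2 i) * M 0 j = Om F i j) :
    (M.map (sg k))ᵀ * Om F * M = Om F := by
  ext i j
  rw [← h i j, Om_eq]
  simp [Matrix.mul_apply, Fin.sum_univ_three]
  ring

/-- conjugation by `diag(1,y,1)` on matrices -/
def dMat (y : F) (M : Matrix (Fin 3) (Fin 3) F) : Matrix (Fin 3) (Fin 3) F :=
  !![M 0 0, M 0 1 * y, M 0 2; M 1 0 / y, M 1 1, M 1 2 / y; M 2 0, M 2 1 * y, M 2 2]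

theorem dMat_mul (y : F) (hy : y ≠ 0) (M N : Matrix (Fin 3) (Fin 3) F) :
    dMat y (M * N) = dMat y M * dMat y N := by
  ext i j
  fin_cases i <;> fin_cases j <;> simp [dMat, Matrix.mul_apply, Fin.sum_univ_three] <;> field_simp

theorem dMat_det (y : F) (hy : y ≠ 0) (M : Matrix (Fin 3) (Fin 3) F) : (dMat y M).det = M.det := by
  simp [dMat, Matrix.det_fin_three]; field_simp

theorem dMat_form (y : Mu k F) (g : GG k F) : ((dMat y.1 (mt g)).map (sg k))ᵀ * Om F * dMat y.1 (mt g) = Om F := by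
    have h := mt_form_entry g
    have hy := y.2
    have hy0 := y.ne
    have hs : sg k y.1 = y.1⁻¹ := eq_inv_of_mul_eq_one_right hy
    apply mkG_of_entries
    intro i j
    rw [Om_eq] at h ⊢
    fin_cases i <;> fin_cases j
    · have := h 0 0; simp [dMat, hs] at this ⊢; field_simp; linear_combination this
    · have := h 0 1; simp [dMat, hs] at this ⊢; field_simp; linear_combination y.1 * this
    · have := h 0 2; simp [dMat, hs] at this ⊢; field_simp; linear_combination this
    · have := h 1 0; simp [dMat, hs] at this ⊢; field_simp; linear_combination this
    · have := h 1 1; simp [dMat, hs] at this ⊢; field_simp; linear_combination this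
    · have := h 1 2; simp [dMat, hs] at this ⊢; field_simp; linear_combination this
    · have := h 2 0; simp [dMat, hs] at this ⊢; field_simp; linear_combination this
    · have := h 2 1; simp [dMat, hs] at this ⊢; field_simp; linear_combination y.1 * this
    · have := h 2 2; simp [dMat, hs] at this ⊢; field_simp; linear_combination this

/-- the automorphism -/
def Dy (y : Mu k F) : GG k F →* GG k F where
  toFun g := mkG (dMat y.1 (mt g)) (by rw [dMat_det _ y.ne, mt_det]) (dMat_form y g)
  map_one' := by
    apply mt_inj; rw [mt_mkG, mt_one]
    ext i j; fin_cases i <;> fin_cases j <;> simp [dMat]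
  map_mul' g h := by
    apply mt_inj; exact dMat_mul _ y.ne _ _

theorem mt_Dy (y : Mu k F) (g : GG k F) : mt (Dy y g) = dMat y.1 (mt g) := rfl

theorem mt_form_entry' (g : GG k F) (i j : Fin 3) :
    mt g i 0 * sg k (mt g j 2) + mt g i 1 * sg k (mt g j 1) + mt g i 2 * sg k (mt g j 0) = Om F i j := by
  have h := mt_form g
  have h1 : (Om F * ((mt g).map (sg k))ᵀ * Om F) * mt g = 1 := by
    rw [mul_assoc, mul_assoc, ← mul_assoc _ (Om F), h, Om_mul_Om]
  have h2 := mul_eq_one_comm.1 h1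
  have h3 : mt g * Om F * ((mt g).map (sg k))ᵀ = Om F := by
    calc mt g * Om F * ((mt g).map (sg k))ᵀ = mt g * (Om F * ((mt g).map (sg k))ᵀ * Om F) * Om F := by
          simp only [mul_assoc, Om_mul_Om, mul_one]
      _ = _ := by rw [h2, one_mul]
  have h4 := congrFun (congrFun h3 i) j
  rw [← h4]
  conv_rhs => rw [Om_eq]
  simp [Matrix.mul_apply, Fin.sum_univ_three]
  ring

/-- the antiautomorphism on matrices -/
def kMat (y : F) (M : Matrix (Fin 3) (Fin 3) F) : Matrix (Fin 3) (Fin 3) F :=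
  !![M 2 2, M 1 2 * y, M 0 2; M 2 1 / y, M 1 1, M 0 1 / y; M 2 0, M 1 0 * y, M 0 0]

theorem kMat_mul (y : F) (hy : y ≠ 0) (M N : Matrix (Fin 3) (Fin 3) F) :
    kMat y (M * N) = kMat y N * kMat y M := by
  ext i j
  fin_cases i <;> fin_cases j <;> simp [kMat, Matrix.mul_apply, Fin.sum_univ_three] <;> field_simp <;> ring

theorem kMat_det (y : F) (hy : y ≠ 0) (M : Matrix (Fin 3) (Fin 3) F) : (kMat y M).det = M.det := by
  simp [kMat, Matrix.det_fin_three]; field_simp; ring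

/-- the antiautomorphism -/
def Ky (y : Mu k F) (g : GG k F) : GG k F :=
  mkG (kMat y.1 (mt g)) (by rw [kMat_det _ y.ne, mt_det]) (by
    have h := mt_form_entry' g
    have hy := y.2
    have hy0 := y.ne
    have hs : sg k y.1 = y.1⁻¹ := eq_inv_of_mul_eq_one_right hy
    apply mkG_of_entries
    intro i j
    rw [Om_eq] at h ⊢
    fin_cases i <;> fin_cases j
    · have := h 2 2; simp [kMat, hs] at this ⊢; field_simp; linear_combination this
    · have := h 1 2; simp [kMat, hs] at this ⊢; field_simp; linear_combination y.1 * this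
    · have := h 0 2; simp [kMat, hs] at this ⊢; field_simp; linear_combination this
    · have := h 2 1; simp [kMat, hs] at this ⊢; field_simp; linear_combination this
    · have := h 1 1; simp [kMat, hs] at this ⊢; field_simp; linear_combination this
    · have := h 0 1; simp [kMat, hs] at this ⊢; field_simp; linear_combination this
    · have := h 2 0; simp [kMat, hs] at this ⊢; field_simp; linear_combination this
    · have := h 1 0; simp [kMat, hs] at this ⊢; field_simp; linear_combination y.1 * this
    · have := h 0 0; simp [kMat, hs] at this ⊢; field_simp; linear_combination this)

theorem mt_Ky (y : Mu k F) (g : GG k F) : mt (Ky y g) = kMat y.1 (mt g) := rfl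

theorem Ky_mul (y : Mu k F) (g h : GG k F) : Ky y (g * h) = Ky y h * Ky y g := by
  apply mt_inj; rw [mt_mul, mt_Ky, mt_Ky, mt_Ky, mt_mul, kMat_mul _ y.ne]

/-- action on the unipotent group -/
def kU (y : Mu k F) (u : UT k F) : UT k F := UT.mk' (y.1 * sg k u.a) u.b (by
  rw [map_mul, sg_sg, u.rel]; linear_combination (-(u.a * sg k u.a)) * y.2)
@[simp] theorem kU_a (y : Mu k F) (u : UT k F) : (kU y u).a = y.1 * sg k u.a := rfl
@[simp] theorem kU_b (y : Mu k F) (u : UT k F) : (kU y u).b = u.b := rfl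
theorem kU_kU (y : Mu k F) (u : UT k F) : kU y (kU y u) = u :=
  UT.ext' (by simp only [kU_a, map_mul, sg_sg, ← mul_assoc, y.2, one_mul]) (by simp)

theorem Mu.sg_inv (y : Mu k F) : sg k y.1 = y.1⁻¹ := eq_inv_of_mul_eq_one_right y.2

theorem Ky_uu (y : Mu k F) (u : UT k F) : Ky y (uu u) = uu (kU y u) := by
  apply mt_inj
  rw [mt_Ky, mt_uu, mt_uu]
  have := y.ne
  ext i j
  fin_cases i <;> fin_cases j <;> simp [kMat, uMat, y.sg_inv] <;> ring
theorem Ky_hh (y : Mu k F) (t : Fˣ) : Ky y (hh t) = hh (tbar k t) := by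
  apply mt_inj
  rw [mt_Ky, mt_hh, mt_hh]
  have := y.ne
  have h0 := t.ne_zero
  have h1 := sg_ne k h0
  ext i j
  fin_cases i <;> fin_cases j <;> simp [kMat, hMat] <;> field_simp
theorem Ky_ww (y : Mu k F) : Ky y ww = ww := by
  apply mt_inj
  rw [mt_Ky, mt_ww, Om_eq]
  have := y.ne
  ext i j
  fin_cases i <;> fin_cases j <;> simp [kMat]

end autos
end Paper

namespace Paper

section case2a
open scoped Classical ComplexOrder

variable {k : ℕ} {F : Type} [Field F] [Fintype F] [ExpChar F 2] [hS : Setup k F] {n : ℕ}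
variable {ψ : AddChar F ℂ} {R : GG k F →* Matrix (Fin n) (Fin n) ℂ}

/-- `σx/x` -/
def muOf (k : ℕ) [hS : Setup k F] (x : F) (hx : x ≠ 0) : Mu k F := ⟨sg k x / x, by
  have := sg_ne k hx
  rw [map_div₀, sg_sg]; field_simp⟩

theorem muOf_val (x : F) (hx : x ≠ 0) : (muOf k x hx).1 = sg k x / x := rfl

theorem ex_hh_ex (hψ : GoodPsi k ψ) (x : F) (hx : x ≠ 0) (t : Fˣ) :
    ex ψ R x * R (hh (tbar k t)) * ex ψ R x = ex ψ R x * R (hh t) * ex ψ R x := by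
  have h0 := t.ne_zero
  have h1 := sg_ne k h0
  by_cases ht : (t : F) ^ 2 = sg k (t : F)
  · have : tbar k t = t := by
      apply Units.ext
      rw [tbar_val, ← ht]
      have h3 : (sg k (t : F)) ^ 2 = t := by rw [← map_pow, ht, sg_sg]
      rw [← ht] at h3
      rw [inv_eq_iff_eq_inv, ← one_div, eq_div_iff h0]
      apply mul_right_cancel₀ h0
      linear_combination h3
    rw [this]
  · have key : ∀ s : Fˣ, (s : F) ^ 2 ≠ sg k (s : F) → ex ψ R x * R (hh s) * ex ψ R x = 0 := by
      intro s hs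
      rw [← hh_ex, mul_assoc, ex_mul_ex R hψ, if_neg, mul_zero]
      intro h
      have h3 := sg_ne k s.ne_zero
      apply hs
      have h5 : x * ((s : F) ^ 2 / sg k (s : F)) = x * 1 := by rw [h, mul_one]
      have h4 := mul_left_cancel₀ hx h5
      rw [div_eq_one_iff_eq h3] at h4
      exact h4
    rw [key t ht, key]
    intro h
    apply ht
    rw [tbar_val, map_inv₀, sg_sg] at h
    field_simp at h
    have := congrArg (sg k) h
    rw [map_pow, sg_sg] at this
    exact this.symm

theorem psi_kU (hψ : GoodPsi k ψ) (x : F) (hx : x ≠ 0) (u : UT k F) :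
    ψ (x * (kU (muOf k x hx) u).a) = ψ (x * u.a) := by
  rw [kU_a, muOf_val, ← hψ.sym (x * u.a), map_mul (sg k)]
  congr 1; field_simp

theorem ex_Ky (hψ : GoodPsi k ψ) (x : F) (hx : x ≠ 0) (g : GG k F) :
    ex ψ R x * R (Ky (muOf k x hx) g) * ex ψ R x = ex ψ R x * R g * ex ψ R x := by
  have hl : ∀ (u : UT k F) (M : Matrix (Fin n) (Fin n) ℂ), ex ψ R x * (R (uu u) * M) = ψ (x * u.a) • (ex ψ R x * M) := by
    intro u M; rw [← mul_assoc, ex_uu R hψ, Matrix.smul_mul]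
  obtain ⟨p, rfl⟩ := brMap_bij.2 g
  rcases p with ⟨u, t⟩ | ⟨u, t, v⟩
  · simp only [brMap]
    rw [Ky_mul, Ky_uu, Ky_hh, map_mul, map_mul]
    have e1 : ex ψ R x * (R (hh (tbar k t)) * R (uu (kU (muOf k x hx) u))) * ex ψ R x = ψ (x * u.a) • (ex ψ R x * R (hh t) * ex ψ R x) := by
      rw [mul_assoc, mul_assoc, uu_ex R hψ, psi_kU hψ, Matrix.mul_smul, Matrix.mul_smul, ← mul_assoc, ex_hh_ex hψ x hx]
    rw [e1]; simp only [mul_assoc, hl, Matrix.smul_mul]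
  · simp only [brMap]
    have hk : Ky (muOf k x hx) (uu u * hh t * ww * uu v) = uu (kU (muOf k x hx) v) * (hh t * ww) * uu (kU (muOf k x hx) u) := by
      rw [Ky_mul, Ky_mul, Ky_mul, Ky_uu, Ky_uu, Ky_hh, Ky_ww, ← mul_assoc ww, ww_hh, tbar_tbar]; group
    have hb : ∀ u v : UT k F, ex ψ R x * R (uu u * (hh t * ww) * uu v) * ex ψ R x = (ψ (x * u.a) * ψ (x * v.a)) • (ex ψ R x * R (hh t * ww) * ex ψ R x) := by
      intro u v
      rw [map_mul, map_mul, mul_assoc, mul_assoc, mul_assoc, hl, uu_ex R hψ, Matrix.mul_smul, Matrix.mul_smul, smul_smul, mul_assoc]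
    rw [hk, hb, psi_kU hψ, psi_kU hψ, mul_comm]
    rw [← hb, ← mul_assoc (uu u)]

theorem ex_swap (hψ : GoodPsi k ψ) (x : F) (hx : x ≠ 0) (x' : F) (g1 g2 : GG k F) :
    ex ψ R x * R g1 * ex ψ R x' * R g2 * ex ψ R x =
    ex ψ R x * R (Ky (muOf k x hx) g2) * ex ψ R (sg k x' * x / sg k x) * R (Ky (muOf k x hx) g1) * ex ψ R x := by
  rw [ex.eq_1 ψ R x', ex.eq_1 ψ R (sg k x' * x / sg k x)]
  simp only [Matrix.mul_smul, Matrix.smul_mul, Finset.mul_sum, Finset.sum_mul]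
  refine congrArg (fun M : Matrix (Fin n) (Fin n) ℂ => (((2 : ℂ) ^ k) ^ 3)⁻¹ • M) ?_
  refine Fintype.sum_bijective (kU (muOf k x hx)) (Function.Involutive.bijective fun u => kU_kU _ u) _ _ fun u => ?_
  have e1 : ex ψ R x * R g1 * R (uu u) * R g2 * ex ψ R x = ex ψ R x * R (g1 * uu u * g2) * ex ψ R x := by
    simp only [map_mul, mul_assoc]
  rw [e1, ← ex_Ky hψ x hx, Ky_mul, Ky_mul, Ky_uu]
  simp only [map_mul R, mul_assoc]
  congr 1
  rw [kU_a, muOf_val, ← hψ.sym (x' * u.a), map_mul (sg k)]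
  have := sg_ne k hx
  congr 1; field_simp

theorem ex_trace (hψ : GoodPsi k ψ) (hR : IrrR R) (x : F) (hx : x ≠ 0) (he : ex ψ R x ≠ 0) :
    (ex ψ R x).trace = 1 := by
  refine (hecke hR _ (ex_idem R hψ x) he ?_).2
  intro g h
  have h1 : sg k x * x / sg k x = x := by have := sg_ne k hx; field_simp
  have h2 := ex_swap (R := R) hψ x hx x g h
  rw [h1] at h2
  have e : ∀ g h : GG k F, ex ψ R x * R g * ex ψ R x * (ex ψ R x * R h * ex ψ R x) = ex ψ R x * R g * ex ψ R x * R h * ex ψ R x := by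
    intro g h
    calc _ = ex ψ R x * R g * (ex ψ R x * ex ψ R x) * R h * ex ψ R x := by simp only [mul_assoc]
      _ = _ := by rw [ex_idem R hψ]
  rw [e, h2, ← e, ex_Ky hψ, ex_Ky hψ]

theorem exists_im {e : Matrix (Fin n) (Fin n) ℂ} (he : e ≠ 0) (hee : e * e = e) : ∃ v, v ≠ 0 ∧ e *ᵥ v = v := by
  by_contra hcon
  push Not at hcon
  apply he
  have : ∀ w, e *ᵥ w = 0 := by
    intro w
    by_contra hw
    exact hcon _ hw (by rw [Matrix.mulVec_mulVec, hee])
  ext i j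
  have := congrFun (this (Pi.single j 1)) i
  simpa using this

theorem ex_closed (hψ : GoodPsi k ψ) (hR : IrrR R) (x : F) (hx : x ≠ 0) (he : ex ψ R x ≠ 0) (x' : F)
    (he' : ex ψ R x' ≠ 0) : ex ψ R (sg k x' * x / sg k x) ≠ 0 := by
  intro h0
  obtain ⟨v, hv, hev⟩ := exists_im he (ex_idem R hψ x)
  obtain ⟨v', hv', hev'⟩ := exists_im he' (ex_idem R hψ x')
  apply he
  apply irr_cyclic hR _ hv'
  intro g1
  have h1 : ex ψ R x * R g1 * ex ψ R x' = 0 := by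
    apply irr_cyclic hR _ hv
    intro g2
    have := ex_swap (R := R) hψ x hx x' g1 g2
    rw [h0, mul_zero, Matrix.zero_mul, Matrix.zero_mul] at this
    rw [← hev, Matrix.mulVec_mulVec, Matrix.mulVec_mulVec]
    rw [this, Matrix.zero_mulVec]
  rw [← hev', Matrix.mulVec_mulVec, Matrix.mulVec_mulVec, h1, Matrix.zero_mulVec]

theorem ex_scale (x : F) (he : ex ψ R x ≠ 0) (c : F) (hc : sg k c = c) (hc0 : c ≠ 0) :
    ex ψ R (x * c) ≠ 0 := by
  intro h
  have h1 := hh_ex (ψ := ψ) R x (Units.mk0 c hc0)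
  simp only [Units.val_mk0, hc] at h1
  have : c ^ 2 / c = c := by field_simp
  rw [this, h, mul_zero] at h1
  apply he
  calc ex ψ R x = ex ψ R x * R (hh (Units.mk0 c hc0)) * R (hh (Units.mk0 c hc0))⁻¹ := by
        rw [mul_assoc, R_mul_inv, mul_one]
    _ = 0 := by rw [← h1, zero_mul]

theorem card_S_odd (hψ : GoodPsi k ψ) (hR : IrrR R) (h0 : ex ψ R 0 = 0) (x : F) (he : ex ψ R x ≠ 0) :
    Odd (Finset.univ.filter fun x' : F => ex ψ R x' ≠ 0).card := by
  have hx : x ≠ 0 := by rintro rfl; exact he h0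
  have hsx := sg_ne k hx
  set S := Finset.univ.filter fun x' : F => ex ψ R x' ≠ 0 with hSdef
  set i : F → F := fun x' => sg k x' * x / sg k x with hi
  have hii : ∀ z, i (i z) = z := by
    intro z; simp only [hi, map_div₀, map_mul, sg_sg]; field_simp
  have hiS : ∀ z ∈ S, i z ∈ S := by
    intro z hz
    simp only [hSdef, Finset.mem_filter, Finset.mem_univ, true_and] at hz ⊢
    exact ex_closed hψ hR x hx he z hz
  have hfix : (S.filter fun z => i z = z).card = 2 ^ k - 1 := by
    have : (S.filter fun z => i z = z) = (Finset.univ.erase (0 : Fq k F)).image (fun c : Fq k F => x * (c : F)) := by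
      ext z
      simp only [hSdef, Finset.mem_filter, Finset.mem_univ, true_and, Finset.mem_image, Finset.mem_erase, and_true]
      constructor
      · rintro ⟨hz, hf⟩
        refine ⟨⟨z / x, ?_⟩, ?_, ?_⟩
        · rw [mem_Fq, map_div₀]
          simp only [hi] at hf
          field_simp at hf ⊢
          linear_combination hf
        · intro hc
          have : z / x = 0 := congrArg Subtype.val hc
          rw [div_eq_zero_iff] at this
          rcases this with h | h
          · rw [h] at hz; exact hz h0
          · exact hx h
        · simp only; field_simp
      · rintro ⟨c, hc, rfl⟩
        have hcs := (mem_Fq k).1 c.2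
        refine ⟨ex_scale x he c hcs (fun h => hc (Subtype.ext h)), ?_⟩
        simp only [hi, map_mul, hcs]; field_simp
    rw [this, Finset.card_image_of_injective, Finset.card_erase_of_mem (Finset.mem_univ _), Finset.card_univ, card_Fq]
    intro c d hcd
    exact Subtype.ext (mul_left_cancel₀ hx hcd)
  have hnf : Even (S.filter fun z => ¬ i z = z).card := by
    rw [← ZMod.natCast_eq_zero_iff_even, Finset.card_eq_sum_ones, Nat.cast_sum]
    push_cast
    refine Finset.sum_involution (fun z _ => i z) ?_ ?_ ?_ ?_
    · intro z _; decide
    · intro z hz _; exact (Finset.mem_filter.1 hz).2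
    · intro z hz
      obtain ⟨h1, h2⟩ := Finset.mem_filter.1 hz
      exact Finset.mem_filter.2 ⟨hiS z h1, fun h => h2 (by rw [hii] at h; exact h.symm)⟩
    · intro z _; exact hii z
  rw [← Finset.card_filter_add_card_filter_not (s := S) (fun z => i z = z), hfix]
  have hq : Even (2 ^ k) := by
    have := Setup.hk (k := k) (F := F)
    exact (Nat.even_pow.2 ⟨even_two, by omega⟩)
  have : 1 ≤ 2 ^ k := Nat.one_le_two_pow
  exact (Nat.Even.sub_odd this hq odd_one).add_even hnf

theorem case2a (hψ : GoodPsi k ψ) (hR : IrrR R) (h0 : ex ψ R 0 = 0) (hn : Even n) : PL R 0 = 0 := by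
  rw [PL_zero R hψ]
  refine Finset.sum_eq_zero fun x _ => ?_
  by_contra he
  have hodd := card_S_odd hψ hR h0 x he
  have h1 : (PL R 0).trace = ((Finset.univ.filter fun x' : F => ex ψ R x' ≠ 0).card : ℂ) := by
    rw [PL_zero R hψ, Matrix.trace_sum, Finset.card_filter, Nat.cast_sum]
    refine Finset.sum_congr rfl fun z _ => ?_
    split_ifs with h
    · rw [ex_trace hψ hR z (fun hz => h (hz ▸ h0)) h]; simp
    · push Not at h; rw [h]; simp
  have h2 : ∃ m : ℕ, (n : ℂ) = (Finset.univ.filter fun x' : F => ex ψ R x' ≠ 0).card + 2 * m := by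
    have h3 := congrArg Matrix.trace (PL_sum R)
    rw [Matrix.trace_sum, Matrix.trace_one, Fintype.card_fin, ← Finset.add_sum_erase _ _ (Finset.mem_univ (0 : AC k F)), h1] at h3
    have h4 : ∀ l : AC k F, ∃ m : ℕ, l ≠ 0 → (PL R l).trace = 2 * m := by
      intro l
      by_cases hl : l = 0
      · exact ⟨0, fun h => absurd hl h⟩
      · obtain ⟨m, hm⟩ := PL_trace_even R l hl
        exact ⟨m, fun _ => hm⟩
    choose m hm using h4
    refine ⟨∑ l ∈ Finset.univ.erase (0 : AC k F), m l, ?_⟩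
    rw [← h3]; push_cast
    rw [Finset.mul_sum]
    congr 1
    refine Finset.sum_congr rfl fun l hl => hm l (Finset.ne_of_mem_erase hl)
  obtain ⟨m, hm⟩ := h2
  have h5 : n = (Finset.univ.filter fun x' : F => ex ψ R x' ≠ 0).card + 2 * m := by exact_mod_cast hm
  rw [h5] at hn
  have := hodd.add_even (even_two_mul m)
  exact (Nat.not_even_iff_odd.2 this) hn

end case2a
end Paper

namespace Paper

section zf
open scoped Classical ComplexOrder

variable {k : ℕ} {F : Type} [Field F] [Fintype F] [ExpChar F 2] [hS : Setup k F]

/-- class functions, invariant under the diagonal automorphisms, free over the centre of `U` -/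
structure ZF (f : GG k F → ℂ) : Prop where
  cl : ∀ g h, f (g * h) = f (h * g)
  dy : ∀ y g, f (Dy y g) = f g
  zs : ∀ g, ∑ c : Fq k F, f (g * uu (zU c)) = 0
  one : f 1 = 0

/-- action on the unipotent group -/
def dU (y : Mu k F) (u : UT k F) : UT k F := UT.mk' (u.a * y.1) u.b (by
  rw [map_mul, u.rel]; linear_combination (-(u.a * sg k u.a)) * y.2)
@[simp] theorem dU_a (y : Mu k F) (u : UT k F) : (dU y u).a = u.a * y.1 := rfl
@[simp] theorem dU_b (y : Mu k F) (u : UT k F) : (dU y u).b = u.b := rfl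

theorem Dy_uu (y : Mu k F) (u : UT k F) : Dy y (uu u) = uu (dU y u) := by
  apply mt_inj
  rw [mt_Dy, mt_uu, mt_uu]
  have := y.ne
  ext i j
  fin_cases i <;> fin_cases j <;> simp [dMat, uMat, y.sg_inv] <;> ring
theorem Dy_hh (y : Mu k F) (t : Fˣ) : Dy y (hh t) = hh t := by
  apply mt_inj
  rw [mt_Dy, mt_hh]
  ext i j
  fin_cases i <;> fin_cases j <;> simp [dMat, hMat]
theorem Dy_ww (y : Mu k F) : Dy y ww = ww := by
  apply mt_inj
  rw [mt_Dy, mt_ww, Om_eq]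
  ext i j
  fin_cases i <;> fin_cases j <;> simp [dMat]

theorem exists_dU (u u' : UT k F) (h : u.b = u'.b) : ∃ y : Mu k F, u' = dU y u := by
  have h1 : u.a * sg k u.a = u'.a * sg k u'.a := by rw [← u.rel, ← u'.rel, h]
  by_cases ha : u.a = 0
  · refine ⟨⟨1, by simp⟩, UT.ext' ?_ ?_⟩
    · rw [ha, zero_mul] at h1
      show u'.a = u.a * 1
      rw [ha, zero_mul]
      exact mul_sg_eq_zero (k := k) (by rw [mul_comm]; exact h1.symm)
    · exact h.symm
  · have hs := sg_ne k ha
    refine ⟨⟨u'.a / u.a, ?_⟩, UT.ext' ?_ ?_⟩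
    · rw [map_div₀]; field_simp; linear_combination -h1
    · show u'.a = u.a * (u'.a / u.a)
      field_simp
    · exact h.symm

variable {f : GG k F → ℂ}

theorem ZF.f_b (hf : ZF f) (u u' : UT k F) (h : u.b = u'.b) (t : Fˣ) :
    f (uu u * hh t * ww) = f (uu u' * hh t * ww) := by
  obtain ⟨y, rfl⟩ := exists_dU u u' h
  rw [← hf.dy y, map_mul, map_mul, Dy_uu, Dy_hh, Dy_ww]

theorem exists_uOf (k : ℕ) [hS : Setup k F] (b : F) : ∃ u : UT k F, u.b = b := by
  obtain ⟨a, ha⟩ := exists_norm k (F := F) (c := b + sg k b) (by rw [map_add, sg_sg, add_comm])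
  exact ⟨UT.mk' a b ha.symm, rfl⟩

/-- an element with prescribed second coordinate -/
def uOf (k : ℕ) [hS : Setup k F] (b : F) : UT k F := (exists_uOf k b).choose
theorem uOf_b (b : F) : (uOf k b).b = b := (exists_uOf k b).choose_spec

/-- values on the big cell in terms of the trace -/
def phi (f : GG k F → ℂ) (t : Fˣ) (x : F) : ℂ :=
  f (uu (uOf k ((x + sg k (t : F) / t) * sg k (t : F))) * hh t * ww)

theorem ZF.phi_eq (hf : ZF f) (u : UT k F) (t : Fˣ) :
    f (uu u * hh t * ww) = phi f t (u.b / sg k (t : F) + sg k (t : F) / t) := by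
  rw [phi]
  apply hf.f_b
  rw [uOf_b]
  have h0 := t.ne_zero
  have h1 := sg_ne k h0
  rw [add_assoc, add_self2]
  field_simp
  ring

theorem ZF.phi_sum (hf : ZF f) (t : Fˣ) (x : F) : ∑ c : Fq k F, phi f t (x + c / sg k (t : F)) = 0 := by
  have h1 := hf.zs (hh t * ww * uu (uOf k ((x + sg k (t : F) / t) * sg k (t : F))))
  rw [← h1]
  refine Finset.sum_congr rfl fun c _ => ?_
  rw [mul_assoc (hh t * ww), ← uu_mul, hf.cl, ← mul_assoc, hf.phi_eq]
  congr 1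
  have h0 := t.ne_zero
  have h1 := sg_ne k h0
  simp only [UT.mul_b, zU_b, zU_a, map_zero, mul_zero, add_zero, uOf_b]
  have h2 := two_eq_zero' (F := F)
  field_simp
  linear_combination (- sg k (t:F) * sg k (t : F)) * h2

theorem ZF.conj (hf : ZF f) (g h : GG k F) : f (h⁻¹ * g * h) = f g := by
  rw [hf.cl, ← mul_assoc, mul_inv_cancel, one_mul]

/-- the trace -/
def trc (g : GG k F) : F := (mt g).trace
theorem trc_conj (g h : GG k F) : trc (h⁻¹ * g * h) = trc g := by
  rw [trc, mt_mul, Matrix.trace_mul_comm, ← mt_mul, ← mul_assoc, mul_inv_cancel, one_mul]; rfl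
theorem trc_cl (g h : GG k F) : trc (g * h) = trc (h * g) := by
  rw [trc, mt_mul, Matrix.trace_mul_comm]; rfl

theorem trc_big (u : UT k F) (t : Fˣ) : trc (uu u * hh t * ww) = u.b / sg k (t : F) + sg k (t : F) / t := by
  simp [trc, mt_mul, mt_uu, mt_hh, mt_ww, Om_eq, uMat, hMat, Matrix.trace_fin_three, Matrix.mul_apply, Fin.sum_univ_three, Matrix.vecMul]
  ring

theorem trc_small (u : UT k F) (t : Fˣ) : trc (uu u * hh t) = t + sg k (t : F) / t + (sg k (t : F))⁻¹ := by
  simp [trc, mt_mul, mt_uu, mt_hh, uMat, hMat, Matrix.trace_fin_three, Matrix.mul_apply, Fin.sum_univ_three, Matrix.vecMul]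

theorem ZF.big_conj (hf : ZF f) (g h : GG k F) (t : Fˣ) (hh' : mt (h⁻¹ * g * h) 2 0 = (tbar k t : Fˣ)) :
    f g = phi f t (trc g) := by
  obtain ⟨u, v, huv⟩ := bruhat_big _ t hh'
  rw [← hf.conj g h, ← trc_conj g h, huv, hf.cl, trc_cl, ← mul_assoc, ← mul_assoc, ← uu_mul, hf.phi_eq, trc_big]

/-- norm not one: vanishing -/
theorem ZF.small_zero (hf : ZF f) (u : UT k F) (t : Fˣ) (ht : (t : F) * sg k (t : F) ≠ 1) :
    f (uu u * hh t) = 0 := by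
  have hN : 1 + (t : F) * sg k (t : F) ≠ 0 := by
    intro h; exact ht (add_eq_zero2.1 h).symm
  have key : ∀ c : Fq k F, f (uu u * uu (zU c) * hh t) = f (uu u * hh t) := by
    intro c
    set d : Fq k F := ⟨c / (1 + (t : F) * sg k (t : F)), by
      rw [mem_Fq, map_div₀, map_add, map_mul, sg_sg, (mem_Fq k).1 c.2, map_one, mul_comm (sg k (t : F))]⟩ with hd
    have h1 : uu (zU d) * (uu u * hh t) * uu (zU d) = uu u * uu (zU c) * hh t := by
      rw [mul_assoc, mul_assoc (uu u), hh_uu, ← mul_assoc, ← mul_assoc, ← uu_mul, ← uu_mul, ← uu_mul]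
      congr 2
      apply UT.ext'
      · simp
      · simp [hd]; field_simp; ring
    have h2 : uu (zU d) * uu (zU d) = 1 := by
      rw [← uu_mul, ← uu_one]; congr 1
      exact UT.ext' (by simp) (by simp [add_self2])
    rw [← h1, hf.cl, ← mul_assoc, h2, one_mul]
  have h1 := hf.zs (hh t * uu u)
  have h2 : ∀ c : Fq k F, f (hh t * uu u * uu (zU c)) = f (uu u * hh t) := by
    intro c; rw [mul_assoc, hf.cl, key]
  simp only [h2, Finset.sum_const, Finset.card_univ, card_Fq, nsmul_eq_mul] at h1
  rcases mul_eq_zero.1 h1 with h | h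
  · push_cast at h; exact absurd h (qC_ne k)
  · exact h

theorem trace_norm_one (t : F) (ht : t ≠ 0) (h : (t + sg k t / t + (sg k t)⁻¹) * sg k (t + sg k t / t + (sg k t)⁻¹) = 1) :
    t * sg k t = 1 := by
  have hs := sg_ne k ht
  have h2 := two_eq_zero' (F := F)
  simp only [map_add, map_div₀, map_inv₀, sg_sg] at h
  have h1 : (t * sg k t + 1) * ((t ^ 2 + sg k t) * (sg k t ^ 2 + t)) = 0 := by
    field_simp at h
    linear_combination h
  have hq : t ^ 2 = sg k t → t * sg k t = 1 := by
    intro h3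
    have h4 : (sg k t) ^ 2 = t := by rw [← map_pow, h3, sg_sg]
    rw [← h3] at h4
    rw [← h3]
    apply mul_right_cancel₀ ht
    linear_combination h4
  rcases mul_eq_zero.1 h1 with h3 | h3
  · exact add_eq_zero2.1 h3
  · rcases mul_eq_zero.1 h3 with h4 | h4
    · exact hq (add_eq_zero2.1 h4)
    · apply hq
      have := congrArg (sg k) (add_eq_zero2.1 h4)
      rw [map_pow, sg_sg] at this
      exact this

end zf
end Paper

namespace Paper

section cw
open scoped Classical ComplexOrder

variable {k : ℕ} {F : Type} [Field F] [Fintype F] [ExpChar F 2] [hS : Setup k F]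

/-- sesquilinear value -/
def qv (k : ℕ) (A : Matrix (Fin 3) (Fin 3) F) (x : Fin 3 → F) : F :=
  ∑ i, ∑ j, A i j * (sg k (x i) * x j)

theorem Fq_pow (c : F) (hc : sg k c = c) (h0 : c ≠ 0) : c ^ (2 ^ k - 1) = 1 := by
  rw [sg_def] at hc
  have h1 : c * c ^ (2 ^ k - 1) = c := by
    rw [← pow_succ', Nat.sub_add_cancel (q_pos k), hc]
  exact mul_left_cancel₀ h0 (h1.trans (mul_one c).symm)

theorem herm_pair (A B : Matrix (Fin 3) (Fin 3) F) (hA : ∀ x, sg k (qv k A x) = qv k A x)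
    (hB : ∀ x, sg k (qv k B x) = qv k B x) : ∃ x : Fin 3 → F, x ≠ 0 ∧ qv k A x = 0 ∧ qv k B x = 0 := by
  by_contra hne
  push Not at hne
  let Q : Matrix (Fin 3) (Fin 3) F → MvPolynomial (Fin 3) F := fun A =>
    ∑ i, ∑ j, MvPolynomial.C (A i j) * (MvPolynomial.X i ^ (2 ^ k) * MvPolynomial.X j)
  have hQe : ∀ A x, MvPolynomial.eval x (Q A) = qv k A x := by
    intro A x
    simp [Q, qv, sg_def]
  have hQd : ∀ A, (Q A).totalDegree ≤ 2 ^ k + 1 := by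
    intro A
    refine MvPolynomial.totalDegree_finsetSum_le fun i _ => MvPolynomial.totalDegree_finsetSum_le fun j _ => ?_
    refine (MvPolynomial.totalDegree_mul _ _).trans ?_
    rw [MvPolynomial.totalDegree_C, zero_add]
    refine (MvPolynomial.totalDegree_mul _ _).trans ?_
    refine Nat.add_le_add ?_ (MvPolynomial.totalDegree_X j).le
    refine (MvPolynomial.totalDegree_pow _ _).trans ?_
    rw [MvPolynomial.totalDegree_X, mul_one]
  have hPd : ∀ A, (1 - Q A ^ (2 ^ k - 1)).totalDegree ≤ (2 ^ k - 1) * (2 ^ k + 1) := by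
    intro A
    refine (MvPolynomial.totalDegree_sub _ _).trans ?_
    rw [MvPolynomial.totalDegree_one]
    refine max_le (Nat.zero_le _) ?_
    refine (MvPolynomial.totalDegree_pow _ _).trans ?_
    exact Nat.mul_le_mul_left _ (hQd A)
  have hq := q_ge k F
  have hlt : ((1 - Q A ^ (2 ^ k - 1)) * (1 - Q B ^ (2 ^ k - 1))).totalDegree < (Fintype.card F - 1) * Fintype.card (Fin 3) := by
    refine (MvPolynomial.totalDegree_mul _ _).trans_lt ?_
    refine (Nat.add_le_add (hPd A) (hPd B)).trans_lt ?_
    rw [Setup.card (k := k) (F := F), Fintype.card_fin]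
    generalize 2 ^ k = q at hq
    obtain ⟨m, rfl⟩ : ∃ m, q = m + 1 := ⟨q - 1, by omega⟩
    have e : (m + 1) ^ 2 - 1 = m * (m + 1 + 1) := by
      have : (m + 1) ^ 2 = m * (m + 1 + 1) + 1 := by ring
      omega
    rw [e, Nat.add_sub_cancel]
    have : 0 < m * (m + 1 + 1) := by apply Nat.mul_pos <;> omega
    omega
  have h := MvPolynomial.sum_eval_eq_zero _ hlt
  have hz : (2 ^ k - 1 : ℕ) ≠ 0 := by omega
  rw [Finset.sum_eq_single (0 : Fin 3 → F)] at h
  · rw [map_mul, map_sub, map_sub, map_one, map_pow, map_pow, hQe, hQe] at h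
    simp [qv, hz] at h
  · intro x _ hx
    rw [map_mul, map_sub, map_sub, map_one, map_pow, map_pow, hQe, hQe]
    by_cases h0 : qv k A x = 0
    · rw [Fq_pow _ (hB x) (hne x hx h0), sub_self, mul_zero]
    · rw [Fq_pow _ (hA x) h0, sub_self, zero_mul]
  · simp

/-- the hermitian form -/
def hfm (k : ℕ) (x y : Fin 3 → F) : F := sg k (x 0) * y 2 + sg k (x 1) * y 1 + sg k (x 2) * y 0

theorem hfm_symm (x y : Fin 3 → F) : sg k (hfm k x y) = hfm k y x := by
  simp only [hfm, map_add, map_mul, sg_sg]; ring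

theorem hfm_inv (g : GG k F) (x y : Fin 3 → F) : hfm k (mt g *ᵥ x) (mt g *ᵥ y) = hfm k x y := by
  have h := fun i j => mt_form_entry g i j
  have h00 := h 0 0
  have h01 := h 0 1
  have h02 := h 0 2
  have h10 := h 1 0
  have h11 := h 1 1
  have h12 := h 1 2
  have h20 := h 2 0
  have h21 := h 2 1
  have h22 := h 2 2
  simp [Om_eq] at h00 h01 h02 h10 h11 h12 h20 h21 h22
  simp only [hfm, Matrix.mulVec, dotProduct, Fin.sum_univ_three, map_add, map_mul]
  linear_combination sg k (x 0) * (h00 * y 0 + h01 * y 1 + h02 * y 2) + sg k (x 1) * (h10 * y 0 + h11 * y 1 + h12 * y 2) + sg k (x 2) * (h20 * y 0 + h21 * y 1 + h22 * y 2)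

theorem conj_entry (g h : GG k F) : mt (h⁻¹ * g * h) 2 0 = hfm k (fun i => mt h i 0) (mt g *ᵥ fun i => mt h i 0) := by
  have h1 : Om F * mt (h⁻¹ * g * h) = ((mt h).map (sg k))ᵀ * Om F * (mt g * mt h) := by
    have e : mt h * mt (h⁻¹ * g * h) = mt g * mt h := by
      rw [← mt_mul, ← mt_mul]; congr 1; group
    rw [← e, ← mul_assoc, mt_form]
  have h2 := congrFun (congrFun h1 0) 0
  simp [Om_eq, Matrix.mul_apply, Fin.sum_univ_three, Matrix.transpose_apply] at h2
  rw [h2]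
  simp [hfm, Matrix.mulVec, dotProduct, Fin.sum_univ_three]
  ring

/-- totally isotropic lines: -/
theorem isotropic_pair (x y : Fin 3 → F) (hx0 : x ≠ 0) (hx : hfm k x x = 0) (hy : hfm k y y = 0) (hxy : hfm k x y = 0) :
    ∃ c : F, y = c • x := by
  obtain ⟨g, hg⟩ := isotropic_transitive (k := k) x hx0 hx
  have hgx : mt g *ᵥ ![1,0,0] = x := by
    ext i; rw [← hg i]; fin_cases i <;> simp [Matrix.mulVec, dotProduct, Fin.sum_univ_three]
  obtain ⟨z, hz⟩ : ∃ z, mt g *ᵥ z = y := ⟨mt g⁻¹ *ᵥ y, by rw [Matrix.mulVec_mulVec, ← mt_mul, mul_inv_cancel, mt_one, Matrix.one_mulVec]⟩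
  rw [← hgx, ← hz, hfm_inv] at hxy
  rw [← hz, hfm_inv] at hy
  have z2 : z 2 = 0 := by simpa [hfm] using hxy
  have z1 : z 1 = 0 := by
    rw [hfm, z2] at hy
    simp at hy; exact hy
  refine ⟨z 0, ?_⟩
  rw [← hz, ← hgx, ← Matrix.mulVec_smul]
  congr 1
  ext i; fin_cases i <;> simp [z1, z2]

/-- elliptic elements -/
def Ell (g : GG k F) : Prop := ∀ x : Fin 3 → F, x ≠ 0 → hfm k x x = 0 → ∀ c : F, mt g *ᵥ x ≠ c • x

theorem ell_conj (g : GG k F) (hg : Ell g) (t : Fˣ) : ∃ h, mt (h⁻¹ * g * h) 2 0 = ((tbar k t : Fˣ) : F) := by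
  have ht := t.ne_zero
  have hst := sg_ne k ht
  let B0 : Matrix (Fin 3) (Fin 3) F := Matrix.of fun i j => mt g (Fin.rev i) j
  have hB0 : ∀ x, qv k B0 x = hfm k x (mt g *ᵥ x) := by
    intro x
    simp [qv, B0, hfm, Matrix.mulVec, dotProduct, Fin.sum_univ_three, Fin.rev]
    ring
  let B1 : Matrix (Fin 3) (Fin 3) F := Matrix.of fun i j => sg k (B0 j i)
  have hB1 : ∀ x, qv k B1 x = sg k (qv k B0 x) := by
    intro x
    simp [qv, B1, Fin.sum_univ_three]
    ring
  have hadd : ∀ x, qv k (sg k (t : F) • B0 + (t : F) • B1) x = sg k (t : F) * qv k B0 x + t * sg k (qv k B0 x) := by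
    intro x
    rw [← hB1]
    simp only [qv, Fin.sum_univ_three, Matrix.add_apply, Matrix.smul_apply, smul_eq_mul]
    ring
  have hOm : ∀ x, qv k (Om F) x = hfm k x x := by
    intro x
    simp [qv, Om_eq, hfm, Fin.sum_univ_three]
  obtain ⟨x, hx0, hx1, hx2⟩ := herm_pair (k := k) (Om F) (sg k (t : F) • B0 + (t : F) • B1)
    (by intro x; rw [hOm, hfm_symm]) (by intro x; rw [hadd, map_add, map_mul, map_mul, sg_sg, sg_sg]; ring)
  rw [hOm] at hx1
  rw [hadd, hB0] at hx2
  set m := hfm k x (mt g *ᵥ x) with hm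
  have hm0 : m ≠ 0 := by
    intro h0
    obtain ⟨c, hc⟩ := isotropic_pair (k := k) x (mt g *ᵥ x) hx0 hx1 (by rw [hfm_inv, hx1]) h0
    exact hg x hx0 hx1 c hc
  have hmf : sg k ((sg k (t : F) * m)⁻¹) = (sg k (t : F) * m)⁻¹ := by
    rw [map_inv₀, map_mul, sg_sg, add_eq_zero2.1 hx2]
  obtain ⟨s, hs⟩ := exists_norm k hmf
  have hs0 : s ≠ 0 := by
    intro h; rw [h, zero_mul] at hs
    exact inv_ne_zero (mul_ne_zero hst hm0) hs.symm
  obtain ⟨h, hh⟩ := isotropic_transitive (k := k) (s • x) (smul_ne_zero hs0 hx0) (by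
    have : hfm k (s • x) (s • x) = 0 := by
      have e : hfm k (s • x) (s • x) = s * sg k s * hfm k x x := by
        simp only [hfm, Pi.smul_apply, smul_eq_mul, map_mul]; ring
      rw [e, hx1, mul_zero]
    exact this)
  refine ⟨h, ?_⟩
  rw [conj_entry]
  have e1 : (fun i => mt h i 0) = s • x := funext hh
  rw [e1, Matrix.mulVec_smul]
  have e : hfm k (s • x) (s • (mt g *ᵥ x)) = s * sg k s * m := by
    rw [hm]; simp only [hfm, Pi.smul_apply, smul_eq_mul, map_mul]; ring
  rw [e, hs, tbar_val]
  field_simp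

theorem nonell_conj (g : GG k F) (hg : ¬ Ell g) : ∃ (h : GG k F) (u : UT k F) (t : Fˣ), h⁻¹ * g * h = uu u * hh t := by
  simp only [Ell] at hg
  push Not at hg
  obtain ⟨x, hx0, hx, c, hc⟩ := hg
  obtain ⟨h, hh⟩ := isotropic_transitive (k := k) x hx0 hx
  refine ⟨h, bruhat_small _ ?_⟩
  have e1 : (fun i => mt h i 0) = x := funext hh
  rw [conj_entry, e1, hc]
  have : hfm k x (c • x) = c * hfm k x x := by
    simp only [hfm, Pi.smul_apply, smul_eq_mul]; ring
  rw [this, hx, mul_zero]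

variable {f : GG k F → ℂ}
theorem ZF.ell (hf : ZF f) (g : GG k F) (hg : Ell g) (t : Fˣ) : f g = phi f t (trc g) := by
  obtain ⟨h, hh⟩ := ell_conj g hg t
  exact hf.big_conj g h t hh

end cw
end Paper

namespace Paper

section nn
open scoped Classical ComplexOrder

variable {k : ℕ} {F : Type} [Field F] [Fintype F] [ExpChar F 2] [hS : Setup k F]

/-- the quadratic polynomial in an element -/
def qd (g : GG k F) (s : F) : Matrix (Fin 3) (Fin 3) F := (mt g + s • 1) * (mt g + (s⁻¹) ^ 2 • 1)

theorem qd_conj (g h : GG k F) (s : F) : qd (h⁻¹ * g * h) s = mt h⁻¹ * qd g s * mt h := by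
  have h1 : mt h * mt h⁻¹ = 1 := by rw [← mt_mul, mul_inv_cancel, mt_one]
  have h2 : mt h⁻¹ * mt h = 1 := by rw [← mt_mul, inv_mul_cancel, mt_one]
  have key : ∀ c : F, mt (h⁻¹ * g * h) + c • 1 = mt h⁻¹ * (mt g + c • 1) * mt h := by
    intro c
    rw [mul_add, add_mul, mt_mul, mt_mul, mul_smul_comm, mul_one, smul_mul_assoc, h2]
  rw [qd, qd, key, key]
  calc mt h⁻¹ * (mt g + s • 1) * mt h * (mt h⁻¹ * (mt g + s⁻¹ ^ 2 • 1) * mt h)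
      = mt h⁻¹ * (mt g + s • 1) * (mt h * mt h⁻¹) * (mt g + s⁻¹ ^ 2 • 1) * mt h := by simp only [mul_assoc]
    _ = _ := by rw [h1, mul_one]; simp only [mul_assoc]

theorem qd_conj_zero (g h : GG k F) (s : F) (hq : qd (h⁻¹ * g * h) s = 0) : qd g s = 0 := by
  have h1 : mt h * mt h⁻¹ = 1 := by rw [← mt_mul, mul_inv_cancel, mt_one]
  rw [qd_conj] at hq
  have : mt h * (mt h⁻¹ * qd g s * mt h) * mt h⁻¹ = qd g s := by
    calc _ = (mt h * mt h⁻¹) * qd g s * (mt h * mt h⁻¹) := by simp only [mul_assoc]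
      _ = _ := by rw [h1, one_mul, mul_one]
  rw [← this, hq, mul_zero, zero_mul]

theorem qd_big (u : UT k F) (t : Fˣ) (s : F) (hs0 : s ≠ 0) (h : qd (uu u * hh t * ww) s = 0) :
    s = sg k (t : F) / t := by
  have h1 := congrFun (congrFun h 2) 2
  have h0 := t.ne_zero
  have h0' := sg_ne k h0
  simp [qd, mt_mul, mt_uu, mt_hh, mt_ww, Om_eq, uMat, hMat, Matrix.mul_apply, Fin.sum_univ_three, Matrix.vecMul, Matrix.one_apply] at h1
  field_simp at h1
  rw [mul_zero] at h1
  have := add_eq_zero2.1 h1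
  field_simp
  linear_combination this

variable {f : GG k F → ℂ}

theorem ZF.shift_zero (hf : ZF f) (u : UT k F) (t : Fˣ)
    (key : ∀ c : Fq k F, f (uu u * uu (zU c) * hh t) = f (uu u * hh t)) : f (uu u * hh t) = 0 := by
  have h1 := hf.zs (hh t * uu u)
  have h2 : ∀ c : Fq k F, f (hh t * uu u * uu (zU c)) = f (uu u * hh t) := by
    intro c; rw [mul_assoc, hf.cl, key]
  simp only [h2, Finset.sum_const, Finset.card_univ, card_Fq, nsmul_eq_mul] at h1
  rcases mul_eq_zero.1 h1 with h | h
  · push_cast at h; exact absurd h (qC_ne k)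
  · exact h

theorem ZF.u_conj (hf : ZF f) (u v : UT k F) (t : Fˣ) : f (uu (v⁻¹ * u * actU t v) * hh t) = f (uu u * hh t) := by
  rw [← hf.conj (uu u * hh t) (uu v), mul_assoc (uu v)⁻¹, mul_assoc (uu u), hh_uu, uu_mul, uu_mul, uu_inv]
  simp only [mul_assoc]

theorem exists_uA (k : ℕ) [hS : Setup k F] (a : F) : ∃ u : UT k F, u.a = a := by
  obtain ⟨b, hb⟩ := exists_trace k (F := F) (c := a * sg k a) (sg_nm k a)
  exact ⟨UT.mk' a b hb, rfl⟩

/-- central case -/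
theorem ZF.central (hf : ZF f) (u : UT k F) (t : Fˣ) (ht : (t : F) * sg k (t : F) = 1) (h3 : (t : F) ^ 3 = 1)
    (ha : u.a ≠ 0) : f (uu u * hh t) = 0 := by
  apply hf.shift_zero
  intro c
  obtain ⟨d, hd⟩ := exists_trace k ((mem_Fq k).1 c.2)
  obtain ⟨v, hv⟩ := exists_uA k (d / sg k u.a)
  rw [← hf.u_conj u v t, ← uu_mul]
  have h0 := t.ne_zero
  have h0' := sg_ne k h0
  have ha' := sg_ne k ha
  have e : actU t v = v := by
    apply UT.ext'
    · simp
      have : (t : F) ^ 2 / sg k (t : F) = 1 := by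
        rw [div_eq_one_iff_eq h0']
        apply mul_left_cancel₀ h0; linear_combination h3 - ht
      rw [this, one_mul]
    · simp [ht]
  rw [e]
  congr 3
  apply UT.ext'
  · simp
    linear_combination (-v.a) * two_eq_zero' (F := F)
  · have h2 := two_eq_zero' (F := F)
    have hr := v.rel
    simp [hv] at hr ⊢
    have e1 : d / sg k u.a * sg k u.a = d := by field_simp
    have e2 : (d / sg k u.a + u.a) * (sg k d / u.a) = d / sg k u.a * (sg k d / u.a) + sg k d := by field_simp
    rw [e1, e2]
    linear_combination - hd - hr - (d / sg k u.a * (sg k d / u.a)) * h2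

/-- common value -/
def vv (f : GG k F → ℂ) (t : Fˣ) : ℂ :=
  if (t : F) ^ 3 = 1 then 0 else f (uu (zU 1) * hh t)

theorem ZF.small_norm (hf : ZF f) (u : UT k F) (t : Fˣ) (ht : (t : F) * sg k (t : F) = 1)
    (hqd : qd (uu u * hh t) (t : F) ≠ 0) : f (uu u * hh t) = vv f t := by
  have h0 := t.ne_zero
  have hs : sg k (t : F) = (t : F)⁻¹ := by field_simp; linear_combination ht
  have h2 := two_eq_zero' (F := F)
  rw [vv]
  split_ifs with h3
  · apply hf.central u t ht h3
    intro ha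
    apply hqd
    have hh2 : (t : F)⁻¹ ^ 2 = t := by field_simp; exact h3.symm
    rw [qd, hh2, mt_mul, mt_uu, mt_hh, uMat, hMat, hs, ha]
    ext i j
    fin_cases i <;> fin_cases j <;> simp [Matrix.mul_apply, Fin.sum_univ_three, Matrix.one_apply, add_self2]
    have e1 : (t : F)⁻¹ / t = t := by field_simp; exact h3.symm
    rw [e1, add_self2]
  · have h3' : 1 + (t : F) ^ 3 ≠ 0 := fun h => h3 (add_eq_zero2.1 h).symm
    obtain ⟨v, hv⟩ := exists_uA k (u.a / (1 + (t : F) ^ 3))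
    have hza : (v⁻¹ * u * actU t v).a = 0 := by
      simp [hv, hs]
      field_simp
      linear_combination (u.a + u.a * (t : F) ^ 3) * h2
    obtain ⟨c, hc⟩ : ∃ c : Fq k F, v⁻¹ * u * actU t v = zU c := by
      set w := v⁻¹ * u * actU t v
      have hw := w.rel
      rw [hza, zero_mul] at hw
      refine ⟨⟨w.b, ?_⟩, UT.ext' (by rw [hza, zU_a]) (by rw [zU_b])⟩
      rw [mem_Fq]; exact (add_eq_zero2.1 hw).symm
    have hcf := (mem_Fq k).1 c.2
    have hc0 : (c : F) ≠ 0 := by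
      intro hc0
      apply hqd
      apply qd_conj_zero _ (uu v)
      have e : (uu v)⁻¹ * (uu u * hh t) * uu v = hh t := by
        rw [mul_assoc, mul_assoc, hh_uu, ← uu_inv, ← mul_assoc, ← mul_assoc, ← uu_mul, ← uu_mul, hc]
        have : zU c = 1 := UT.ext' rfl hc0
        rw [this, uu_one, one_mul]
      rw [e, qd, mt_hh, hMat, hs]
      ext i j
      fin_cases i <;> fin_cases j <;> simp [Matrix.mul_apply, Fin.sum_univ_three, Matrix.one_apply, add_self2]
      right
      field_simp
      rw [mul_zero]; exact add_self2 _
    rw [← hf.u_conj u v t, hc]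
    obtain ⟨s, hs'⟩ := exists_norm k (F := F) (c := (c : F)) hcf
    have hs0 : s ≠ 0 := by rintro rfl; rw [zero_mul] at hs'; exact hc0 hs'.symm
    rw [← hf.conj (uu (zU c) * hh t) (hh (Units.mk0 s hs0))]
    have e : (hh (Units.mk0 s hs0) : GG k F) * (uu (zU 1) * hh t) = uu (zU c) * hh t * hh (Units.mk0 s hs0) := by
      rw [← mul_assoc, hh_uu, mul_assoc, ← hh_mul, mul_comm, hh_mul, ← mul_assoc]
      congr 3
      exact UT.ext' (by simp) (by simp [hs'])
    rw [mul_assoc, ← e, inv_mul_cancel_left]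

end nn
end Paper

namespace Paper

section nd
open scoped Classical ComplexOrder

variable {k : ℕ} {F : Type} [Field F] [Fintype F] [ExpChar F 2] [hS : Setup k F]
variable {f : GG k F → ℂ}

/-- exceptional pairs -/
def Exc (k : ℕ) (t : Fˣ) (x : F) : Prop := x * (sg k (t : F) / t) ^ 2 = 1

theorem trc_small_norm (u : UT k F) (t : Fˣ) (ht : (t : F) * sg k (t : F) = 1) : trc (uu u * hh t) = ((t : F)⁻¹) ^ 2 := by
  have h0 := t.ne_zero
  have hs : sg k (t : F) = (t : F)⁻¹ := by field_simp; linear_combination ht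
  rw [trc_small, hs]
  have h2 := two_eq_zero' (F := F)
  field_simp
  linear_combination (t : F) ^ 3 * h2

/-- the nonelliptic nonexceptional values -/
theorem ZF.nonell (hf : ZF f) (u : UT k F) (t : Fˣ) (hE : ¬ Ell (uu u * hh t * ww)) (hx : ¬ Exc k t (trc (uu u * hh t * ww))) :
    ∃ s : Fˣ, trc (uu u * hh t * ww) = s + sg k (s : F) / s + (sg k (s : F))⁻¹ ∧
      f (uu u * hh t * ww) = if (s : F) * sg k (s : F) = 1 then vv f s else 0 := by
  obtain ⟨h, u', s, e⟩ := nonell_conj _ hE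
  refine ⟨s, by rw [← trc_conj _ h, e, trc_small], ?_⟩
  rw [← hf.conj _ h, e]
  split_ifs with hs
  · apply hf.small_norm _ _ hs
    rw [← e]
    intro hq
    apply hx
    have h1 := qd_big u t s s.ne_zero (qd_conj_zero _ _ _ hq)
    have h0 := s.ne_zero
    rw [Exc, ← h1, ← trc_conj _ h, e, trc_small_norm _ _ hs]
    field_simp
  · exact hf.small_zero _ _ hs

theorem trc_big_phi (t : Fˣ) (x : F) : trc (uu (uOf k ((x + sg k (t : F) / t) * sg k (t : F))) * hh t * ww : GG k F) = x := by
  have h0 := t.ne_zero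
  have hs := sg_ne k h0
  rw [trc_big, uOf_b, mul_div_cancel_right₀ _ hs, add_assoc, add_self2, add_zero]

theorem tr_norm (s : F) (hs : s * sg k s = 1) : s + sg k s / s + (sg k s)⁻¹ = (s⁻¹) ^ 2 := by
  have h0 : s ≠ 0 := by rintro rfl; simp at hs
  have hs : sg k s = s⁻¹ := by field_simp; linear_combination hs
  rw [hs]
  have h2 := two_eq_zero' (F := F)
  field_simp
  linear_combination s ^ 3 * h2

theorem ZF.indep (hf : ZF f) (t t' : Fˣ) (x : F) (ht : ¬ Exc k t x) (ht' : ¬ Exc k t' x) : phi f t x = phi f t' x := by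
  have e1 := trc_big_phi (k := k) t x
  have e2 := trc_big_phi (k := k) t' x
  set g := (uu (uOf k ((x + sg k (t : F) / t) * sg k (t : F))) * hh t * ww : GG k F) with hg
  set g' := (uu (uOf k ((x + sg k (t' : F) / t') * sg k (t' : F))) * hh t' * ww : GG k F) with hg'
  have p1 : phi f t x = f g := rfl
  have p2 : phi f t' x = f g' := rfl
  by_cases hE : Ell g
  · rw [p1, hf.ell g hE t', e1]
  by_cases hE' : Ell g'
  · rw [p2, hf.ell g' hE' t, e2]
  obtain ⟨s, h1, h2⟩ := hf.nonell _ t hE (by rw [← hg, e1]; exact ht)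
  obtain ⟨s', h1', h2'⟩ := hf.nonell _ t' hE' (by rw [← hg', e2]; exact ht')
  rw [← hg, e1] at h1
  rw [← hg', e2] at h1'
  rw [p1, p2]
  rw [← hg] at h2
  rw [← hg'] at h2'
  rw [h2, h2']
  have hN : ∀ s : Fˣ, x = s + sg k (s : F) / s + (sg k (s : F))⁻¹ → ((s : F) * sg k (s : F) = 1 ↔ x * sg k x = 1) := by
    intro s hs
    constructor
    · intro h
      rw [hs, tr_norm _ h, map_pow, map_inv₀, ← mul_pow, ← mul_inv, h, inv_one, one_pow]
    · intro h
      rw [hs] at h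
      exact trace_norm_one _ s.ne_zero h
  by_cases hx : x * sg k x = 1
  · have hs := (hN s h1).2 hx
    have hs' := (hN s' h1').2 hx
    rw [if_pos hs, if_pos hs']
    congr 1
    rw [tr_norm _ hs] at h1
    rw [tr_norm _ hs', h1] at h1'
    exact Units.ext (inv_injective (sq_inj2 h1'))
  · rw [if_neg (fun h => hx ((hN s h1).1 h)), if_neg (fun h => hx ((hN s' h1').1 h))]

theorem ZF.zU_zero (hf : ZF f) (c : Fq k F) : f (uu (zU c)) = 0 := by
  have hc1 : ∀ c : Fq k F, c ≠ 0 → f (uu (zU c)) = f (uu (zU 1)) := by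
    intro c hc
    have hc' : (c : F) ≠ 0 := fun h => hc (Subtype.ext h)
    obtain ⟨s, hs⟩ := exists_norm k (F := F) (c := (c : F)) ((mem_Fq k).1 c.2)
    have hs0 : s ≠ 0 := by rintro rfl; rw [zero_mul] at hs; exact hc' hs.symm
    rw [← hf.conj (uu (zU c)) (hh (Units.mk0 s hs0))]
    have e : (hh (Units.mk0 s hs0) : GG k F) * uu (zU 1) = uu (zU c) * hh (Units.mk0 s hs0) := by
      rw [hh_uu]
      congr 2
      exact UT.ext' (by simp) (by simp [hs])
    rw [mul_assoc, ← e, inv_mul_cancel_left]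
  have h0 : f (uu (zU (0 : Fq k F))) = 0 := by
    have : (zU (0 : Fq k F)) = 1 := UT.ext' rfl rfl
    rw [this, uu_one, hf.one]
  by_cases hc : c = 0
  · rw [hc, h0]
  rw [hc1 c hc]
  have h := hf.zs 1
  simp only [one_mul] at h
  rw [← Finset.add_sum_erase _ _ (Finset.mem_univ (0 : Fq k F)), h0, zero_add,
    Finset.sum_congr rfl (fun d hd => hc1 d (Finset.ne_of_mem_erase hd)), Finset.sum_const,
    Finset.card_erase_of_mem (Finset.mem_univ _), Finset.card_univ, card_Fq, nsmul_eq_mul] at h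
  rcases mul_eq_zero.1 h with h | h
  · have hq := q_ge k F
    rw [Nat.cast_eq_zero] at h; omega
  · exact h

theorem ZF.ww_zero (hf : ZF f) : f ww = 0 := by
  have hE : ¬ Ell (ww : GG k F) := by
    intro h
    apply h ![1, 0, 1] (by intro h; simpa using congrFun h 0) (by simp [hfm, add_self2]) 1
    rw [mt_ww, Om_eq]
    ext i; fin_cases i <;> simp [Matrix.mulVec, dotProduct, Fin.sum_univ_three]
  obtain ⟨h, u, t, e⟩ := nonell_conj _ hE
  have e2 : (uu u * hh t) * (uu u * hh t) = (1 : GG k F) := by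
    rw [← e]
    calc _ = h⁻¹ * (ww * ww) * h := by group
      _ = 1 := by rw [ww_ww]; group
  have e3 : mt (uu u * hh t) * mt (uu u * hh t) = 1 := by rw [← mt_mul, e2, mt_one]
  have ht : t = 1 := by
    have := congrFun (congrFun e3 0) 0
    simp [mt_mul, mt_uu, mt_hh, uMat, hMat, Matrix.mul_apply, Fin.sum_univ_three] at this
    apply Units.ext
    apply sq_inj2
    rw [Units.val_one]; linear_combination this
  rw [ht, hh_one, mul_one, ← uu_mul, ← uu_one] at e2
  have e4 := congrArg UT.b (uu_inj e2)
  have ha : u.a = 0 := by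
    simp [add_self2] at e4
    exact e4
  have hr := u.rel
  rw [ha, zero_mul] at hr
  have hu : u = zU ⟨u.b, (add_eq_zero2.1 hr).symm⟩ := UT.ext' ha rfl
  rw [← hf.conj _ h, e, ht, hh_one, mul_one, hu, hf.zU_zero]

theorem ZF.phi_one_one (hf : ZF f) : phi f 1 1 = 0 := by
  rw [phi, hf.f_b _ 1 (by rw [uOf_b]; simp [add_self2]), uu_one, hh_one, one_mul, one_mul, hf.ww_zero]

theorem ZF.phi_t_one (hf : ZF f) (t : Fˣ) (ht : ¬ Exc k t 1) : phi f t 1 = 0 := by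
  obtain ⟨u, hu⟩ := exists_uA k (1 : F)
  have hr := u.rel
  rw [hu, map_one, mul_one] at hr
  have h1 : u ≠ 1 := by
    rintro rfl; simp at hu
  have h0 : f (uu u) = 0 := by
    have := hf.central u 1 (by simp) (by simp) (by rw [hu]; exact one_ne_zero)
    rwa [hh_one, mul_one] at this
  have htr : trc (uu u) = 1 := by
    have := trc_small u (1 : Fˣ)
    rw [hh_one, mul_one] at this
    rw [this]; simp [add_self2]
  have h2 := hf.big_conj (uu u) ww (tbar k (ub u h1)) (by
    rw [tbar_tbar, ww_inv, mt_mul, mt_mul, mt_uu, mt_ww, Om_eq]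
    simp [uMat, Matrix.mul_apply, Fin.sum_univ_three, ub])
  rw [h0, htr] at h2
  rw [h2]
  apply hf.indep _ _ _ ht
  have hb := UT.b_ne h1
  have hb' := sg_ne k hb
  rw [Exc, tbar_val]
  intro h
  have hub : ((ub u h1 : Fˣ) : F) = u.b := rfl
  rw [hub, map_inv₀, sg_sg, one_mul] at h
  have h3 : (sg k u.b / u.b) = 1 := by
    apply sq_inj2; rw [one_pow, ← h]; field_simp
  rw [div_eq_one_iff_eq hb] at h3
  rw [h3, add_self2] at hr
  exact zero_ne_one hr

/-- the common function -/
def Fn (f : GG k F → ℂ) (x : F) : ℂ := if x = 1 then 0 else phi f 1 x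

theorem ZF.phi_Fn (hf : ZF f) (t : Fˣ) (x : F) (hx : ¬ Exc k t x) : phi f t x = Fn f x := by
  rw [Fn]
  split_ifs with h
  · subst h; exact hf.phi_t_one t hx
  · exact hf.indep _ _ _ hx (by simpa [Exc] using h)

theorem ZF.phi_total (hf : ZF f) (t : Fˣ) : ∑ x, phi f t x = 0 := by
  have h : ∑ x : F, ∑ c : Fq k F, phi f t (x + c / sg k (t : F)) = 0 := Finset.sum_eq_zero fun x _ => hf.phi_sum t x
  rw [Finset.sum_comm] at h
  have h2 : ∀ c : Fq k F, ∑ x : F, phi f t (x + c / sg k (t : F)) = ∑ x, phi f t x := by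
    intro c
    exact Fintype.sum_equiv (Equiv.addRight ((c : F) / sg k (t : F))) _ _ (fun x => rfl)
  simp only [h2, Finset.sum_const, Finset.card_univ, card_Fq, nsmul_eq_mul] at h
  rcases mul_eq_zero.1 h with h | h
  · push_cast at h; exact absurd h (qC_ne k)
  · exact h

theorem ZF.phi_one (hf : ZF f) (x : F) : phi f 1 x = Fn f x := by
  rw [Fn]; split_ifs with h
  · rw [h, hf.phi_one_one]
  · rfl

theorem ZF.phi_all (hf : ZF f) (t : Fˣ) (x : F) : phi f t x = Fn f x := by
  by_cases hx : Exc k t x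
  · have hS : ∑ x, (phi f t x - Fn f x) = 0 := by
      rw [Finset.sum_sub_distrib, hf.phi_total t]
      simp only [← hf.phi_one]
      rw [hf.phi_total, sub_zero]
    rw [Finset.sum_eq_single x] at hS
    · exact sub_eq_zero.1 hS
    · intro y _ hy
      rw [hf.phi_Fn t y, sub_self]
      intro h
      apply hy
      have h0 : (sg k (t : F) / t) ^ 2 ≠ 0 := pow_ne_zero _ (div_ne_zero (sg_ne k t.ne_zero) t.ne_zero)
      rw [Exc] at h hx
      exact mul_right_cancel₀ h0 (h.trans hx.symm)
    · simp
  · exact hf.phi_Fn t x hx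

theorem ZF.Fn_zero (hf : ZF f) (x : F) : Fn f x = 0 := by
  have hS : ∑ x, Fn f x = 0 := by
    simp only [← hf.phi_one]
    exact hf.phi_total 1
  have h1 : ∑ t : Fˣ, ∑ c : Fq k F, Fn f (x + c / sg k (t : F)) = 0 := by
    refine Finset.sum_eq_zero fun t _ => ?_
    have := hf.phi_sum t x
    simpa only [hf.phi_all] using this
  rw [Finset.sum_comm, ← Finset.add_sum_erase _ _ (Finset.mem_univ (0 : Fq k F))] at h1
  have h2 : ∀ c : Fq k F, c ≠ 0 → ∑ t : Fˣ, Fn f (x + c / sg k (t : F)) = - Fn f x := by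
    intro c hc
    have hc' : (c : F) ≠ 0 := fun h => hc (Subtype.ext h)
    have e1 : ∑ t : Fˣ, Fn f (x + c / sg k (t : F)) = ∑ y ∈ Finset.univ.erase (0 : F), Fn f (x + y) := by
      refine Finset.sum_bij' (fun t _ => (c : F) / sg k (t : F))
        (fun y hy => Units.mk0 ((c : F) / sg k y) (div_ne_zero hc' (sg_ne k (Finset.ne_of_mem_erase hy)))) ?_ ?_ ?_ ?_ ?_
      · intro t _
        exact Finset.mem_erase.2 ⟨div_ne_zero hc' (sg_ne k t.ne_zero), Finset.mem_univ _⟩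
      · intro y hy; exact Finset.mem_univ _
      · intro t _
        have := t.ne_zero
        apply Units.ext
        simp [(mem_Fq k).1 c.2]
        field_simp
      · intro y hy
        have := Finset.ne_of_mem_erase hy
        simp [(mem_Fq k).1 c.2]
        field_simp
      · intro t _; rfl
    rw [e1]
    have e2 := Finset.add_sum_erase Finset.univ (fun y : F => Fn f (x + y)) (Finset.mem_univ 0)
    have e3 : ∑ y, Fn f (x + y) = ∑ y, Fn f y := Fintype.sum_equiv (Equiv.addLeft x) _ _ (fun y => rfl)
    rw [e3, hS, add_zero] at e2
    linear_combination e2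
  rw [Finset.sum_congr rfl (fun d hd => h2 d (Finset.ne_of_mem_erase hd)), Finset.sum_const,
    Finset.card_erase_of_mem (Finset.mem_univ _), Finset.card_univ, card_Fq, nsmul_eq_mul,
    Nat.cast_sub (q_pos k)] at h1
  simp only [ZeroMemClass.coe_zero, zero_div, add_zero, Finset.sum_const, Finset.card_univ, nsmul_eq_mul, card_units (k := k) (F := F)] at h1
  push_cast at h1
  have hq := q_ge k F
  have h3 : (2 : ℂ) ^ k * (2 ^ k - 1) * Fn f x = 0 := by linear_combination h1
  rcases mul_eq_zero.1 h3 with h | h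
  · rcases mul_eq_zero.1 h with h | h
    · exact absurd h (qC_ne k)
    · have : ((2 ^ k : ℕ) : ℂ) = (1 : ℕ) := by push_cast; linear_combination h
      have := Nat.cast_injective this
      omega
  · exact h

theorem ZF.conj_zero (hf : ZF f) (g h : GG k F) (h0 : mt (h⁻¹ * g * h) 2 0 ≠ 0) : f g = 0 := by
  rw [hf.big_conj g h (tbar k (Units.mk0 _ h0)) (by rw [tbar_tbar]; rfl), hf.phi_all, hf.Fn_zero]

/-- Main vanishing result. -/
theorem ZF.zero (hf : ZF f) (g : GG k F) : f g = 0 := by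
  by_cases h : mt g 2 0 = 0
  · obtain ⟨u, t, rfl⟩ := bruhat_small g h
    have key : ∀ u : UT k F, u ≠ 1 → f (uu u * hh t) = 0 := by
      intro u hu
      apply hf.conj_zero _ ww
      have hb := UT.b_ne hu
      have ht := sg_ne k t.ne_zero
      rw [ww_inv, mt_mul, mt_mul, mt_mul, mt_uu, mt_ww, mt_hh, Om_eq]
      simp [uMat, hMat, Matrix.mul_apply, Fin.sum_univ_three, hb, ht]
    by_cases hu : u = 1
    · subst hu
      have h1 := hf.zs (hh t)
      rw [Finset.sum_eq_single (0 : Fq k F)] at h1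
      · rwa [hf.cl] at h1
      · intro c _ hc
        rw [hf.cl]
        apply key
        intro h2
        apply hc
        exact Subtype.ext (congrArg UT.b h2)
      · simp
    · exact key u hu
  · exact hf.conj_zero g 1 (by simpa using h)

end nd
end Paper

namespace Paper

section ne
open scoped Classical ComplexOrder

variable {k : ℕ} {F : Type} [Field F] [Fintype F] [ExpChar F 2] [hS : Setup k F] {n : ℕ}

/-- product in `Mu` -/
def Mu.mul (y z : Mu k F) : Mu k F := ⟨y.1 * z.1, by
  rw [map_mul (sg k)]; linear_combination y.2 * (z.1 * sg k z.1) + z.2⟩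
def Mu.inv (y : Mu k F) : Mu k F := ⟨y.1⁻¹, by rw [map_inv₀, ← mul_inv, y.2, inv_one]⟩
def Mu.one : Mu k F := ⟨1, by simp⟩

theorem Dy_Dy (y z : Mu k F) (g : GG k F) : Dy y (Dy z g) = Dy (y.mul z) g := by
  apply mt_inj
  have h1 := y.ne
  have h2 := z.ne
  have e : (y.mul z).1 = y.1 * z.1 := rfl
  rw [mt_Dy, mt_Dy, mt_Dy, e]
  ext i j
  fin_cases i <;> fin_cases j <;> simp [dMat] <;> field_simp

theorem Dy_one (g : GG k F) : Dy Mu.one g = g := by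
  apply mt_inj
  have e : (Mu.one : Mu k F).1 = 1 := rfl
  rw [mt_Dy, e]
  ext i j
  fin_cases i <;> fin_cases j <;> simp [dMat]

/-- translation -/
def muEquiv (z : Mu k F) : Mu k F ≃ Mu k F where
  toFun y := y.mul z
  invFun y := y.mul z.inv
  left_inv y := Subtype.ext (by
    have := z.ne
    show y.1 * z.1 * z.1⁻¹ = y.1
    field_simp)
  right_inv y := Subtype.ext (by
    have := z.ne
    show y.1 * z.1⁻¹ * z.1 = y.1
    field_simp)

theorem Dy_zU (y : Mu k F) (c : Fq k F) : Dy y (uu (zU c)) = uu (zU c) := by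
  rw [Dy_uu]; congr 1
  exact UT.ext' (by simp) (by simp)

variable {R : GG k F →* Matrix (Fin n) (Fin n) ℂ}

theorem zf_of (h0 : PL R 0 = 0) :
    ZF (fun g : GG k F => ∑ y : Mu k F, ((R (Dy y g)).trace - (R (Dy y g⁻¹)).trace)) where
  cl g h := by
    refine Finset.sum_congr rfl fun y _ => ?_
    simp only [_root_.mul_inv_rev, map_mul (Dy y), map_mul R]
    rw [Matrix.trace_mul_comm, Matrix.trace_mul_comm (R (Dy y h⁻¹))]
  dy z g := by
    simp only [← map_inv (Dy z), Dy_Dy]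
    exact Fintype.sum_equiv (muEquiv z) _ _ (fun y => rfl)
  zs g := by
    have hz : ∑ c : Fq k F, R (uu (zU c)) = 0 := by
      rw [PL] at h0
      simpa [qC_ne k] using h0
    have hinv : ∀ c : Fq k F, (uu (zU c) : GG k F)⁻¹ = uu (zU c) := by
      intro c
      rw [inv_eq_iff_mul_eq_one, ← uu_mul, ← uu_one]; congr 1
      exact UT.ext' (by simp) (by simp [add_self2])
    rw [Finset.sum_comm]
    refine Finset.sum_eq_zero fun y _ => ?_
    rw [Finset.sum_sub_distrib]
    simp only [_root_.mul_inv_rev, map_mul (Dy y), map_mul R, hinv, Dy_zU]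
    rw [← Matrix.trace_sum, ← Matrix.trace_sum, ← Finset.mul_sum, ← Finset.sum_mul, hz]
    simp
  one := by simp

theorem real_of_PL (hR : IrrR R) (h0 : PL R 0 = 0) (g : GG k F) : (starRingEnd ℂ) (R g).trace = (R g).trace := by
  have hz := (zf_of h0).zero
  have h1 : ∑ g, ∑ y : Mu k F, (R (Dy y g)).trace * (R g⁻¹).trace = ∑ g, ∑ y : Mu k F, (R (Dy y g⁻¹)).trace * (R g⁻¹).trace := by
    refine Finset.sum_congr rfl fun g _ => ?_
    rw [← Finset.sum_mul, ← Finset.sum_mul]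
    congr 1
    have := hz g
    rw [Finset.sum_sub_distrib] at this
    exact sub_eq_zero.1 this
  rw [Finset.sum_comm, Finset.sum_comm (f := fun g (y : Mu k F) => (R (Dy y g⁻¹)).trace * (R g⁻¹).trace)] at h1
  have hp := pairing_self (R := R) hR.1
  set p := ∑ g, (R g).trace * (R g⁻¹).trace with hpd
  have h2 : ∀ y : Mu k F, ∑ g, (R (Dy y g)).trace * (R g⁻¹).trace = (if ∑ g, (R (Dy y g)).trace * (R g⁻¹).trace = 0 then 0 else 1) * p := by
    intro y
    split_ifs with h
    · rw [h, zero_mul]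
    · obtain ⟨Y, hY, hYe⟩ := exists_equiv (R.comp (Dy y)) hR h
      have h3 := trace_eq_of_equiv hY hYe
      rw [one_mul, hpd]
      exact Finset.sum_congr rfl fun g _ => by rw [← h3 g]; rfl
  have h4 : ∑ y : Mu k F, ∑ g, (R (Dy y g)).trace * (R g⁻¹).trace ≠ 0 := by
    rw [Finset.sum_congr rfl (fun y _ => h2 y), ← Finset.sum_mul]
    refine mul_ne_zero ?_ hp
    rw [Finset.sum_ite]
    simp only [Finset.sum_const_zero, zero_add, Finset.sum_const, nsmul_eq_mul, mul_one]
    rw [Nat.cast_ne_zero, ← Nat.pos_iff_ne_zero, Finset.card_pos]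
    refine ⟨Mu.one, Finset.mem_filter.2 ⟨Finset.mem_univ _, ?_⟩⟩
    simp only [Dy_one]
    exact hp
  rw [h1] at h4
  obtain ⟨y, _, hy⟩ := Finset.exists_ne_zero_of_sum_ne_zero h4
  let R1 : GG k F →* Matrix (Fin n) (Fin n) ℂ :=
    ((starRingEnd ℂ).mapMatrix : Matrix (Fin n) (Fin n) ℂ →+* _).toMonoidHom.comp (R.comp (Dy y))
  have hR1 : ∀ g, (R1 g).trace = (starRingEnd ℂ) (R (Dy y g)).trace := by
    intro g
    exact (AddMonoidHom.map_trace (starRingEnd ℂ).toAddMonoidHom (R (Dy y g))).symm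
  obtain ⟨Y, hY, hYe⟩ := exists_equiv R1 hR (by
    have e : ∀ g, (R1 g).trace * (R g⁻¹).trace = (R (Dy y g⁻¹)).trace * (R g⁻¹).trace := by
      intro g; rw [hR1, ← char_inv, map_inv (Dy y)]
    simp only [e]; exact hy)
  have h5 : ∀ g, (R (Dy y g)).trace = (starRingEnd ℂ) (R g).trace := by
    intro g
    rw [← trace_eq_of_equiv hY hYe g, hR1, Complex.conj_conj]
  have h6 : ∀ m : ℕ, ∀ g, (R ((Dy y)^[2 * m] g)).trace = (R g).trace := by
    intro m
    induction m with
    | zero => intro g; rfl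
    | succ m ih =>
      intro g
      rw [show 2 * (m + 1) = 2 * m + 1 + 1 by ring, Function.iterate_succ_apply, Function.iterate_succ_apply, ih, h5, h5, Complex.conj_conj]
  have h7 : ∀ m : ℕ, ∀ g, mt ((Dy y)^[m] g) = dMat (y.1 ^ m) (mt g) := by
    intro m
    induction m with
    | zero =>
      intro g
      ext i j
      fin_cases i <;> fin_cases j <;> simp [dMat]
    | succ m ih =>
      intro g
      have := y.ne
      rw [Function.iterate_succ_apply, ih, mt_Dy, pow_succ]
      generalize y.1 ^ m = z
      ext i j
      fin_cases i <;> fin_cases j <;> simp [dMat, div_div, mul_assoc, mul_comm]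
  have h8 : (Dy y)^[2 ^ k + 1] g = g := by
    apply mt_inj
    have : y.1 ^ (2 ^ k + 1) = 1 := by rw [pow_succ, ← sg_def, mul_comm, y.2]
    rw [h7, this]
    ext i j
    fin_cases i <;> fin_cases j <;> simp [dMat]
  have hk : 2 ^ k = 2 * 2 ^ (k - 1) := by
    rw [← pow_succ']; congr 1
    have := Setup.hk (k := k) (F := F); omega
  rw [hk, Function.iterate_succ_apply] at h8
  have h9 := h6 (2 ^ (k - 1)) (Dy y g)
  rw [h8, h5] at h9
  exact h9.symm

end ne
end Paper

namespace Paper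

section da
open scoped Classical ComplexOrder
variable {n : ℕ}

/-- rank factorization of an idempotent through some of its columns -/
theorem rank_fact (P : Matrix (Fin n) (Fin n) ℂ) (hP : P * P = P) :
    ∃ (J : Type) (_ : Fintype J) (a : J → Fin n) (D : Matrix J (Fin n) ℂ),
      P.submatrix id a * D = P ∧ D * P.submatrix id a = 1 := by
  obtain ⟨J, a, ha, hs, hl⟩ := exists_linearIndependent' ℂ (fun j : Fin n => fun i => P i j)
  have : Fintype J := Fintype.ofInjective a ha
  set C := P.submatrix id a with hC
  have hcol : ∀ (D : J → ℂ), C *ᵥ D = ∑ j, D j • (fun i => P i (a j)) := by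
    intro D; ext i
    simp [hC, Matrix.mulVec, dotProduct, Finset.sum_apply, mul_comm]
  have h1 : ∀ j : Fin n, ∃ D : J → ℂ, C *ᵥ D = fun i => P i j := by
    intro j
    have hm : (fun i => P i j) ∈ Submodule.span ℂ (Set.range ((fun j : Fin n => fun i => P i j) ∘ a)) := by
      rw [hs]; exact Submodule.subset_span ⟨j, rfl⟩
    obtain ⟨D, hD⟩ := (Submodule.mem_span_range_iff_exists_fun ℂ).1 hm
    exact ⟨D, by rw [hcol, ← hD]; rfl⟩
  choose D hD using h1
  have hCD : C * (Matrix.of fun j i => D i j) = P := by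
    ext i j
    have := congrFun (hD j) i
    simpa [Matrix.mul_apply, Matrix.mulVec, dotProduct] using this
  refine ⟨J, this, a, Matrix.of fun j i => D i j, hCD, ?_⟩
  set D' : Matrix J (Fin n) ℂ := Matrix.of fun j i => D i j
  have hPC : P * C = C := by
    ext i j
    have := congrFun (congrFun hP i) (a j)
    simpa [hC, Matrix.mul_apply] using this
  have h2 : C * (D' * C - (1 : Matrix J J ℂ)) = 0 := by
    rw [Matrix.mul_sub, ← Matrix.mul_assoc, hCD, hPC, Matrix.mul_one, sub_self]
  have h3 : D' * C - (1 : Matrix J J ℂ) = 0 := by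
    ext j j'
    have h4 : ∑ l, (D' * C - (1 : Matrix J J ℂ)) l j' • (fun i => P i (a l)) = 0 := by
      rw [← hcol]
      ext i
      have := congrFun (congrFun h2 i) j'
      simpa [Matrix.mul_apply, Matrix.mulVec, dotProduct] using this
    exact Fintype.linearIndependent_iff.1 hl _ h4 j
  exact sub_eq_zero.1 h3

/-- entries in a subfield -/
def InL {m m' : Type} (L : Subfield ℂ) (M : Matrix m m' ℂ) : Prop := ∀ i j, M i j ∈ L

variable {L : Subfield ℂ} {m m' m'' : Type}
theorem InL.mul [Fintype m'] {M : Matrix m m' ℂ} {N : Matrix m' m'' ℂ} (hM : InL L M) (hN : InL L N) : InL L (M * N) := by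
  intro i j; rw [Matrix.mul_apply]; exact sum_mem fun l _ => mul_mem (hM _ _) (hN _ _)
theorem InL.add {M N : Matrix m m' ℂ} (hM : InL L M) (hN : InL L N) : InL L (M + N) :=
  fun i j => add_mem (hM i j) (hN i j)
theorem InL.smul {c : ℂ} {N : Matrix m m' ℂ} (hM : c ∈ L) (hN : InL L N) : InL L (c • N) :=
  fun i j => mul_mem hM (hN i j)
theorem InL.sum {ι : Type} {s : Finset ι} {M : ι → Matrix m m' ℂ} (hM : ∀ l, InL L (M l)) : InL L (∑ l ∈ s, M l) := by
  intro i j; rw [Matrix.sum_apply]; exact sum_mem fun l _ => hM l i j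
theorem InL.one [DecidableEq m] : InL L (1 : Matrix m m ℂ) := by
  intro i j; rw [Matrix.one_apply]; split_ifs
  · exact one_mem _
  · exact zero_mem _
theorem InL.sub {a : m'' → m'} {M : Matrix m m' ℂ} (hM : InL L M) : InL L (M.submatrix id a) := fun i j => hM _ _
theorem InL.det [Fintype m] [DecidableEq m] {M : Matrix m m ℂ} (hM : InL L M) : M.det ∈ L := by
  rw [Matrix.det_apply]
  refine sum_mem fun s _ => ?_
  rw [Units.smul_def, zsmul_eq_mul]
  exact mul_mem (intCast_mem _ _) (prod_mem fun i _ => hM _ _)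



theorem gram_det {I : Type} [Fintype I] [DecidableEq I] (H : Matrix (Fin n) (Fin n) ℂ)
    (Q : Matrix (Fin n) I ℂ) (Q' : Matrix I (Fin n) ℂ) (hQQ : Q * Q' = 1) (hQ'Q : Q' * Q = 1) (hQL : InL L Q) :
    ∃ d ∈ L, d ≠ 0 ∧ H.det * (d * (starRingEnd ℂ) d) = (Qᴴ * H * Q).det := by
  have hcard : Fintype.card (Fin n) = Fintype.card I := Matrix.square_of_invertible Q Q' hQQ hQ'Q
  let e : Fin n ≃ I := Fintype.equivOfCardEq hcard
  have hS1 : Q.submatrix id e * Q'.submatrix e id = 1 := by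
    rw [Matrix.submatrix_mul_equiv, hQQ]; simp
  have hSd : (Q.submatrix id e).det ≠ 0 := by
    intro h
    have := congrArg Matrix.det hS1
    rw [Matrix.det_mul, h] at this
    simp at this
  refine ⟨(Q.submatrix id e).det, InL.det (hQL.sub), hSd, ?_⟩
  have : ((Q.submatrix id e)ᴴ * H * (Q.submatrix id e)) = (Qᴴ * H * Q).submatrix e e := by
    ext i j; simp [Matrix.mul_apply]
  rw [← Matrix.det_submatrix_equiv_self e (Qᴴ * H * Q), ← this, Matrix.det_mul, Matrix.det_mul, Matrix.det_conjTranspose]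
  simp only [starRingEnd_apply]; ring

theorem gram_zero {a b : Type} [Fintype a] [Fintype b] (H : Matrix (Fin n) (Fin n) ℂ) (M : Matrix (Fin n) a ℂ) (N : Matrix (Fin n) b ℂ)
    (E E' : Matrix (Fin n) (Fin n) ℂ) (h1 : E * M = M) (h2 : E' * N = N) (h3 : Eᴴ * H = H * E) (h4 : E * E' = 0) :
    Mᴴ * H * N = 0 := by
  rw [← h1, Matrix.conjTranspose_mul, Matrix.mul_assoc Mᴴ, h3, ← h2]
  calc _ = Mᴴ * H * (E * E') * N := by simp only [Matrix.mul_assoc]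
    _ = 0 := by rw [h4]; simp

theorem gram_block {I J : Type} [Fintype I] [Fintype J] [DecidableEq I] [DecidableEq J] (H : Matrix (Fin n) (Fin n) ℂ)
    (X : Matrix (Fin n) I ℂ) (C C' : Matrix (Fin n) J ℂ)
    (h12 : Xᴴ * H * C = 0) (h13 : Xᴴ * H * C' = 0) (h21 : Cᴴ * H * X = 0) (h23 : Cᴴ * H * C' = 0)
    (h31 : C'ᴴ * H * X = 0) (h32 : C'ᴴ * H * C = 0) :
    ((Matrix.fromCols X (Matrix.fromCols C C'))ᴴ * H * Matrix.fromCols X (Matrix.fromCols C C')).det =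
      (Xᴴ * H * X).det * ((Cᴴ * H * C).det * (C'ᴴ * H * C').det) := by
  rw [Matrix.conjTranspose_fromCols_eq_fromRows_conjTranspose, Matrix.conjTranspose_fromCols_eq_fromRows_conjTranspose,
    Matrix.fromRows_mul _ _ H, Matrix.fromRows_mul _ _ H, Matrix.fromRows_mul_fromCols, Matrix.fromRows_mul_fromCols, Matrix.mul_fromCols, Matrix.fromRows_mul,
    h12, h13, h21, h23, h31, h32, Matrix.fromCols_zero, Matrix.fromRows_zero, Matrix.det_fromBlocks_zero₂₁, Matrix.det_fromBlocks_zero₂₁]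

theorem gram_inv {I J : Type} [Fintype I] [Fintype J] [DecidableEq I] [DecidableEq J]
    (X : Matrix (Fin n) I ℂ) (C C' : Matrix (Fin n) J ℂ) (X' : Matrix I (Fin n) ℂ) (D D' : Matrix J (Fin n) ℂ)
    (hX' : X' * X = 1) (k12 : X' * C = 0) (k13 : X' * C' = 0) (k21 : D * X = 0) (k31 : D' * X = 0)
    (hC' : D * C = 1) (k23 : D * C' = 0) (k32 : D' * C = 0) (k33 : D' * C' = 1) :
    Matrix.fromRows X' (Matrix.fromRows D D') * Matrix.fromCols X (Matrix.fromCols C C') = 1 := by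
  rw [Matrix.fromRows_mul_fromCols, Matrix.fromRows_mul_fromCols, Matrix.mul_fromCols, Matrix.fromRows_mul, hX', k12, k13, k21, k31, hC', k23, k32, k33,
      Matrix.fromBlocks_one, Matrix.fromCols_zero, Matrix.fromRows_zero, Matrix.fromBlocks_one]

set_option maxHeartbeats 1000000 in
theorem disc_core {I J : Type} [Fintype I] [Fintype J] [DecidableEq I] [DecidableEq J] (Z P Y Y' H : Matrix (Fin n) (Fin n) ℂ)
    (X : Matrix (Fin n) I ℂ) (X' : Matrix I (Fin n) ℂ) (C : Matrix (Fin n) J ℂ) (D : Matrix J (Fin n) ℂ)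
    (hX : X * X' = Z) (hX' : X' * X = 1) (hC : C * D = P) (hC' : D * C = 1)
    (hZP : Z * P = 0) (hPZ : P * Z = 0) (hY : Y * P * Y' = 1 - Z - P) (hYY : Y * Y' = 1) (hYY' : Y' * Y = 1)
    (hZH : Zᴴ * H = H * Z) (hPH : Pᴴ * H = H * P) (hYH : Yᴴ * H * Y = H)
    (hXL : InL L X) (hCL : InL L C) (hYL : InL L Y) :
    ∃ d ∈ L, d ≠ 0 ∧ H.det * (d * (starRingEnd ℂ) d) = (Xᴴ * H * X).det * (Cᴴ * H * C).det ^ 2 := by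
  set P' := 1 - Z - P with hP'
  have hPC : P * C = C := by rw [← hC, Matrix.mul_assoc, hC', Matrix.mul_one]
  have hDP : D * P = D := by rw [← hC, ← Matrix.mul_assoc, hC', Matrix.one_mul]
  have hZX : Z * X = X := by rw [← hX, Matrix.mul_assoc, hX', Matrix.mul_one]
  have hXZ : X' * Z = X' := by rw [← hX, ← Matrix.mul_assoc, hX', Matrix.one_mul]
  have hPP : P * P = P := by rw [← hC, ← Matrix.mul_assoc, Matrix.mul_assoc C D, hC', Matrix.mul_one]
  have hZZ : Z * Z = Z := by rw [← hX, ← Matrix.mul_assoc, Matrix.mul_assoc X X', hX', Matrix.mul_one]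
  have hZP' : Z * P' = 0 := by rw [hP', Matrix.mul_sub, Matrix.mul_sub, Matrix.mul_one, hZZ, hZP]; simp
  have hP'Z : P' * Z = 0 := by rw [hP', Matrix.sub_mul, Matrix.sub_mul, Matrix.one_mul, hZZ, hPZ]; simp
  have hPP' : P * P' = 0 := by rw [hP', Matrix.mul_sub, Matrix.mul_sub, Matrix.mul_one, hPZ, hPP]; simp
  have hP'P : P' * P = 0 := by rw [hP', Matrix.sub_mul, Matrix.sub_mul, Matrix.one_mul, hZP, hPP]; simp
  have hP'H : P'ᴴ * H = H * P' := by
    rw [hP', Matrix.conjTranspose_sub, Matrix.conjTranspose_sub, Matrix.conjTranspose_one, Matrix.sub_mul, Matrix.sub_mul, hZH, hPH, Matrix.mul_sub, Matrix.mul_sub, Matrix.one_mul, Matrix.mul_one]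
  have hPYC : P' * (Y * C) = Y * C := by
    rw [← hY, ← Matrix.mul_assoc, Matrix.mul_assoc _ Y', hYY', Matrix.mul_one, Matrix.mul_assoc, hPC]
  have hDYP : D * Y' * P' = D * Y' := by
    rw [← hY, Matrix.mul_assoc Y, Matrix.mul_assoc D, ← Matrix.mul_assoc Y' Y, hYY', Matrix.one_mul, ← Matrix.mul_assoc, hDP]
  have k12 : X' * C = 0 := by
    rw [← hXZ, ← hPC, Matrix.mul_assoc, ← Matrix.mul_assoc Z, hZP, Matrix.zero_mul, Matrix.mul_zero]
  have k13 : X' * (Y * C) = 0 := by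
    rw [← hXZ, ← hPYC, Matrix.mul_assoc, ← Matrix.mul_assoc Z, hZP', Matrix.zero_mul, Matrix.mul_zero]
  have k21 : D * X = 0 := by
    rw [← hDP, ← hZX, Matrix.mul_assoc, ← Matrix.mul_assoc P, hPZ, Matrix.zero_mul, Matrix.mul_zero]
  have k23 : D * (Y * C) = 0 := by
    rw [← hDP, ← hPYC, Matrix.mul_assoc, ← Matrix.mul_assoc P, hPP', Matrix.zero_mul, Matrix.mul_zero]
  have k31 : D * Y' * X = 0 := by
    rw [← hDYP, ← hZX, Matrix.mul_assoc, ← Matrix.mul_assoc P', hP'Z, Matrix.zero_mul, Matrix.mul_zero]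
  have k32 : D * Y' * C = 0 := by
    rw [← hDYP, ← hPC, Matrix.mul_assoc, ← Matrix.mul_assoc P', hP'P, Matrix.zero_mul, Matrix.mul_zero]
  have k33 : D * Y' * (Y * C) = 1 := by
    rw [← Matrix.mul_assoc, Matrix.mul_assoc D, hYY', Matrix.mul_one, hC']
  have hQQ : Matrix.fromCols X (Matrix.fromCols C (Y * C)) * Matrix.fromRows X' (Matrix.fromRows D (D * Y')) = 1 := by
    rw [Matrix.fromCols_mul_fromRows, Matrix.fromCols_mul_fromRows, hX, hC, ← Matrix.mul_assoc, Matrix.mul_assoc Y, hC, hY, hP']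
    abel
  have hQL : InL L (Matrix.fromCols X (Matrix.fromCols C (Y * C))) := by
    intro i j
    rcases j with j | j | j
    · exact hXL i j
    · exact hCL i j
    · exact hYL.mul hCL i j
  obtain ⟨d, hd, hd0, h⟩ := gram_det H _ _ hQQ (gram_inv X C (Y * C) X' D (D * Y') hX' k12 k13 k21 k31 hC' k23 k32 k33) hQL
  refine ⟨d, hd, hd0, ?_⟩
  rw [h, gram_block H X C (Y * C) (gram_zero H X C Z P hZX hPC hZH hZP) (gram_zero H X (Y * C) Z P' hZX hPYC hZH hZP')
    (gram_zero H C X P Z hPC hZX hPH hPZ) (gram_zero H C (Y * C) P P' hPC hPYC hPH hPP')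
    (gram_zero H (Y * C) X P' Z hPYC hZX hP'H hP'Z) (gram_zero H (Y * C) C P' P hPYC hPC hP'H hP'P)]
  have : (Y * C)ᴴ * H * (Y * C) = Cᴴ * H * C := by
    rw [Matrix.conjTranspose_mul]
    calc _ = Cᴴ * (Yᴴ * H * Y) * C := by simp only [Matrix.mul_assoc]
      _ = _ := by rw [hYH]
  rw [this]; ring

end da
end Paper

namespace Paper

section db
open scoped Classical ComplexOrder
variable {k : ℕ} {F : Type} [Field F] [Fintype F] [ExpChar F 2] [hS : Setup k F] {n : ℕ}
variable {ψ : AddChar F ℂ} {R : GG k F →* Matrix (Fin n) (Fin n) ℂ} {A : MulChar F ℂ}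

theorem adjR {H : Matrix (Fin n) (Fin n) ℂ} (hinv : ∀ g, (R g)ᴴ * H * R g = H) (g : GG k F) :
    (R g)ᴴ * H = H * R g⁻¹ := by
  have h := congrArg (fun M => M * R g⁻¹) (hinv g)
  rwa [mul_assoc, R_mul_inv, mul_one] at h

theorem star_pm {z : ℂ} (h : z = 1 ∨ z = -1) : star z = z := by
  rcases h with h | h <;> rw [h] <;> simp

theorem ex_adj (hψ : GoodPsi k ψ) {H : Matrix (Fin n) (Fin n) ℂ} (hinv : ∀ g, (R g)ᴴ * H * R g = H) (x : F) :
    (ex ψ R x)ᴴ * H = H * ex ψ R x := by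
  rw [ex, Matrix.conjTranspose_smul, Matrix.conjTranspose_sum, Matrix.smul_mul, Matrix.mul_smul, Finset.sum_mul, Finset.mul_sum]
  have h1 : star ((((2 : ℂ) ^ k) ^ 3)⁻¹) = (((2 : ℂ) ^ k) ^ 3)⁻¹ := by simp
  rw [h1]
  refine congrArg (fun M : Matrix (Fin n) (Fin n) ℂ => (((2 : ℂ) ^ k) ^ 3)⁻¹ • M) ?_
  refine Fintype.sum_equiv (Equiv.inv _) _ _ fun u => ?_
  rw [Matrix.conjTranspose_smul, Matrix.smul_mul, Matrix.mul_smul, adjR hinv, star_pm (hψ.pm _)]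
  simp only [Equiv.inv_apply, uu_inv, UT.inv_a]

theorem PL_adj {H : Matrix (Fin n) (Fin n) ℂ} (hinv : ∀ g, (R g)ᴴ * H * R g = H) (l : AC k F) :
    (PL R l)ᴴ * H = H * PL R l := by
  rw [PL, Matrix.conjTranspose_smul, Matrix.conjTranspose_sum, Matrix.smul_mul, Matrix.mul_smul, Finset.sum_mul, Finset.mul_sum]
  have h1 : star ((((2 : ℂ) ^ k))⁻¹) = (((2 : ℂ) ^ k))⁻¹ := by simp
  rw [h1]
  refine congrArg (fun M : Matrix (Fin n) (Fin n) ℂ => (((2 : ℂ) ^ k))⁻¹ • M) ?_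
  refine Finset.sum_congr rfl fun c _ => ?_
  have h2 : (uu (zU c) : GG k F)⁻¹ = uu (zU c) := by
    rw [inv_eq_iff_mul_eq_one, ← uu_mul, ← zU_add]
    have : c + c = 0 := Subtype.ext (add_self2 (c : F))
    rw [this, zU_zero, uu_one]
  rw [Matrix.conjTranspose_smul, Matrix.smul_mul, Matrix.mul_smul, adjR hinv, star_pm (AC_pm _ _), h2]

theorem Pp_adj {H : Matrix (Fin n) (Fin n) ℂ} (hinv : ∀ g, (R g)ᴴ * H * R g = H) (l : AC k F) (hl : l ≠ 0) :
    (Pp R l)ᴴ * H = H * Pp R l := by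
  have h3 : R (uu (eL l))⁻¹ * PL R l = R (uu (eL l)) * PL R l := by
    conv_lhs => rw [← eL_sq R l hl]
    rw [← mul_assoc, ← mul_assoc, R_inv_mul, one_mul]
  rw [Pp, Matrix.conjTranspose_smul, Matrix.conjTranspose_mul, Matrix.conjTranspose_add, Matrix.conjTranspose_one, Matrix.smul_mul, Matrix.mul_smul]
  have h1 : star ((2 : ℂ)⁻¹) = (2 : ℂ)⁻¹ := by simp
  rw [h1]
  refine congrArg (fun M : Matrix (Fin n) (Fin n) ℂ => (2 : ℂ)⁻¹ • M) ?_
  rw [mul_assoc, add_mul, adjR hinv, one_mul, mul_add, ← mul_assoc, PL_adj hinv, add_mul, one_mul, mul_add, mul_assoc,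
    ← h3, ← uu_inv, ← PL_uu]

/-- `P₀ = e_B` -/
theorem P0_eq (hψ : GoodPsi k ψ) (hR : IrrR R) (hA : Case1 ψ R A) : ex ψ R 0 = eB ψ A R := by
  have hww : ex ψ R 0 * R ww * eB ψ A R = eB ψ A R * R ww * eB ψ A R := by
    calc ex ψ R 0 * R ww * eB ψ A R
        = ex ψ R 0 * R ww * (eT A R * eB ψ A R) := by
          congr 1
          rw [eB, ← mul_assoc, eT_P, mul_assoc, eT_idem]
      _ = ex ψ R 0 * (R ww * eT A R) * eB ψ A R := by simp only [mul_assoc]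
      _ = _ := by rw [ww_eT A hA.sym]; simp only [eB, mul_assoc]
  have hPe : ex ψ R 0 * eB ψ A R = eB ψ A R := by rw [eB, ← mul_assoc, ex_idem R hψ]
  have hPu : ∀ u : UT k F, ex ψ R 0 * R (uu u) = ex ψ R 0 := by
    intro u; rw [ex_uu R hψ]; simp
  have key : ∀ g, (ex ψ R 0 - eB ψ A R) * R g * eB ψ A R = 0 := by
    intro g
    rw [sub_mul, sub_mul, sub_eq_zero]
    obtain ⟨x, rfl⟩ := brMap_bij.2 g
    rcases x with ⟨u, t⟩ | ⟨u, t, v⟩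
    · simp only [brMap]
      rw [eB_small hψ, map_mul R, ← mul_assoc, hPu, mul_assoc, hh_eB, Matrix.mul_smul, hPe]
    · simp only [brMap]
      rw [eB_big hψ, map_mul R, map_mul R, map_mul R, mul_assoc _ _ (eB ψ A R), mul_assoc _ _ (eB ψ A R)]
      rw [uu_eB hψ, ← mul_assoc, ← mul_assoc, ← mul_assoc, hPu, ← hh_ex_zero, mul_assoc (R (hh t)), mul_assoc (R (hh t)), hww, ← mul_assoc, ← mul_assoc,
        hh_eB, Matrix.smul_mul, Matrix.smul_mul]
  have hne : eB ψ A R ≠ 0 := by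
    intro h; have := hA.tr; rw [h] at this; simp at this
  obtain ⟨j, hj⟩ : ∃ j, (fun i => eB ψ A R i j) ≠ 0 := by
    by_contra hc; push Not at hc
    exact hne (by ext i j; exact congrFun (hc j) i)
  refine sub_eq_zero.1 (irr_cyclic hR _ hj fun g => ?_)
  ext i
  have := congrFun (congrFun (key g) i) j
  rw [Matrix.mulVec_mulVec]
  simpa [Matrix.mul_apply, Matrix.mulVec, dotProduct] using this

/-- Gram values -/
def dx (k : ℕ) (x : F) : ℂ := if x = 0 then (((2 : ℂ) ^ k) ^ 4)⁻¹ else (2 ^ k + 1) * (((2 : ℂ) ^ k) ^ 4)⁻¹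

theorem quad_x (hψ : GoodPsi k ψ) (hR : IrrR R) (hA : Case1 ψ R A) (x : F) :
    ex ψ R 0 * R ww * ex ψ R x * R ww * ex ψ R 0 = dx k x • ex ψ R 0 := by
  rw [P0_eq hψ hR hA]
  have h2 : ∀ u : UT k F, eB ψ A R * R ww * R (uu u) * R ww * eB ψ A R =
      ((if u = 1 then 1 else 0) + A u.b * (((2 : ℂ) ^ k) ^ 2)⁻¹) • eB ψ A R := by
    intro u
    by_cases hu : u = 1
    · subst hu
      rw [uu_one, map_one, mul_one, mul_assoc (eB ψ A R), ← map_mul, ww_ww, map_one, mul_one, eB_idem hψ]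
      simp [MulChar.map_zero]
    · have e1 : eB ψ A R * R ww * R (uu u) * R ww * eB ψ A R = eB ψ A R * R (ww * uu u * ww) * eB ψ A R := by
        simp only [map_mul R, mul_assoc]
      rw [e1, ww_uu_ww u hu, eB_big hψ, hA.sym, hA.ew, smul_smul, if_neg hu, zero_add]
      rfl
  have hS := sum_S (k := k) A hA.triv (fun a => ψ (x * a)) (by simp)
  rw [T1_ne (k := k) A hA.triv hA.ne, hψ.sum x] at hS
  rw [ex]
  simp only [Matrix.mul_smul, Matrix.smul_mul, Finset.mul_sum, Finset.sum_mul]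
  simp only [h2, smul_smul]
  rw [← Finset.sum_smul, smul_smul]
  refine congrArg (fun z : ℂ => z • eB ψ A R) ?_
  have h3 : ∑ u : UT k F, ψ (x * u.a) * ((if u = 1 then 1 else 0) + A u.b * (((2 : ℂ) ^ k) ^ 2)⁻¹)
      = 1 + (∑ u : UT k F, ψ (x * u.a) * A u.b) * (((2 : ℂ) ^ k) ^ 2)⁻¹ := by
    simp only [mul_add, Finset.sum_add_distrib, mul_ite, mul_one, mul_zero, Finset.sum_mul, mul_assoc]
    rw [Finset.sum_ite_eq', if_pos (Finset.mem_univ _)]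
    simp
  rw [h3, hS, dx]
  have hq := qC_ne k
  split_ifs with hx
  · field_simp; ring
  · field_simp; ring

theorem dx_ne (x : F) : dx k x ≠ 0 := by
  have hq := qC_ne k
  have hq1 : ((2 : ℂ) ^ k + 1) ≠ 0 := by
    have : ((2 ^ k + 1 : ℕ) : ℂ) ≠ 0 := Nat.cast_ne_zero.2 (Nat.succ_ne_zero _)
    push_cast at this; exact this
  rw [dx]; split_ifs
  · positivity
  · exact mul_ne_zero hq1 (by positivity)

theorem rank_one (hR : IrrR R) {v e : Fin n → ℂ} (hv : v ≠ 0) (he : e ≠ 0) (M : Matrix (Fin n) (Fin n) ℂ)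
    (hM : M *ᵥ e = e) (h : ∀ g, ∃ c : ℂ, M *ᵥ (R g *ᵥ v) = c • e) :
    ∃ l : Fin n → ℂ, M = Matrix.vecMulVec e l := by
  have h1 : ∀ x, ∃ c : ℂ, M *ᵥ x = c • e := by
    intro x
    have hx : x ∈ Submodule.span ℂ (Set.range fun g => R g *ᵥ v) := by rw [irr_span hR hv]; trivial
    induction hx using Submodule.span_induction with
    | mem x hx => obtain ⟨g, rfl⟩ := hx; exact h g
    | zero => exact ⟨0, by simp⟩
    | add a b _ _ ha hb =>
      obtain ⟨c, hc⟩ := ha; obtain ⟨d, hd⟩ := hb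
      exact ⟨c + d, by rw [Matrix.mulVec_add, hc, hd, add_smul]⟩
    | smul a b _ hb =>
      obtain ⟨d, hd⟩ := hb
      exact ⟨a * d, by rw [Matrix.mulVec_smul, hd, smul_smul]⟩
  choose c hc using fun j : Fin n => h1 (Pi.single j 1)
  refine ⟨c, ?_⟩
  ext i j
  have := congrFun (hc j) i
  simp only [Matrix.mulVec_single_one, Pi.smul_apply, smul_eq_mul] at this
  rw [Matrix.vecMulVec_apply, mul_comm]
  exact this

end db
end Paper

namespace Paper

section dc
open scoped Classical ComplexOrder
variable {k : ℕ} {F : Type} [Field F] [Fintype F] [ExpChar F 2] [hS : Setup k F] {n : ℕ}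
variable {ψ : AddChar F ℂ} (R : GG k F →* Matrix (Fin n) (Fin n) ℂ) {A : MulChar F ℂ}

theorem blk (f g : AC k F → Matrix (Fin n) (Fin n) ℂ) (hf : ∀ l, f l * PL R l = f l) (hg : ∀ l, PL R l * g l = g l) :
    (∑ l, f l) * (∑ l, g l) = ∑ l, f l * g l := by
  rw [Finset.sum_mul]
  refine Finset.sum_congr rfl fun l _ => ?_
  rw [Finset.mul_sum, Finset.sum_eq_single l]
  · intro m _ hm
    rw [← hf, ← hg m, mul_assoc, ← mul_assoc (PL R l), PL_mul_PL, if_neg (Ne.symm hm), zero_mul, mul_zero]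
  · simp

def ppl (l : AC k F) : Matrix (Fin n) (Fin n) ℂ := if l = 0 then 0 else Pp R l
def pml (l : AC k F) : Matrix (Fin n) (Fin n) ℂ := if l = 0 then 0 else Pm R l
def pzl (l : AC k F) : Matrix (Fin n) (Fin n) ℂ := if l = 0 then PL R l else 0
def yyl (l : AC k F) : Matrix (Fin n) (Fin n) ℂ := R (uu (yL l)) * PL R l
def yil (l : AC k F) : Matrix (Fin n) (Fin n) ℂ := R (uu (yL l)⁻¹) * PL R l

theorem ppl_r (l : AC k F) : ppl R l * PL R l = ppl R l := by
  rw [ppl]; split_ifs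
  · simp
  · exact Pp_PL R l
theorem ppl_l (l : AC k F) : PL R l * ppl R l = ppl R l := by
  rw [ppl]; split_ifs
  · simp
  · exact PL_Pp R l
theorem pzl_r (l : AC k F) : pzl R l * PL R l = pzl R l := by
  rw [pzl]; split_ifs
  · exact PL_idem R l
  · simp
theorem pzl_l (l : AC k F) : PL R l * pzl R l = pzl R l := by
  rw [pzl]; split_ifs
  · exact PL_idem R l
  · simp
theorem yyl_r (l : AC k F) : yyl R l * PL R l = yyl R l := by rw [yyl, mul_assoc, PL_idem]
theorem yyl_l (l : AC k F) : PL R l * yyl R l = yyl R l := by rw [yyl, ← mul_assoc, PL_uu, mul_assoc, PL_idem]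
theorem yil_r (l : AC k F) : yil R l * PL R l = yil R l := by rw [yil, mul_assoc, PL_idem]
theorem yil_l (l : AC k F) : PL R l * yil R l = yil R l := by rw [yil, ← mul_assoc, PL_uu, mul_assoc, PL_idem]

theorem yyl_yil (l : AC k F) : yyl R l * yil R l = PL R l := by
  rw [yyl, mul_assoc, yil_l, yil, ← mul_assoc, uu_inv, R_mul_inv, one_mul]
theorem yil_yyl (l : AC k F) : yil R l * yyl R l = PL R l := by
  rw [yil, mul_assoc, yyl_l, yyl, ← mul_assoc, uu_inv, R_inv_mul, one_mul]

theorem sum_pzl : ∑ l, pzl R l = PL R 0 := by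
  simp only [pzl]; rw [Finset.sum_ite_eq', if_pos (Finset.mem_univ _)]

theorem pzl_ppl (l : AC k F) : pzl R l * ppl R l = 0 := by
  rw [pzl, ppl]; split_ifs <;> simp
theorem ppl_pzl (l : AC k F) : ppl R l * pzl R l = 0 := by
  rw [pzl, ppl]; split_ifs <;> simp
theorem ppl_idem (l : AC k F) : ppl R l * ppl R l = ppl R l := by
  rw [ppl]; split_ifs with h
  · simp
  · exact Pp_idem R l h

theorem yyl_ppl (l : AC k F) : yyl R l * ppl R l * yil R l = pml R l := by
  rw [yyl, mul_assoc (R _), ppl_l, ppl, pml]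
  split_ifs with h
  · simp
  · rw [yL_Pp R l h, yil, mul_assoc, ← mul_assoc (R (uu (yL l))), uu_inv, R_mul_inv, one_mul, Pm_PL]

theorem sum_split : ∑ l, pml R l = 1 - ∑ l, pzl R l - ∑ l, ppl R l := by
  rw [← PL_sum R, ← Finset.sum_sub_distrib, ← Finset.sum_sub_distrib]
  refine Finset.sum_congr rfl fun l _ => ?_
  rw [pml, pzl, ppl]; split_ifs
  · simp
  · rw [← Pp_add_Pm R l]; simp

variable {R}
theorem ppl_adj {H : Matrix (Fin n) (Fin n) ℂ} (hinv : ∀ g, (R g)ᴴ * H * R g = H) :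
    (∑ l, ppl R l)ᴴ * H = H * ∑ l, ppl R l := by
  rw [Matrix.conjTranspose_sum, Finset.sum_mul, Finset.mul_sum]
  refine Finset.sum_congr rfl fun l _ => ?_
  rw [ppl]; split_ifs with h
  · simp
  · exact Pp_adj hinv l h

theorem yyl_adj {H : Matrix (Fin n) (Fin n) ℂ} (hinv : ∀ g, (R g)ᴴ * H * R g = H) :
    (∑ l, yyl R l)ᴴ * H = H * ∑ l, yil R l := by
  rw [Matrix.conjTranspose_sum, Finset.sum_mul, Finset.mul_sum]
  refine Finset.sum_congr rfl fun l _ => ?_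
  rw [yyl, yil, Matrix.conjTranspose_mul, mul_assoc, adjR hinv, ← mul_assoc, PL_adj hinv, mul_assoc, ← uu_inv, PL_uu]

variable {L : Subfield ℂ}
theorem two_inv_mem (j : ℕ) : ((2 : ℂ) ^ j) ∈ L := pow_mem (by exact_mod_cast natCast_mem L 2) _
theorem pm_mem {z : ℂ} (h : z = 1 ∨ z = -1) : z ∈ L := by
  rcases h with h | h <;> rw [h]
  · exact one_mem _
  · exact neg_mem (one_mem _)

theorem ex_L (hψ : GoodPsi k ψ) (hL : ∀ g, InL L (R g)) (x : F) : InL L (ex ψ R x) :=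
  InL.smul (inv_mem (pow_mem (two_inv_mem k) _)) (InL.sum fun u => InL.smul (pm_mem (hψ.pm _)) (hL _))
theorem PL_L (hL : ∀ g, InL L (R g)) (l : AC k F) : InL L (PL R l) :=
  InL.smul (inv_mem (two_inv_mem k)) (InL.sum fun u => InL.smul (pm_mem (AC_pm _ _)) (hL _))
theorem yyl_L (hL : ∀ g, InL L (R g)) (l : AC k F) : InL L (yyl R l) := (hL _).mul (PL_L hL l)
theorem ppl_L (hL : ∀ g, InL L (R g)) (l : AC k F) : InL L (ppl R l) := by
  rw [ppl]; split_ifs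
  · intro i j; exact zero_mem _
  · refine InL.smul (inv_mem ?_) ((InL.one.add (hL _)).mul (PL_L hL l))
    have := two_inv_mem (L := L) 1
    rwa [pow_one] at this

/-- the data for the fixed part -/
theorem fixed_data (hψ : GoodPsi k ψ) (hR : IrrR R) (hA : Case1 ψ R A) (hL : ∀ g, InL L (R g)) :
    ∃ (V : Matrix (Fin n) Unit ℂ) (X : Matrix (Fin n) F ℂ) (X' : Matrix F (Fin n) ℂ), InL L V ∧ InL L X ∧
      X * X' = PL R 0 ∧ X' * X = 1 ∧ ∀ H : Matrix (Fin n) (Fin n) ℂ, (∀ g, (R g)ᴴ * H * R g = H) →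
      Xᴴ * H * X = Matrix.diagonal fun x => dx k x * (Vᴴ * H * V) () () := by
  have hP0 := P0_eq hψ hR hA
  have hne : ex ψ R 0 ≠ 0 := by
    intro h; have := hA.tr; rw [← hP0, h] at this; simp at this
  obtain ⟨j, hj⟩ : ∃ j, (fun i => ex ψ R 0 i j) ≠ 0 := by
    by_contra hc; push Not at hc
    exact hne (by ext i j; exact congrFun (hc j) i)
  set v : Fin n → ℂ := fun i => ex ψ R 0 i j with hv
  have hP : ex ψ R 0 *ᵥ v = v := by
    ext i
    have := congrFun (congrFun (ex_idem R hψ (ψ := ψ) 0) i) j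
    simpa [Matrix.mul_apply, Matrix.mulVec, dotProduct, hv] using this
  have hvL : ∀ i, v i ∈ L := fun i => ex_L hψ hL 0 i j
  have huv : ∀ u : UT k F, R (uu u) *ᵥ v = v := by
    intro u
    conv_lhs => rw [← hP, Matrix.mulVec_mulVec, uu_ex R hψ]
    simp [hP]
  have hhv : ∀ t : Fˣ, R (hh t) *ᵥ v = A t • v := by
    intro t
    conv_lhs => rw [← hP, Matrix.mulVec_mulVec, hP0, hh_eB, ← hP0]
    rw [Matrix.smul_mulVec, hP]
  have hPw : ex ψ R 0 *ᵥ (R ww *ᵥ v) = (((2 : ℂ) ^ k) ^ 2)⁻¹ • v := by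
    conv_lhs => rw [← hP, Matrix.mulVec_mulVec, Matrix.mulVec_mulVec, hP0, hA.ew, ← hP0]
    rw [Matrix.smul_mulVec, hP]
  let e : F → Fin n → ℂ := fun x => ex ψ R x *ᵥ (R ww *ᵥ v)
  have hEe : ∀ x y, ex ψ R x *ᵥ e y = if x = y then e x else 0 := by
    intro x y
    show ex ψ R x *ᵥ (ex ψ R y *ᵥ (R ww *ᵥ v)) = _
    rw [Matrix.mulVec_mulVec, ex_mul_ex R hψ]
    split_ifs
    · rfl
    · simp
  have hEv : ∀ x, x ≠ 0 → ex ψ R x *ᵥ v = 0 := by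
    intro x hx
    rw [← hP, Matrix.mulVec_mulVec, ex_mul_ex R hψ, if_neg hx]; simp
  have he : ∀ x, e x ≠ 0 := by
    intro x h0
    have h1 : (ex ψ R 0 * R ww) *ᵥ e x = dx k x • v := by
      show (ex ψ R 0 * R ww) *ᵥ (ex ψ R x *ᵥ (R ww *ᵥ v)) = _
      conv_lhs => rw [← hP]
      rw [Matrix.mulVec_mulVec, Matrix.mulVec_mulVec, Matrix.mulVec_mulVec]
      have := quad_x hψ hR hA x
      rw [this, Matrix.smul_mulVec, hP]
    rw [h0, Matrix.mulVec_zero] at h1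
    rcases smul_eq_zero.1 h1.symm with h | h
    · exact dx_ne x h
    · exact hj h
  have hspan : ∀ x g, ∃ c : ℂ, ex ψ R x *ᵥ (R g *ᵥ v) = c • e x := by
    intro x g
    obtain ⟨y, rfl⟩ := brMap_bij.2 g
    rcases y with ⟨u, t⟩ | ⟨u, t, u'⟩
    · simp only [brMap]
      rw [map_mul R, ← Matrix.mulVec_mulVec, hhv, Matrix.mulVec_smul, huv, Matrix.mulVec_smul]
      by_cases hx : x = 0
      · subst hx
        refine ⟨A t * (((2 : ℂ) ^ k) ^ 2), ?_⟩
        show _ = _ • (ex ψ R 0 *ᵥ (R ww *ᵥ v))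
        rw [hP, hPw, smul_smul, mul_assoc, mul_inv_cancel₀ (pow_ne_zero _ (qC_ne k)), mul_one]
      · exact ⟨0, by rw [hEv x hx]; simp⟩
    · simp only [brMap]
      have h1 : (hh t * ww : GG k F) = ww * hh (tbar k t) := by rw [ww_hh, tbar_tbar]
      refine ⟨ψ (x * u.a) * A (tbar k t : Fˣ), ?_⟩
      rw [map_mul R, ← Matrix.mulVec_mulVec, huv, mul_assoc, map_mul R, Matrix.mulVec_mulVec, ← mul_assoc, ex_uu R hψ, Matrix.smul_mul,
        Matrix.smul_mulVec, ← Matrix.mulVec_mulVec, h1, map_mul R, ← Matrix.mulVec_mulVec, hhv, Matrix.mulVec_smul, Matrix.mulVec_smul, smul_smul]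
  have hl : ∀ x, ∃ l : Fin n → ℂ, ex ψ R x = Matrix.vecMulVec (e x) l := fun x =>
    rank_one hR hj (he x) (ex ψ R x) (by rw [hEe, if_pos rfl]) (hspan x)
  choose l hl using hl
  refine ⟨Matrix.of fun i _ => v i, Matrix.of fun i x => e x i, Matrix.of fun x i => l x i, fun i _ => hvL i, ?_, ?_, ?_, ?_⟩
  · intro i x
    show (ex ψ R x *ᵥ (R ww *ᵥ v)) i ∈ L
    rw [Matrix.mulVec, dotProduct]
    refine sum_mem fun a _ => mul_mem (ex_L hψ hL x _ _) ?_
    rw [Matrix.mulVec, dotProduct]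
    exact sum_mem fun b _ => mul_mem (hL _ _ _) (hvL _)
  · rw [PL_zero R hψ]
    ext i i'
    rw [Matrix.sum_apply, Matrix.mul_apply]
    refine Finset.sum_congr rfl fun x _ => ?_
    rw [hl x]; rfl
  · ext x y
    have h1 := hEe x y
    rw [hl x] at h1
    have h2 : Matrix.vecMulVec (e x) (l x) *ᵥ e y = (l x ⬝ᵥ e y) • e x := by
      ext i
      simp only [Matrix.mulVec, dotProduct, Matrix.vecMulVec_apply, Pi.smul_apply, smul_eq_mul, Finset.sum_mul]
      exact Finset.sum_congr rfl fun _ _ => by ring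
    rw [h2] at h1
    rw [Matrix.mul_apply, Matrix.one_apply]
    show l x ⬝ᵥ e y = _
    have h3 : (l x ⬝ᵥ e y - if x = y then 1 else 0) • e x = 0 := by
      rw [sub_smul, h1]; split_ifs <;> simp
    rcases smul_eq_zero.1 h3 with h | h
    · exact sub_eq_zero.1 h
    · exact absurd h (he x)
  · intro H hinv
    set V : Matrix (Fin n) Unit ℂ := Matrix.of fun i _ => v i with hV
    have hPV : ex ψ R 0 * V = V := by
      ext i u; exact congrFun hP i
    have hcol : ∀ x, (ex ψ R x * (R ww * V)) = Matrix.of fun i _ => e x i := fun x => rfl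
    ext x y
    have h1 : (((Matrix.of fun i x => e x i : Matrix (Fin n) F ℂ))ᴴ * H * (Matrix.of fun i x => e x i : Matrix (Fin n) F ℂ)) x y =
        ((ex ψ R x * (R ww * V))ᴴ * H * (ex ψ R y * (R ww * V))) () () := by
      rw [hcol, hcol]; rfl
    have hVP : Vᴴ * H * ex ψ R 0 = Vᴴ * H := by
      rw [Matrix.mul_assoc, ← ex_adj hψ hinv, ← Matrix.mul_assoc, ← Matrix.conjTranspose_mul, hPV]
    have h2 : (ex ψ R x * (R ww * V))ᴴ * H * (ex ψ R y * (R ww * V)) = Vᴴ * H * (R ww * (ex ψ R x * ex ψ R y) * (R ww * V)) := by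
      rw [Matrix.conjTranspose_mul, Matrix.conjTranspose_mul, Matrix.mul_assoc _ _ H, ex_adj hψ hinv, ← Matrix.mul_assoc _ H,
        Matrix.mul_assoc Vᴴ _ H, adjR hinv, ww_inv]
      simp only [Matrix.mul_assoc]
    rw [h1, h2, ex_mul_ex R hψ, Matrix.diagonal_apply]
    split_ifs with hxy
    · subst hxy
      have : Vᴴ * H * (R ww * ex ψ R x * (R ww * V)) = dx k x • (Vᴴ * H * V) := by
        calc Vᴴ * H * (R ww * ex ψ R x * (R ww * V)) = Vᴴ * H * ex ψ R 0 * (R ww * ex ψ R x * (R ww * (ex ψ R 0 * V))) := by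
              rw [hVP, hPV]
          _ = Vᴴ * H * ((ex ψ R 0 * R ww * ex ψ R x * R ww * ex ψ R 0) * V) := by simp only [Matrix.mul_assoc]
          _ = _ := by rw [quad_x hψ hR hA, Matrix.smul_mul, hPV, Matrix.mul_smul]
      rw [this]; rfl
    · simp

theorem disc_final (hψ : GoodPsi k ψ) (hR : IrrR R) (hA : Case1 ψ R A) (hL : ∀ g, InL L (R g))
    (hLc : ∀ z ∈ L, (starRingEnd ℂ) z ∈ L) (H : Matrix (Fin n) (Fin n) ℂ) (hHL : InL L H) (hH : Hᴴ = H) (hdet : H.det ≠ 0)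
    (hinv : ∀ g, (R g)ᴴ * H * R g = H) :
    ∃ z ∈ L, z ≠ 0 ∧ H.det = (2 ^ k + 1) * (z * (starRingEnd ℂ) z) := by
  obtain ⟨V, X, X', hV, hX, hXX, hX'X, hG⟩ := fixed_data hψ hR hA hL
  obtain ⟨J, hJ, a, D, hCD, hDC⟩ := rank_fact (∑ l, ppl R l) (by
    rw [blk R _ _ (ppl_r R) (ppl_l R)]; exact Finset.sum_congr rfl fun l _ => ppl_idem R l)
  set P := ∑ l, ppl R l with hP
  have hCL : InL L (P.submatrix id a) := (InL.sum fun l => ppl_L hL l).sub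
  set C := P.submatrix id a with hC
  have hct : ∀ {m m' : Type} (M : Matrix m m' ℂ), InL L M → InL L Mᴴ := fun M hM i j => hLc _ (hM j i)
  have hZ := sum_pzl R
  have hYY : (∑ l, yyl R l) * (∑ l, yil R l) = 1 := by
    rw [blk R _ _ (yyl_r R) (yil_l R), ← PL_sum R]; exact Finset.sum_congr rfl fun l _ => yyl_yil R l
  have hYY' : (∑ l, yil R l) * (∑ l, yyl R l) = 1 := by
    rw [blk R _ _ (yil_r R) (yyl_l R), ← PL_sum R]; exact Finset.sum_congr rfl fun l _ => yil_yyl R l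
  have hZP : PL R 0 * P = 0 := by
    rw [← hZ, hP, blk R _ _ (pzl_r R) (ppl_l R)]; exact Finset.sum_eq_zero fun l _ => pzl_ppl R l
  have hPZ : P * PL R 0 = 0 := by
    rw [← hZ, hP, blk R _ _ (ppl_r R) (pzl_l R)]; exact Finset.sum_eq_zero fun l _ => ppl_pzl R l
  have hYP : (∑ l, yyl R l) * P * (∑ l, yil R l) = 1 - PL R 0 - P := by
    rw [← hZ, hP, ← sum_split R, blk R _ _ (yyl_r R) (ppl_l R), blk R _ _ (fun l => by rw [mul_assoc, ppl_r]) (yil_l R)]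
    exact Finset.sum_congr rfl fun l _ => yyl_ppl R l
  obtain ⟨d, hd, hd0, hdd⟩ := disc_core (L := L) (PL R 0) P (∑ l, yyl R l) (∑ l, yil R l) H X X' C D hXX hX'X hCD hDC hZP hPZ hYP hYY hYY'
    (PL_adj hinv 0) (ppl_adj hinv) (by rw [yyl_adj hinv, mul_assoc, hYY', mul_one]) hX hCL (InL.sum fun l => yyl_L hL l)
  rw [hG H hinv, Matrix.det_diagonal] at hdd
  set h := (Vᴴ * H * V) () () with hh
  have hhL : h ∈ L := ((hct V hV).mul hHL).mul hV () ()
  have hhr : (starRingEnd ℂ) h = h := by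
    have : (Vᴴ * H * V)ᴴ = Vᴴ * H * V := by
      rw [Matrix.conjTranspose_mul, Matrix.conjTranspose_mul, hH, Matrix.conjTranspose_conjTranspose, Matrix.mul_assoc]
    exact congrFun (congrFun this ()) ()
  set c := (Cᴴ * H * C).det with hc
  have hcL : c ∈ L := InL.det (((hct C hCL).mul hHL).mul hCL)
  have hcr : (starRingEnd ℂ) c = c := by
    have : (Cᴴ * H * C)ᴴ = Cᴴ * H * C := by
      rw [Matrix.conjTranspose_mul, Matrix.conjTranspose_mul, hH, Matrix.conjTranspose_conjTranspose, Matrix.mul_assoc]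
    rw [hc, starRingEnd_apply, ← Matrix.det_conjTranspose, this]
  obtain ⟨M, hM⟩ : ∃ M, Fintype.card F = 2 * (M + 1) := by
    have h1 := Setup.card (k := k) (F := F)
    have h2 := Setup.hk (k := k) (F := F)
    refine ⟨2 ^ (2 * k - 1) - 1, ?_⟩
    rw [h1, Nat.sub_add_cancel (Nat.one_le_pow _ _ (by norm_num)), ← pow_mul, ← pow_succ']
    congr 1; omega
  have hprod : ∏ x : F, dx k x * h = ((((2 : ℂ) ^ k) ^ 4)⁻¹ * h) ^ (2 * (M + 1)) * (2 ^ k + 1) ^ (2 * M + 1) := by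
    have h1 : ∀ x : F, dx k x * h = ((((2 : ℂ) ^ k) ^ 4)⁻¹ * h) * (if x = 0 then 1 else (2 ^ k + 1)) := by
      intro x; rw [dx]; split_ifs <;> ring
    simp only [h1]
    rw [Finset.prod_mul_distrib, Finset.prod_const, Finset.card_univ, hM]
    congr 1
    rw [← Finset.mul_prod_erase _ _ (Finset.mem_univ (0 : F)), if_pos rfl, one_mul,
      Finset.prod_congr rfl (g := fun _ => ((2 : ℂ) ^ k + 1)) (fun x hx => if_neg (Finset.ne_of_mem_erase hx)),
      Finset.prod_const, Finset.card_erase_of_mem (Finset.mem_univ _), Finset.card_univ, hM]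
    rfl
  rw [hprod] at hdd
  set r := ((((2 : ℂ) ^ k) ^ 4)⁻¹ * h) ^ (M + 1) * (2 ^ k + 1) ^ M * c with hr
  have hdd2 : H.det * (d * (starRingEnd ℂ) d) = (2 ^ k + 1) * r ^ 2 := by
    rw [hdd, hr]; ring
  have hrL : r ∈ L := mul_mem (mul_mem (pow_mem (mul_mem (inv_mem (pow_mem (two_inv_mem k) _)) hhL) _)
    (pow_mem (add_mem (two_inv_mem k) (one_mem _)) _)) hcL
  have hrr : (starRingEnd ℂ) r = r := by
    rw [hr]
    simp only [map_mul, map_pow, map_inv₀, map_add, map_one, map_ofNat, hcr, hhr]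
  have hd1 : (starRingEnd ℂ) d ≠ 0 := by simpa using hd0
  have hr0 : r ≠ 0 := by
    intro h0
    rw [h0] at hdd2
    simp [hdet, hd0] at hdd2
  refine ⟨r / d, div_mem hrL hd, div_ne_zero hr0 hd0, ?_⟩
  rw [map_div₀, hrr]
  field_simp
  linear_combination hdd2

end dc
end Paper

namespace Paper

section fin
open scoped Classical

theorem notReal_ex {G : Type} [Group G] {χ : G → ℂ} (h : NotReal χ) : ∃ g, (starRingEnd ℂ) (χ g) ≠ χ g := by
  by_contra hc
  push Not at hc
  apply h
  rw [charField, Subfield.closure_le]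
  rintro _ ⟨g, rfl⟩
  obtain ⟨r, hr⟩ := Complex.conj_eq_iff_real.1 (hc g)
  rw [hr]
  exact Subfield.subset_closure ⟨r, rfl⟩

theorem conj_charField {G : Type} [Group G] {χ : G → ℂ} (h : ∀ g, (starRingEnd ℂ) (χ g) = χ g⁻¹) (z : ℂ)
    (hz : z ∈ charField χ) : (starRingEnd ℂ) z ∈ charField χ := by
  have : charField χ ≤ (charField χ).comap (starRingEnd ℂ) := by
    conv_lhs => rw [charField]
    rw [Subfield.closure_le]
    rintro _ ⟨g, rfl⟩
    show (starRingEnd ℂ) (χ g) ∈ charField χ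
    rw [h]
    exact Subfield.subset_closure ⟨g⁻¹, rfl⟩
  exact this hz

def toR {G : Type} [Group G] {n : ℕ} (ρ : G →* GL (Fin n) ℂ) : G →* Matrix (Fin n) (Fin n) ℂ :=
  (Units.coeHom _).comp ρ

theorem main_aux (k : ℕ) (F : Type) [Field F] [Fintype F] [ExpChar F 2] [hS : Setup k F]
    (χ : ↥(SU3 2 k F) → ℂ) (hχ : IsIrrChar χ) (heven : ∃ m : ℕ, χ 1 = 2 * (m : ℂ)) (hnr : NotReal χ) :
    χ 1 = (2 : ℂ) ^ k * (((2 : ℂ) ^ k) ^ 2 - 2 ^ k + 1) ∧ HasUnitaryDisc χ ((2 : ℂ) ^ k + 1) := by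
  obtain ⟨n, ρ, hρ, hc⟩ := hχ
  have hR : IrrR (toR ρ) := hρ
  have htr : ∀ g, (toR ρ g).trace = χ g := fun g => by rw [hc]; rfl
  have h1 : χ 1 = n := by rw [← htr, map_one]; simp
  have hn : Even n := by
    obtain ⟨m, hm⟩ := heven
    rw [h1] at hm
    have : n = 2 * m := by exact_mod_cast hm
    exact ⟨m, by omega⟩
  have hnr' : ∃ g, (starRingEnd ℂ) (toR ρ g).trace ≠ (toR ρ g).trace := by
    obtain ⟨g, hg⟩ := notReal_ex hnr
    exact ⟨g, by rw [htr]; exact hg⟩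
  have hconj : ∀ g, (starRingEnd ℂ) (χ g) = χ g⁻¹ := fun g => by rw [← htr, ← htr, char_inv]
  obtain ⟨ψ, hψ1, hψ2, hψ3⟩ := exists_psi (F := F) k
  have hψ : GoodPsi k ψ := ⟨hψ1, hψ2, hψ3⟩
  have key : ∀ {n : ℕ} (R : GG k F →* Matrix (Fin n) (Fin n) ℂ), IrrR R → Even n → (∃ g, (starRingEnd ℂ) (R g).trace ≠ (R g).trace) →
      ∃ A : MulChar F ℂ, Case1 ψ R A := by
    intro n R hR hn hg
    refine case1 hψ hR (fun h0 => ?_) hn hg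
    obtain ⟨g, hg⟩ := hg
    exact hg (real_of_PL hR (case2a hψ hR h0 hn) g)
  obtain ⟨A, hA⟩ := key (toR ρ) hR hn hnr'
  refine ⟨by rw [h1, hA.dim], ?_⟩
  intro n' ρ2 hc' hL H hHL hdet hH hinv
  have hnn : n' = n := by
    have h2 : χ 1 = n' := by rw [hc', charOf, map_one]; simp
    rw [h1] at h2
    exact_mod_cast h2.symm
  subst hnn
  have htr' : ∀ g, (toR ρ2 g).trace = χ g := fun g => by rw [hc']; rfl
  obtain ⟨Y, hY, hYY⟩ := exists_equiv (toR ρ2) hR (by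
    have := pairing_self (R := toR ρ) hR.1
    simpa only [htr, htr'] using this)
  have hR' := irr_of_equiv hR hY hYY
  obtain ⟨A', hA'⟩ := key (toR ρ2) hR' hn (by simpa only [htr, htr'] using hnr')
  obtain ⟨z, hz, hz0, h⟩ := disc_final (L := charField χ) hψ hR' hA' hL (conj_charField hconj) H hHL hH hdet.ne_zero hinv
  refine ⟨z, hz, hz0, ?_⟩
  have h4 : 4 ∣ n' := by
    have hd := hA'.dim
    have : (n' : ℤ) = 2 ^ k * ((2 ^ k) ^ 2 - 2 ^ k + 1) := by
      have : ((n' : ℤ) : ℂ) = ((2 ^ k * ((2 ^ k) ^ 2 - 2 ^ k + 1) : ℤ) : ℂ) := by push_cast; exact hd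
      exact_mod_cast this
    have h5 : (4 : ℤ) ∣ n' := by
      rw [this]
      refine Dvd.dvd.mul_right ?_ _
      exact pow_dvd_pow 2 hS.hk
    exact_mod_cast h5
  have h6 : (-1 : ℂ) ^ (n' * (n' - 1) / 2) = 1 := by
    obtain ⟨m, rfl⟩ := h4
    have : 4 * m * (4 * m - 1) / 2 = 2 * (m * (4 * m - 1)) := by
      rw [show 4 * m * (4 * m - 1) = 2 * (2 * (m * (4 * m - 1))) by ring]
      exact Nat.mul_div_cancel_left _ (by norm_num)
    rw [this, pow_mul]; simp
  rw [h6, one_mul, h]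

end fin

/-- for `q ≥ 4` a power of 2, every even-degree irreducible complex
character of `SU₃(q)` with non-real character field has degree `q(q²-q+1)` and
unitary discriminant `q+1`. -/
theorem stmt5 (k q : ℕ) (hk : 0 < k) (hq : q = 2 ^ k) (hq4 : 4 ≤ q)
    (F : Type) [Field F] [Fintype F] [ExpChar F 2]
    (hF : Fintype.card F = q ^ 2)
    (χ : ↥(SU3 2 k F) → ℂ) (hχ : IsIrrChar χ)
    (heven : ∃ m : ℕ, χ 1 = 2 * (m : ℂ))
    (hnr : NotReal χ) :
    χ 1 = (q : ℂ) * ((q : ℂ) ^ 2 - q + 1) ∧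
    HasUnitaryDisc χ ((q : ℂ) + 1) := by
  subst hq
  have hS : Setup k F := ⟨hF, by
    by_contra h
    have : k = 1 := by omega
    subst this
    norm_num at hq4⟩
  have := main_aux k F χ hχ heven hnr
  push_cast
  exact this

end Paper
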